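/- arXiv:1810.03901 — 2 statements merged into one kernel-verified Lean document; each statement's English description precedes it below -/
import Mathlib

section
/- Let f ∈ ℬ be convenient and Newton nondegenerate. Then dim_ℂ gr^𝒩_1(ℬ/ℒ) = card{v ∈ ℕⁿ : ν(v) = 1} − n; that is, the multiplicity of 1 in the toric Newton spectrum of f equals the number of lattice points on the Newton boundary of P minus n. -/
open MvPolynomial

namespace ToricNewton

section
variable {σ : Type*} [Fintype σ] [DecidableEq σ]

/-- Coercion of a lattice point of `ℕ^σ` into `ℝ^σ`. -/
def natToR (v : σ → ℕ) : σ → ℝ := fun i => (v i : ℝ)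

/-- Coercion of an exponent (finitely supported) into `ℝ^σ`. -/
def toR (m : σ →₀ ℕ) : σ → ℝ := fun i => (m i : ℝ)

/-- The Newton polytope of a polynomial: the convex hull of `{0} ∪ supp f`. -/
noncomputable def newtonPolytope (f : MvPolynomial σ ℂ) : Set (σ → ℝ) :=
  convexHull ℝ ({0} ∪ (toR '' (f.support : Set (σ →₀ ℕ))))

/-- The Newton function `ν`, which for a convenient polynomial is the gauge
(Minkowski functional) of the Newton polytope. -/
noncomputable def nu (f : MvPolynomial σ ℂ) (x : σ → ℝ) : ℝ :=
  gauge (newtonPolytope f) x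

/-- `f` is convenient if for each variable `i` some pure power `uᵢ^k`, `k ≥ 1`,
occurs in `f` with nonzero coefficient. -/
def Convenient (f : MvPolynomial σ ℂ) : Prop :=
  ∀ i : σ, ∃ k : ℕ, 1 ≤ k ∧ f.coeff (Finsupp.single i k) ≠ 0

/-- `Δ` is a (nonempty exposed) closed face of `P`. -/
def IsFace (P Δ : Set (σ → ℝ)) : Prop :=
  Δ.Nonempty ∧ ∃ (l : (σ → ℝ) →ₗ[ℝ] ℝ) (c : ℝ),
    (∀ x ∈ P, l x ≤ c) ∧ Δ = {x ∈ P | l x = c}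

/-- A face of the Newton boundary: a closed face of the Newton polytope not
containing the origin. -/
def NBFace (f : MvPolynomial σ ℂ) (Δ : Set (σ → ℝ)) : Prop :=
  IsFace (newtonPolytope f) Δ ∧ (0 : σ → ℝ) ∉ Δ

open Classical in
/-- The truncation `g_Δ` of `g` to the monomials whose exponents lie in `Δ`. -/
noncomputable def faceRestrict (Δ : Set (σ → ℝ)) (g : MvPolynomial σ ℂ) : MvPolynomial σ ℂ :=
  ∑ m ∈ g.support, if toR m ∈ Δ then monomial m (g.coeff m) else 0

/-- `f` is Newton nondegenerate: for every closed face `Δ` of the Newton boundary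
the system `(u₁ ∂f/∂u₁)_Δ = ⋯ = (uₙ ∂f/∂uₙ)_Δ = 0` has no solution in `(ℂ*)ⁿ`. -/
def Nondegenerate (f : MvPolynomial σ ℂ) : Prop :=
  ∀ Δ : Set (σ → ℝ), NBFace f Δ →
    ¬ ∃ x : σ → ℂ, (∀ i, x i ≠ 0) ∧
        ∀ i, eval x (faceRestrict Δ (X i * pderiv i f)) = 0

/-- The ideal `ℒ` generated by the `uᵢ ∂f/∂uᵢ`. -/
noncomputable def LIdeal (f : MvPolynomial σ ℂ) : Ideal (MvPolynomial σ ℂ) :=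
  Ideal.span (Set.range fun i => X i * pderiv i f)

/-- The Jacobian ideal `ℐ` generated by the `∂f/∂uᵢ`. -/
noncomputable def IIdeal (f : MvPolynomial σ ℂ) : Ideal (MvPolynomial σ ℂ) :=
  Ideal.span (Set.range fun i => pderiv i f)

/-- The Newton filtration `𝒩_α ℬ`: the span of the monomials `u^m` with `ν(m) ≤ α`. -/
noncomputable def Nle (f : MvPolynomial σ ℂ) (α : ℝ) : Submodule ℂ (MvPolynomial σ ℂ) where
  carrier := {g | ∀ m ∈ g.support, nu f (toR m) ≤ α}
  zero_mem' := by simp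
  add_mem' := by
    intro a b ha hb m hm
    rcases Finset.mem_union.mp (MvPolynomial.support_add hm) with h | h
    · exact ha m h
    · exact hb m h
  smul_mem' := by
    intro c a ha m hm
    exact ha m (MvPolynomial.support_smul hm)

/-- The filtration `𝒩_{<α} ℬ`. -/
noncomputable def Nlt (f : MvPolynomial σ ℂ) (α : ℝ) : Submodule ℂ (MvPolynomial σ ℂ) where
  carrier := {g | ∀ m ∈ g.support, nu f (toR m) < α}
  zero_mem' := by simp
  add_mem' := by
    intro a b ha hb m hm
    rcases Finset.mem_union.mp (MvPolynomial.support_add hm) with h | h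
    · exact ha m h
    · exact hb m h
  smul_mem' := by
    intro c a ha m hm
    exact ha m (MvPolynomial.support_smul hm)

/-- The twisted filtration `W_α ℬ`: the span of the monomials `u^m` with
`ν(m + (1,…,1)) ≤ α`. -/
noncomputable def Wle (f : MvPolynomial σ ℂ) (α : ℝ) : Submodule ℂ (MvPolynomial σ ℂ) where
  carrier := {g | ∀ m ∈ g.support, nu f (toR m + 1) ≤ α}
  zero_mem' := by simp
  add_mem' := by
    intro a b ha hb m hm
    rcases Finset.mem_union.mp (MvPolynomial.support_add hm) with h | h
    · exact ha m h
    · exact hb m h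
  smul_mem' := by
    intro c a ha m hm
    exact ha m (MvPolynomial.support_smul hm)

/-- The twisted filtration `W_{<α} ℬ`. -/
noncomputable def Wlt (f : MvPolynomial σ ℂ) (α : ℝ) : Submodule ℂ (MvPolynomial σ ℂ) where
  carrier := {g | ∀ m ∈ g.support, nu f (toR m + 1) < α}
  zero_mem' := by simp
  add_mem' := by
    intro a b ha hb m hm
    rcases Finset.mem_union.mp (MvPolynomial.support_add hm) with h | h
    · exact ha m h
    · exact hb m h
  smul_mem' := by
    intro c a ha m hm
    exact ha m (MvPolynomial.support_smul hm)

/-- The graded piece `gr^𝒩_α(ℬ/ℒ) = (𝒩_α ℬ + ℒ)/(𝒩_{<α} ℬ + ℒ)`, realized as the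
image of `𝒩_α ℬ + ℒ` in `ℬ/(𝒩_{<α} ℬ + ℒ)`. -/
noncomputable def grN (f : MvPolynomial σ ℂ) (α : ℝ) :
    Submodule ℂ (MvPolynomial σ ℂ ⧸ (Nlt f α ⊔ (LIdeal f).restrictScalars ℂ)) :=
  Submodule.map (Nlt f α ⊔ (LIdeal f).restrictScalars ℂ).mkQ
    (Nle f α ⊔ (LIdeal f).restrictScalars ℂ)

/-- `dim_ℂ gr^𝒩_α(ℬ/ℒ)`. -/
noncomputable def grDim (f : MvPolynomial σ ℂ) (α : ℝ) : ℕ :=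
  Module.finrank ℂ (grN f α)

/-- The graded piece `gr^W_α(ℬ/ℐ) = (W_α ℬ + ℐ)/(W_{<α} ℬ + ℐ)`. -/
noncomputable def grW (f : MvPolynomial σ ℂ) (α : ℝ) :
    Submodule ℂ (MvPolynomial σ ℂ ⧸ (Wlt f α ⊔ (IIdeal f).restrictScalars ℂ)) :=
  Submodule.map (Wlt f α ⊔ (IIdeal f).restrictScalars ℂ).mkQ
    (Wle f α ⊔ (IIdeal f).restrictScalars ℂ)

/-- `dim_ℂ gr^W_α(ℬ/ℐ)`. -/
noncomputable def grWDim (f : MvPolynomial σ ℂ) (α : ℝ) : ℕ :=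
  Module.finrank ℂ (grW f α)

/-- The dimension of a face, i.e. of the direction of its affine span. -/
noncomputable def faceDim (Δ : Set (σ → ℝ)) : ℕ :=
  Module.finrank ℝ (affineSpan ℝ Δ).direction

/-- `Δ` is a simplex: the convex hull of an affinely independent family. -/
def IsSimplex (Δ : Set (σ → ℝ)) : Prop :=
  ∃ (k : ℕ) (p : Fin (k + 1) → (σ → ℝ)), AffineIndependent ℝ p ∧ Δ = convexHull ℝ (Set.range p)

/-- The union of the coordinate hyperplanes. -/
def coordHyperplanes (σ : Type*) : Set (σ → ℝ) := ⋃ i : σ, {x : σ → ℝ | x i = 0}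

/-- `Box(Δ)`: the set of combinations `Σ q_ℓ b_ℓ`, `q_ℓ ∈ [0,1)`, of the vertices
(extreme points) of `Δ`. -/
def Box (Δ : Set (σ → ℝ)) : Set (σ → ℝ) :=
  {x | ∃ s : Finset (σ → ℝ), ↑s ⊆ Δ.extremePoints ℝ ∧
      ∃ q : (σ → ℝ) → ℝ, (∀ b ∈ s, 0 ≤ q b ∧ q b < 1) ∧ x = ∑ b ∈ s, q b • b}

/-- `Δ ∈ ℱ(P)`: a closed face of the Newton polytope of `f` not contained in the
union of the coordinate hyperplanes. -/
def FcalMem (f : MvPolynomial σ ℂ) (Δ : Set (σ → ℝ)) : Prop :=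
  IsFace (newtonPolytope f) Δ ∧ ¬ Δ ⊆ coordHyperplanes σ

/-- `Box(P)`: the union of `Box(Δ)` over the closed faces of the Newton boundary
not contained in the union of the coordinate hyperplanes. -/
def BoxP (f : MvPolynomial σ ℂ) : Set (σ → ℝ) :=
  ⋃ Δ ∈ {Δ : Set (σ → ℝ) | NBFace f Δ ∧ ¬ Δ ⊆ coordHyperplanes σ}, Box Δ

/-- The cone `ℝ₊·Δ` over `Δ`. -/
def cone0 (Δ : Set (σ → ℝ)) : Set (σ → ℝ) :=
  {x | ∃ t : ℝ, 0 ≤ t ∧ ∃ y ∈ Δ, x = t • y}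

/-- The restriction of `f` obtained by setting the variables in `S` to zero. -/
noncomputable def restrictZero (S : Finset σ) (f : MvPolynomial σ ℂ) :
    MvPolynomial {j : σ // j ∉ S} ℂ :=
  aeval (fun j : σ => if h : j ∉ S then X (⟨j, h⟩ : {j : σ // j ∉ S}) else 0) f

end

end ToricNewton

namespace TNS

noncomputable def key {N : ℕ} (c : Fin N → ℝ) : Lex (Fin (N + 1) → ℝ) :=
  toLex (Fin.cons (∑ v, c v) c)

lemma key_add {N : ℕ} (c d : Fin N → ℝ) : key (c + d) = key c + key d := by
  apply ofLex.injective
  funext i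
  refine Fin.cases ?_ (fun j => ?_) i
  · change ∑ v, (c v + d v) = ∑ v, c v + ∑ v, d v
    exact Finset.sum_add_distrib
  · rfl

lemma key_neg {N : ℕ} (c : Fin N → ℝ) : key (-c) = -key c := by
  apply ofLex.injective
  funext i
  refine Fin.cases ?_ (fun j => ?_) i
  · change ∑ v, (-c v) = -∑ v, c v
    exact Finset.sum_neg_distrib _
  · rfl

lemma key_sub {N : ℕ} (c d : Fin N → ℝ) : key (c - d) = key c - key d := by
  rw [sub_eq_add_neg, key_add, key_neg, sub_eq_add_neg]

lemma key_zero {N : ℕ} : key (0 : Fin N → ℝ) = 0 := by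
  have := key_sub (0 : Fin N → ℝ) 0
  simpa using this

lemma key_inj {N : ℕ} {c d : Fin N → ℝ} (h : key c = key d) : c = d := by
  have := congrArg ofLex h
  simp only [key, ofLex_toLex] at this
  funext i
  have := congrFun this i.succ
  simpa using this

lemma key_smul_pos {N : ℕ} {c : Fin N → ℝ} {t : ℝ} (ht : 0 < t) (h : 0 < key c) :
    0 < key (t • c) := by
  obtain ⟨i, h1, h2⟩ := h
  have key_eq : ∀ j, ofLex (key (t • c)) j = t * ofLex (key c) j := by
    intro j
    refine Fin.cases ?_ (fun j => ?_) j
    · change ∑ v, t * c v = t * ∑ v, c v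
      rw [Finset.mul_sum]
    · rfl
  refine ⟨i, ?_, ?_⟩
  · intro j hj
    have h3 : (0 : ℝ) = ofLex (key c) j := h1 j hj
    change (0 : ℝ) = ofLex (key (t • c)) j
    rw [key_eq, ← h3, mul_zero]
  · have h3 : (0 : ℝ) < ofLex (key c) i := h2
    change (0 : ℝ) < ofLex (key (t • c)) i
    rw [key_eq]
    positivity

lemma key_smul_nonneg {N : ℕ} {c : Fin N → ℝ} {t : ℝ} (ht : 0 ≤ t) (h : 0 ≤ key c) :
    0 ≤ key (t • c) := by
  rcases ht.eq_or_lt with rfl | ht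
  · simp [key_zero]
  rcases h.eq_or_lt with h | h
  · have : c = 0 := key_inj (by rw [← h, key_zero])
    simp [this, key_zero]
  · exact (key_smul_pos ht h).le

lemma key_smul_le {N : ℕ} {c d : Fin N → ℝ} {t : ℝ} (ht : 0 ≤ t) (h : key c ≤ key d) :
    key (t • c) ≤ key (t • d) := by
  have := key_smul_nonneg ht (c := d - c) (by rw [key_sub]; exact sub_nonneg.2 h)
  rw [smul_sub, key_sub] at this
  exact sub_nonneg.1 this

lemma key_le_of_smul {N : ℕ} {c d : Fin N → ℝ} {t : ℝ} (ht : 0 < t)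
    (h : key (t • c) ≤ key (t • d)) : key c ≤ key d := by
  have := key_smul_le (inv_nonneg.2 ht.le) h
  simpa [smul_smul, inv_mul_cancel₀ ht.ne'] using this

lemma sum_le_of_key_le {N : ℕ} {c d : Fin N → ℝ} (h : key c ≤ key d) :
    ∑ v, c v ≤ ∑ v, d v := by
  rcases h.eq_or_lt with h | h
  · rw [key_inj h]
  obtain ⟨i, h1, h2⟩ := h
  refine Fin.cases (fun h1 h2 => ?_) (fun j h1 h2 => ?_) i h1 h2
  · simpa [key] using h2.le
  · have := h1 0 (Fin.succ_pos j)
    simpa [key] using this.le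

variable {n N : ℕ}

/-- linear combinations of the vectors -/
noncomputable def comb (vec : Fin N → (Fin n →₀ ℕ)) : (Fin N → ℝ) →ₗ[ℝ] (Fin n → ℝ) where
  toFun c := fun i => ∑ v, c v * (vec v i : ℝ)
  map_add' c d := by funext i; simp [add_mul, Finset.sum_add_distrib]
  map_smul' t c := by funext i; simp [Finset.mul_sum, mul_assoc]

lemma comb_apply (vec : Fin N → (Fin n →₀ ℕ)) (c : Fin N → ℝ) (i : Fin n) :
    comb vec c i = ∑ v, c v * (vec v i : ℝ) := rfl

lemma comb_single (vec : Fin N → (Fin n →₀ ℕ)) (v : Fin N) (t : ℝ) :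
    comb vec (Pi.single v t) = fun i => t * (vec v i : ℝ) := by
  funext i
  rw [comb_apply, Finset.sum_eq_single v]
  · simp
  · intro b _ hb; simp [hb]
  · simp

structure IsOpt (vec : Fin N → (Fin n →₀ ℕ)) (c : Fin N → ℝ) : Prop where
  nonneg : ∀ v, 0 ≤ c v
  min : ∀ c' : Fin N → ℝ, (∀ v, 0 ≤ c' v) → comb vec c' = comb vec c → key c ≤ key c'

lemma IsOpt.unique {vec : Fin N → (Fin n →₀ ℕ)} {c d : Fin N → ℝ} (hc : IsOpt vec c)
    (hd : IsOpt vec d) (h : comb vec c = comb vec d) : c = d :=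
  key_inj (le_antisymm (hc.min d hd.nonneg h.symm) (hd.min c hc.nonneg h))

/-- small multiples can be subtracted -/
lemma exists_small (c d : Fin N → ℝ) (hc : ∀ v, 0 ≤ c v) (hs : ∀ v, c v = 0 → d v = 0) :
    ∃ t : ℝ, 0 < t ∧ ∀ s : ℝ, |s| ≤ t → ∀ v, 0 ≤ c v + s * d v := by
  have : ∀ v, ∃ t : ℝ, 0 < t ∧ ∀ s : ℝ, |s| ≤ t → 0 ≤ c v + s * d v := by
    intro v
    by_cases h : c v = 0
    · exact ⟨1, one_pos, fun s _ => by simp [h, hs v h]⟩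
    · have hp : 0 < c v := lt_of_le_of_ne (hc v) (Ne.symm h)
      refine ⟨c v / (|d v| + 1), by positivity, fun s hs => ?_⟩
      have h1 : |s * d v| ≤ c v := by
        rw [abs_mul]
        calc |s| * |d v| ≤ c v / (|d v| + 1) * (|d v| + 1) := by
              gcongr; linarith
          _ = c v := by field_simp
      linarith [neg_abs_le (s * d v)]
  choose t ht1 ht2 using this
  rcases Nat.eq_zero_or_pos N with rfl | hN
  · exact ⟨1, one_pos, fun s _ v => v.elim0⟩
  have : (Finset.univ : Finset (Fin N)).Nonempty := ⟨⟨0, hN⟩, by simp⟩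
  refine ⟨Finset.univ.inf' this t, by simpa using ht1, fun s hs v => ht2 v s ?_⟩
  exact hs.trans (Finset.inf'_le _ (Finset.mem_univ v))

lemma IsOpt.of_support {vec : Fin N → (Fin n →₀ ℕ)} {c d : Fin N → ℝ} (hc : IsOpt vec c)
    (hd : ∀ v, 0 ≤ d v) (hs : ∀ v, c v = 0 → d v = 0) : IsOpt vec d := by
  refine ⟨hd, fun e he hde => ?_⟩
  obtain ⟨t, ht, h⟩ := exists_small c d hc.nonneg hs
  have h1 := hc.min (c + (-t) • d + t • e) (fun v => ?_) ?_
  · have : key (t • d) ≤ key (t • e) := by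
      have h2 : 0 ≤ key (c + (-t) • d + t • e) - key c := sub_nonneg.2 h1
      rw [← key_sub] at h2
      have h3 : c + (-t) • d + t • e - c = t • e - t • d := by
        funext v; simp; ring
      rw [h3, key_sub] at h2
      exact sub_nonneg.1 h2
    exact key_le_of_smul ht this
  · have := h (-t) (by rw [abs_neg, abs_of_pos ht]) v
    have := mul_nonneg ht.le (he v)
    simp only [Pi.add_apply, Pi.smul_apply, smul_eq_mul]; linarith
  · simp [hde]

lemma IsOpt.indep {vec : Fin N → (Fin n →₀ ℕ)} {c d : Fin N → ℝ} (hc : IsOpt vec c)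
    (hs : ∀ v, c v = 0 → d v = 0) (h0 : comb vec d = 0) : d = 0 := by
  obtain ⟨t, ht, h⟩ := exists_small c d hc.nonneg hs
  have h1 := hc.min (c + t • d) (fun v => h t (by rw [abs_of_pos ht]) v) (by simp [h0])
  have h2 := hc.min (c + (-t) • d) (fun v => h (-t) (by rw [abs_neg, abs_of_pos ht]) v)
    (by simp [h0])
  rw [key_add] at h1 h2
  have h1 : 0 ≤ key (t • d) := by simpa using h1
  have h2 : 0 ≤ key (-(t • d)) := by simpa using h2
  rw [key_neg] at h2
  have h3 : key (t • d) = 0 := le_antisymm (by simpa using h2) h1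
  have : t • d = 0 := key_inj (by rw [h3, key_zero])
  exact (smul_eq_zero.1 this).resolve_left ht.ne'

/-- the vectors in the support are independent -/
def Basic (vec : Fin N → (Fin n →₀ ℕ)) (c : Fin N → ℝ) : Prop :=
  ∀ d : Fin N → ℝ, (∀ v, c v = 0 → d v = 0) → comb vec d = 0 → d = 0

lemma comb_pos_eq_zero {vec : Fin N → (Fin n →₀ ℕ)} (hv : ∀ v, vec v ≠ 0) {d : Fin N → ℝ}
    (hd : ∀ v, 0 ≤ d v) (h0 : comb vec d = 0) : d = 0 := by
  funext v
  obtain ⟨i, hi⟩ := Finsupp.ne_iff.1 (hv v)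
  have := congrFun h0 i
  rw [comb_apply, Pi.zero_apply, Finset.sum_eq_zero_iff_of_nonneg
    (fun u _ => mul_nonneg (hd u) (Nat.cast_nonneg _))] at this
  have := this v (Finset.mem_univ v)
  simpa [show vec v i ≠ 0 from hi] using this

lemma reduce_step {vec : Fin N → (Fin n →₀ ℕ)} (hv : ∀ v, vec v ≠ 0) {c : Fin N → ℝ}
    (hc : ∀ v, 0 ≤ c v) (hb : ¬ Basic vec c) :
    ∃ c' : Fin N → ℝ, (∀ v, 0 ≤ c' v) ∧ comb vec c' = comb vec c ∧ key c' ≤ key c ∧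
      (Finset.univ.filter fun v => c' v ≠ 0).card < (Finset.univ.filter fun v => c v ≠ 0).card := by
  unfold Basic at hb
  push Not at hb
  obtain ⟨d, hs, h0, hd⟩ := hb
  wlog hneg : key d ≤ 0 generalizing d
  · refine this (-d) (fun v hv => by simp [hs v hv]) (by simp [h0]) (by simpa using hd) ?_
    rw [key_neg]
    simpa using (not_le.1 hneg).le
  have hex : ∃ v, d v < 0 := by
    by_contra hcon
    push Not at hcon
    exact hd (comb_pos_eq_zero hv hcon h0)
  have hne : (Finset.univ.filter fun v => d v < 0).Nonempty := by
    obtain ⟨v, hv⟩ := hex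
    exact ⟨v, by simpa using hv⟩
  obtain ⟨u, hu, hmin⟩ := Finset.exists_min_image _ (fun v => c v / (- d v)) hne
  simp only [Finset.mem_filter, Finset.mem_univ, true_and] at hu hmin
  have hcu : 0 ≤ c u / (- d u) := div_nonneg (hc u) (by linarith)
  refine ⟨c + (c u / (- d u)) • d, ?_, by simp [h0], ?_, ?_⟩
  · intro v
    simp only [Pi.add_apply, Pi.smul_apply, smul_eq_mul]
    by_cases hdv : d v < 0
    · have h1 := hmin v hdv
      have h2 : c v / (- d v) * (- d v) = c v := by
        have : d v ≠ 0 := hdv.ne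
        field_simp
      nlinarith
    · have := mul_nonneg hcu (not_lt.1 hdv)
      linarith [hc v]
  · have := key_smul_le hcu (c := d) (d := 0) (by rw [key_zero]; exact hneg)
    rw [key_add]
    simpa [key_zero] using this
  · apply Finset.card_lt_card
    rw [Finset.ssubset_iff_of_subset]
    · refine ⟨u, ?_, ?_⟩
      · simp only [Finset.mem_filter, Finset.mem_univ, true_and]
        intro h
        have := hs u h
        linarith
      · have : (- d u) ≠ 0 := by linarith
        have h3 : d u ≠ 0 := by linarith
        simp only [Finset.mem_filter, Finset.mem_univ, true_and, not_not, Pi.add_apply,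
          Pi.smul_apply, smul_eq_mul]
        field_simp
        ring
    · intro v
      simp only [Finset.mem_filter, Finset.mem_univ, true_and, Pi.add_apply,
          Pi.smul_apply, smul_eq_mul]
      intro h1 h2
      exact h1 (by simp [h2, hs v h2])

lemma reduce {vec : Fin N → (Fin n →₀ ℕ)} (hv : ∀ v, vec v ≠ 0) (m : ℕ) : ∀ (c : Fin N → ℝ),
    (∀ v, 0 ≤ c v) → (Finset.univ.filter fun v => c v ≠ 0).card ≤ m →
    ∃ c' : Fin N → ℝ, (∀ v, 0 ≤ c' v) ∧ comb vec c' = comb vec c ∧ key c' ≤ key c ∧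
      Basic vec c' := by
  induction m with
  | zero =>
    intro c hc h
    refine ⟨c, hc, rfl, le_rfl, fun d hd _ => ?_⟩
    funext v
    apply hd
    by_contra hcv
    have : v ∈ (Finset.univ.filter fun v => c v ≠ 0) := by simpa using hcv
    rw [Nat.le_zero, Finset.card_eq_zero] at h
    rw [h] at this
    simp at this
  | succ m ih =>
    intro c hc h
    by_cases hb : Basic vec c
    · exact ⟨c, hc, rfl, le_rfl, hb⟩
    obtain ⟨c', h1, h2, h3, h4⟩ := reduce_step hv hc hb
    obtain ⟨c'', g1, g2, g3, g4⟩ := ih c' h1 (by omega)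
    exact ⟨c'', g1, g2.trans h2, g3.trans h3, g4⟩

lemma exists_opt {vec : Fin N → (Fin n →₀ ℕ)} (hv : ∀ v, vec v ≠ 0) (c : Fin N → ℝ)
    (hc : ∀ v, 0 ≤ c v) : ∃ c', IsOpt vec c' ∧ comb vec c' = comb vec c := by
  classical
  let X : Set (Fin N → ℝ) := {c' | (∀ v, 0 ≤ c' v) ∧ comb vec c' = comb vec c ∧ Basic vec c'}
  have hfin : X.Finite := by
    apply Set.Finite.of_finite_image (f := fun c' : Fin N → ℝ => Finset.univ.filter fun v => c' v ≠ 0)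
    · exact Set.toFinite _
    · rintro a ⟨ha1, ha2, ha3⟩ b ⟨hb1, hb2, hb3⟩ hab
      have := ha3 (a - b) ?_ (by simp [ha2, hb2])
      · exact sub_eq_zero.1 this
      · intro v hv
        have : v ∉ Finset.univ.filter fun v => b v ≠ 0 := by
          have hab' : (Finset.univ.filter fun v => a v ≠ 0) = Finset.univ.filter fun v => b v ≠ 0 :=
            hab
          rw [← hab']; simpa using hv
        simp only [Finset.mem_filter, Finset.mem_univ, true_and, not_not] at this
        simp [hv, this]
  have hne : X.Nonempty := by
    obtain ⟨c', h1, h2, h3, h4⟩ := reduce hv _ c hc le_rfl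
    exact ⟨c', h1, h2, h4⟩
  obtain ⟨a, ⟨ha1, ha2, ha3⟩, hmin⟩ := Set.exists_min_image X key hfin hne
  refine ⟨a, ⟨ha1, fun c' h1 h2 => ?_⟩, ha2⟩
  obtain ⟨c'', g1, g2, g3, g4⟩ := reduce hv _ c' h1 le_rfl
  exact (hmin c'' ⟨g1, g2.trans (h2.trans ha2), g4⟩).trans g3

end TNS

namespace TNS
variable {n N : ℕ}

/-- standing assumptions on the vectors -/
structure Good (vec : Fin N → (Fin n →₀ ℕ)) : Prop where
  ne : ∀ v, vec v ≠ 0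
  ax : ∀ i, ∃ v k, 1 ≤ k ∧ vec v = Finsupp.single i k

/-- standing assumptions on the generic direction -/
structure Gen (vec : Fin N → (Fin n →₀ ℕ)) (w : Fin n → ℝ) : Prop where
  pos : ∀ i, 0 < w i
  gen : ∀ J : Finset (Fin N), J.card < n → ∀ c : Fin N → ℝ, (∀ v, v ∉ J → c v = 0) →
    comb vec c ≠ w

lemma exists_gen (vec : Fin N → (Fin n →₀ ℕ)) : ∃ w, Gen vec w := by
  classical
  let W : Finset (Fin N) → Submodule ℝ (Fin n → ℝ) := fun J =>
    Submodule.span ℝ ((fun v => comb vec (Pi.single v 1)) '' (J : Set (Fin N)))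
  let bad : Set (Fin n → ℝ) := ⋃ J ∈ {J : Finset (Fin N) | J.card < n}, (W J : Set (Fin n → ℝ))
  have hbad : MeasureTheory.volume bad = 0 := by
    rw [MeasureTheory.measure_biUnion_null_iff (Set.to_countable _)]
    intro J hJ
    apply MeasureTheory.Measure.addHaar_submodule
    intro htop
    have h1 : Module.finrank ℝ (W J) ≤ J.card := by
      have h2 := finrank_span_finset_le_card (R := ℝ) (J.image fun v => comb vec (Pi.single v 1))
      have h3 : W J = Submodule.span ℝ ((J.image fun v => comb vec (Pi.single v 1) : Finset _) : Set (Fin n → ℝ)) := by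
        simp [W]
      rw [h3]
      exact h2.trans Finset.card_image_le
    rw [htop, finrank_top, Module.finrank_fin_fun] at h1
    have : J.card < n := hJ
    omega
  have hO : IsOpen {x : Fin n → ℝ | ∀ i, 0 < x i} := by
    simp only [Set.ofPred_forall]
    exact isOpen_iInter_of_finite fun i => isOpen_lt continuous_const (continuous_apply i)
  have hpos : MeasureTheory.volume {x : Fin n → ℝ | ∀ i, 0 < x i} ≠ 0 :=
    (hO.measure_pos _ ⟨fun _ => 1, fun _ => one_pos⟩).ne'
  have : ¬ {x : Fin n → ℝ | ∀ i, 0 < x i} ⊆ bad := fun h =>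
    hpos (MeasureTheory.measure_mono_null h hbad)
  obtain ⟨w, hw, hwb⟩ := Set.not_subset.1 this
  refine ⟨w, hw, fun J hJ c hc hcw => hwb ?_⟩
  simp only [bad, Set.mem_iUnion]
  refine ⟨J, hJ, ?_⟩
  rw [← hcw]
  have : c = ∑ v ∈ J, c v • (Pi.single v 1 : Fin N → ℝ) := by
    funext u
    rw [Finset.sum_apply]
    by_cases hu : u ∈ J
    · rw [Finset.sum_eq_single u]
      · simp
      · intro b _ hb; simp [hb.symm]
      · simp [hu]
    · rw [hc u hu, Finset.sum_eq_zero]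
      intro v hv
      have : v ≠ u := by rintro rfl; exact hu hv
      simp [this.symm]
  rw [this, map_sum]
  apply Submodule.sum_mem
  intro v hv
  rw [map_smul]
  exact Submodule.smul_mem _ _ (Submodule.subset_span ⟨v, hv, rfl⟩)

lemma comb_nonneg (vec : Fin N → (Fin n →₀ ℕ)) {c : Fin N → ℝ} (hc : ∀ v, 0 ≤ c v) (i : Fin n) :
    0 ≤ comb vec c i := by
  rw [comb_apply]
  exact Finset.sum_nonneg fun v _ => mul_nonneg (hc v) (Nat.cast_nonneg _)

lemma Good.exists_rep {vec : Fin N → (Fin n →₀ ℕ)} (hg : Good vec) (x : Fin n → ℝ)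
    (hx : ∀ i, 0 ≤ x i) : ∃ c : Fin N → ℝ, (∀ v, 0 ≤ c v) ∧ comb vec c = x := by
  choose v k hk hv using hg.ax
  refine ⟨∑ i, Pi.single (v i) (x i / k i), fun u => ?_, ?_⟩
  · rw [Finset.sum_apply]
    refine Finset.sum_nonneg fun i _ => ?_
    by_cases h : u = v i
    · subst h; simp only [Pi.single_eq_same]; exact div_nonneg (hx i) (Nat.cast_nonneg _)
    · simp [h]
  · rw [map_sum]
    funext j
    rw [Finset.sum_apply, Finset.sum_eq_single j]
    · rw [comb_single, hv]
      have : (k j : ℝ) ≠ 0 := by have := hk j; positivity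
      simp only [Finsupp.single_eq_same]
      field_simp
    · intro b _ hb
      rw [comb_single, hv]; simp [hb]
    · simp

lemma Good.exists_opt' {vec : Fin N → (Fin n →₀ ℕ)} (hg : Good vec) (x : Fin n → ℝ)
    (hx : ∀ i, 0 ≤ x i) : ∃ c : Fin N → ℝ, IsOpt vec c ∧ comb vec c = x := by
  obtain ⟨c, h1, h2⟩ := hg.exists_rep x hx
  obtain ⟨d, h3, h4⟩ := exists_opt hg.ne c h1
  exact ⟨d, h3, h4.trans h2⟩

structure IsSlope (vec : Fin N → (Fin n →₀ ℕ)) (w : Fin n → ℝ) (c β : Fin N → ℝ) : Prop where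
  comb_eq : comb vec β = w
  ex : ∃ e0 : ℝ, 0 < e0 ∧ ∀ e : ℝ, 0 < e → e ≤ e0 → IsOpt vec (c + e • β)

lemma exists_slope {vec : Fin N → (Fin n →₀ ℕ)} (hg : Good vec) {w : Fin n → ℝ}
    (hw : ∀ i, 0 < w i) {c : Fin N → ℝ} (hc : IsOpt vec c) : ∃ β, IsSlope vec w c β := by
  classical
  have h1 : ∀ m : ℕ, ∃ d, IsOpt vec d ∧ comb vec d = comb vec c + (1 / ((m : ℝ) + 1)) • w := by
    intro m
    apply hg.exists_opt'
    intro i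
    have := comb_nonneg vec hc.nonneg i
    have h2 : 0 ≤ (1 / ((m : ℝ) + 1)) * w i := mul_nonneg (by positivity) (hw i).le
    simp only [Pi.add_apply, Pi.smul_apply, smul_eq_mul]
    linarith
  choose d hd hdc using h1
  obtain ⟨J, hJ⟩ := Finite.exists_infinite_fiber (fun m => Finset.univ.filter fun v => d m v ≠ 0)
  have hJ' : ((fun m => Finset.univ.filter fun v => d m v ≠ 0) ⁻¹' {J}).Infinite :=
    Set.infinite_coe_iff.1 hJ
  have hsupp : ∀ m ∈ ((fun m => Finset.univ.filter fun v => d m v ≠ 0) ⁻¹' {J}), ∀ v,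
      d m v = 0 ↔ v ∉ J := by
    intro m hm v
    have : (Finset.univ.filter fun v => d m v ≠ 0) = J := hm
    rw [← this]; simp
  obtain ⟨m1, hm1⟩ := hJ'.nonempty
  obtain ⟨m2, hm2, hlt⟩ := hJ'.exists_gt m1
  set e : ℕ → ℝ := fun m => 1 / ((m : ℝ) + 1) with he
  have hepos : ∀ m, 0 < e m := fun m => by simp only [he]; positivity
  have hne : e m1 - e m2 ≠ 0 := by
    have : e m2 < e m1 := by
      simp only [he]
      have : (m1 : ℝ) < m2 := by exact_mod_cast hlt
      apply one_div_lt_one_div_of_lt <;> [positivity; linarith]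
    linarith
  set β : Fin N → ℝ := (e m1 - e m2)⁻¹ • (d m1 - d m2) with hβ
  set α : Fin N → ℝ := d m1 - e m1 • β with hα
  have hcβ : comb vec β = w := by
    rw [hβ, map_smul, map_sub, hdc, hdc, add_sub_add_left_eq_sub, ← sub_smul, smul_smul,
      inv_mul_cancel₀ hne, one_smul]
  have hcα : comb vec α = comb vec c := by
    rw [hα, map_sub, map_smul, hcβ, hdc]; simp [he]
  have hβJ : ∀ v, v ∉ J → β v = 0 := by
    intro v hv
    simp [hβ, (hsupp m1 hm1 v).2 hv, (hsupp m2 hm2 v).2 hv]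
  have hαJ : ∀ v, v ∉ J → α v = 0 := by
    intro v hv
    simp [hα, (hsupp m1 hm1 v).2 hv, hβJ v hv]
  have haff : ∀ m ∈ ((fun m => Finset.univ.filter fun v => d m v ≠ 0) ⁻¹' {J}),
      d m = α + e m • β := by
    intro m hm
    have := (hd m1).indep (d := d m - (α + e m • β)) (fun v hv => ?_) ?_
    · exact sub_eq_zero.1 this
    · have hv := (hsupp m1 hm1 v).1 hv
      simp [(hsupp m hm v).2 hv, hαJ v hv, hβJ v hv]
    · rw [map_sub, map_add, map_smul, hcα, hcβ, hdc]; simp [he]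
  have hαnn : ∀ v, 0 ≤ α v := by
    intro v
    by_contra hneg
    push Not at hneg
    obtain ⟨M, hM⟩ := exists_nat_gt (|β v| / (-α v))
    obtain ⟨m, hm, hmM⟩ := hJ'.exists_gt M
    have h3 := (hd m).nonneg v
    rw [haff m hm] at h3
    simp only [Pi.add_apply, Pi.smul_apply, smul_eq_mul] at h3
    have h4 : e m * β v ≤ e m * |β v| := mul_le_mul_of_nonneg_left (le_abs_self _) (hepos m).le
    have h5 : e m * |β v| < -α v := by
      have h6 : |β v| < M * (-α v) := by rwa [div_lt_iff₀ (by linarith)] at hM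
      have h7 : (M : ℝ) < m := by exact_mod_cast hmM
      have h8 : |β v| < (m + 1) * (-α v) := by nlinarith
      simp only [he]
      rw [one_div, inv_mul_lt_iff₀ (by positivity)]
      exact h8
    linarith
  have hαo : IsOpt vec α := (hd m1).of_support hαnn fun v hv => hαJ v ((hsupp m1 hm1 v).1 hv)
  have hαc : α = c := hαo.unique hc hcα
  refine ⟨β, hcβ, e m1, hepos m1, fun s hs hs1 => ?_⟩
  rw [← hαc]
  refine (hd m1).of_support (fun v => ?_) (fun v hv => ?_)
  · have h3 := (hd m1).nonneg v
    rw [haff m1 hm1] at h3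
    simp only [Pi.add_apply, Pi.smul_apply, smul_eq_mul] at h3 ⊢
    rcases le_total 0 (β v) with hb | hb
    · have := hαnn v; positivity
    · nlinarith
  · have hv := (hsupp m1 hm1 v).1 hv
    simp [hαJ v hv, hβJ v hv]

section slope
variable {vec : Fin N → (Fin n →₀ ℕ)} {w : Fin n → ℝ} {c β : Fin N → ℝ}

lemma IsSlope.neg_imp (hs : IsSlope vec w c β) (v : Fin N) (h : β v < 0) : 0 < c v := by
  obtain ⟨e0, he0, h1⟩ := hs.ex
  have := (h1 e0 he0 le_rfl).nonneg v
  simp only [Pi.add_apply, Pi.smul_apply, smul_eq_mul] at this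
  nlinarith

lemma IsOpt.card_le (hc : IsOpt vec c) : (Finset.univ.filter fun v => c v ≠ 0).card ≤ n := by
  classical
  set J := Finset.univ.filter fun v => c v ≠ 0 with hJ
  let ext : (J → ℝ) →ₗ[ℝ] (Fin N → ℝ) :=
    { toFun := fun g v => if h : v ∈ J then g ⟨v, h⟩ else 0
      map_add' := fun a b => by funext v; by_cases h : v ∈ J <;> simp [h]
      map_smul' := fun a b => by funext v; by_cases h : v ∈ J <;> simp [h] }
  have hinj : Function.Injective ((comb vec).comp ext) := by
    rw [← LinearMap.ker_eq_bot, LinearMap.ker_eq_bot']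
    intro g hg
    have h0 : ext g = 0 := hc.indep (fun v hv => by
      have : v ∉ J := by simp [hJ, hv]
      simp [ext, this]) hg
    funext ⟨v, hv⟩
    have := congrFun h0 v
    simpa [ext, hv] using this
  have := LinearMap.finrank_le_finrank_of_injective hinj
  simpa using this

lemma IsSlope.opt_half (hs : IsSlope vec w c β) (hc : ∀ v, 0 ≤ c v) :
    ∃ d, IsOpt vec d ∧ ∀ v, d v = 0 → c v = 0 ∧ β v = 0 := by
  obtain ⟨e0, he0, h1⟩ := hs.ex
  refine ⟨_, h1 (e0 / 2) (by linarith) (by linarith), fun v hv => ?_⟩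
  have h2 := (h1 e0 he0 le_rfl).nonneg v
  have h3 := hc v
  simp only [Pi.add_apply, Pi.smul_apply, smul_eq_mul] at h2 hv
  have h4 : β v = 0 := by nlinarith
  rw [h4] at hv
  exact ⟨by linarith, h4⟩

lemma IsSlope.supp (hw : Gen vec w) (hc : IsOpt vec c) (hs : IsSlope vec w c β) (v : Fin N)
    (hv : β v = 0) : c v = 0 := by
  by_contra hcv
  obtain ⟨d, hd, h⟩ := hs.opt_half hc.nonneg
  refine hw.gen ((Finset.univ.filter fun v => d v ≠ 0).erase v) ?_ β ?_ hs.comb_eq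
  · have hm : v ∈ Finset.univ.filter fun v => d v ≠ 0 := by
      simp only [Finset.mem_filter, Finset.mem_univ, true_and]
      exact fun h' => hcv (h v h').1
    have := Finset.card_erase_lt_of_mem hm
    have := hd.card_le
    omega
  · intro u hu
    by_cases huv : u = v
    · rw [huv, hv]
    · simp only [Finset.mem_erase, Finset.mem_filter, Finset.mem_univ, true_and, not_and,
        not_not] at hu
      exact (h u (hu huv)).2

lemma IsSlope.unique {β' : Fin N → ℝ} (h1 : IsSlope vec w c β) (h2 : IsSlope vec w c β') :
    β = β' := by
  obtain ⟨e1, he1, g1⟩ := h1.ex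
  obtain ⟨e2, he2, g2⟩ := h2.ex
  have hp : 0 < min e1 e2 := lt_min he1 he2
  have := (g1 _ hp (min_le_left _ _)).unique (g2 _ hp (min_le_right _ _))
    (by simp [h1.comb_eq, h2.comb_eq])
  have := add_left_cancel this
  exact smul_right_injective _ hp.ne' this

lemma IsSlope.transfer (hc : IsOpt vec c) (hs : IsSlope vec w c β)
    {c' : Fin N → ℝ} (h0 : ∀ v, 0 ≤ c' v) (h1 : ∀ v, β v = 0 → c' v = 0)
    (h2 : ∀ v, β v < 0 → 0 < c' v) : IsOpt vec c' ∧ IsSlope vec w c' β := by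
  obtain ⟨d, hd, h⟩ := hs.opt_half hc.nonneg
  refine ⟨hd.of_support h0 fun v hv => h1 v (h v hv).2, hs.comb_eq, ?_⟩
  obtain ⟨t, ht, hsm⟩ := exists_small c' (fun v => min (β v) 0) h0 (fun v hv => by
    by_contra hne
    have : β v < 0 := by
      by_contra hcon; exact hne (min_eq_right (not_lt.1 hcon))
    have := h2 v this
    linarith)
  refine ⟨t, ht, fun e he het => hd.of_support (fun v => ?_) fun v hv => ?_⟩
  · have h3 := hsm e (by rw [abs_of_pos he]; exact het) v
    have h4 : e * min (β v) 0 ≤ e * β v := mul_le_mul_of_nonneg_left (min_le_left _ _) he.le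
    simp only [Pi.add_apply, Pi.smul_apply, smul_eq_mul]
    linarith
  · simp [(h v hv).2, h1 v (h v hv).2]

lemma slope_step (hw : Gen vec w) (hc : IsOpt vec c) (hs : IsSlope vec w c β) (v : Fin N) {t : ℝ}
    (ht : 0 < t) {c' β' : Fin N → ℝ} (hc' : IsOpt vec c') (hs' : IsSlope vec w c' β')
    (h : comb vec c' = comb vec (c + Pi.single v t)) :
    key c' < key (c + Pi.single v t) ∨ (c' = c + Pi.single v t ∧
      (key β' < key β ∨ (β' = β ∧ β v ≠ 0))) := by
  have hnn : ∀ u, 0 ≤ (c + Pi.single v t : Fin N → ℝ) u := by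
    intro u
    have := hc.nonneg u
    by_cases hu : u = v
    · subst hu; simp; linarith
    · simpa [hu] using this
  rcases (hc'.min _ hnn h.symm).lt_or_eq with hlt | heq
  · exact Or.inl hlt
  have heq := key_inj heq
  refine Or.inr ⟨heq, ?_⟩
  obtain ⟨e1, he1, g1⟩ := hs.ex
  obtain ⟨e2, he2, g2⟩ := hs'.ex
  have hp : 0 < min e1 e2 := lt_min he1 he2
  have hm := (g2 _ hp (min_le_right _ _)).min (c + Pi.single v t + (min e1 e2) • β) (fun u => by
    have h3 := (g1 _ hp (min_le_left _ _)).nonneg u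
    have h4 : 0 ≤ (Pi.single v t : Fin N → ℝ) u := by
      by_cases hu : u = v
      · subst hu; simp; linarith
      · simp [hu]
    simp only [Pi.add_apply] at h3 ⊢
    linarith) (by
      rw [map_add, map_add _ c', map_smul, map_smul, hs.comb_eq, hs'.comb_eq, h])
  rw [heq, key_add, key_add _ (_ • β)] at hm
  have hk : key β' ≤ key β := key_le_of_smul hp (by simpa using hm)
  rcases hk.lt_or_eq with h5 | h5
  · exact Or.inl h5
  · have hb := key_inj h5
    refine Or.inr ⟨hb, fun h6 => ?_⟩
    have h7 := hs'.supp hw hc' v (by rw [hb, h6])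
    rw [heq] at h7
    have := hc.nonneg v
    simp at h7
    linarith

end slope
end TNS

namespace TNS
set_option linter.unusedSectionVars false
section koszul
variable {ι : Type*} [Fintype ι] [DecidableEq ι] {R E : Type*} [CommRing R] [AddCommGroup E]
  [Module R E]

structure IsSg (eps : ι → ι → ℤ) : Prop where
  sq : ∀ u v, eps u v * eps u v = 1
  anti : ∀ u v, u ≠ v → eps u v = - eps v u

lemma exists_sg : ∃ eps : ι → ι → ℤ, IsSg eps := by
  let p := Fintype.equivFin ι
  refine ⟨fun u v => if p u < p v then -1 else 1, fun u v => by split_ifs <;> simp, ?_⟩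
  intro u v h
  have : p u ≠ p v := fun h' => h (p.injective h')
  rcases lt_or_gt_of_ne this with h | h
  · simp [h, not_lt.2 h.le]
  · simp [h, not_lt.2 h.le]

def sgn (eps : ι → ι → ℤ) (v : ι) (S : Finset ι) : ℤ := ∏ u ∈ S, eps u v

lemma IsSg.sgn_sq {eps : ι → ι → ℤ} (he : IsSg eps) (v : ι) (S : Finset ι) :
    sgn eps v S * sgn eps v S = 1 := by
  unfold sgn
  rw [← Finset.prod_mul_distrib]
  exact Finset.prod_eq_one fun u _ => he.sq u v

lemma sgn_insert (eps : ι → ι → ℤ) (v u : ι) (S : Finset ι) (hu : u ∉ S) :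
    sgn eps v (insert u S) = eps u v * sgn eps v S := by
  unfold sgn
  rw [Finset.prod_insert hu]

variable (R E) in
def opJ (eps : ι → ι → ℤ) (v : ι) : (Finset ι → E) →ₗ[R] (Finset ι → E) where
  toFun α := fun S => if v ∈ S then 0 else sgn eps v S • α (insert v S)
  map_add' a b := by funext S; by_cases h : v ∈ S <;> simp [h]
  map_smul' r a := by funext S; by_cases h : v ∈ S <;> simp [h, smul_comm r]

variable (R E) in
def opE (eps : ι → ι → ℤ) (v : ι) : (Finset ι → E) →ₗ[R] (Finset ι → E) where
  toFun α := fun S => if v ∈ S then sgn eps v (S.erase v) • α (S.erase v) else 0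
  map_add' a b := by funext S; by_cases h : v ∈ S <;> simp [h]
  map_smul' r a := by funext S; by_cases h : v ∈ S <;> simp [h, smul_comm r]

lemma opJ_apply (eps : ι → ι → ℤ) (v : ι) (α : Finset ι → E) (S : Finset ι) :
    opJ R E eps v α S = if v ∈ S then 0 else sgn eps v S • α (insert v S) := rfl

lemma opE_apply (eps : ι → ι → ℤ) (v : ι) (α : Finset ι → E) (S : Finset ι) :
    opE R E eps v α S = if v ∈ S then sgn eps v (S.erase v) • α (S.erase v) else 0 := rfl

variable {eps : ι → ι → ℤ}

lemma JJ (he : IsSg eps) (u v : ι) (α : Finset ι → E) :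
    opJ R E eps u (opJ R E eps v α) + opJ R E eps v (opJ R E eps u α) = 0 := by
  funext S
  simp only [Pi.add_apply, opJ_apply, Pi.zero_apply, Finset.mem_insert]
  by_cases huv : u = v
  · subst huv; simp
  by_cases hu : u ∈ S
  · simp [hu]
  by_cases hv : v ∈ S
  · simp [hv]
  simp only [hu, hv, huv, Ne.symm huv, if_false, or_false]
  rw [smul_smul, smul_smul, Finset.insert_comm, ← add_smul, sgn_insert _ _ _ _ hu,
    sgn_insert _ _ _ _ hv, he.anti u v huv]
  convert zero_smul ℤ _
  ring

lemma JE_ne (he : IsSg eps) (u v : ι) (huv : u ≠ v) (α : Finset ι → E) :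
    opJ R E eps u (opE R E eps v α) + opE R E eps v (opJ R E eps u α) = 0 := by
  funext S
  simp only [Pi.add_apply, opJ_apply, opE_apply, Pi.zero_apply, Finset.mem_insert, Finset.mem_erase]
  by_cases hu : u ∈ S
  · simp [hu, huv]
  by_cases hv : v ∈ S
  · obtain ⟨T, hT, rfl⟩ : ∃ T, v ∉ T ∧ S = insert v T :=
      ⟨S.erase v, by simp, (Finset.insert_erase hv).symm⟩
    have huT : u ∉ T := fun h => hu (Finset.mem_insert_of_mem h)
    have h1 : (insert u (insert v T)).erase v = insert u T := by
      rw [Finset.insert_comm, Finset.erase_insert]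
      simp [hT, huv.symm]
    simp only [hu, huv, hv, if_true, if_false, or_true, and_false, Finset.erase_insert hT, h1]
    rw [smul_smul, smul_smul, ← add_smul, sgn_insert _ _ _ _ huT,
      sgn_insert _ _ _ _ hT, he.anti u v huv]
    convert zero_smul ℤ _
    linear_combination (-(sgn eps u T) * sgn eps v T) * he.sq v u
  · simp [hv, huv.symm]

lemma JE_eq (he : IsSg eps) (u : ι) (α : Finset ι → E) :
    opJ R E eps u (opE R E eps u α) + opE R E eps u (opJ R E eps u α) = α := by
  funext S
  simp only [Pi.add_apply, opJ_apply, opE_apply, Finset.mem_insert, Finset.mem_erase]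
  by_cases hu : u ∈ S
  · simp [hu, smul_smul, he.sgn_sq]
  · simp [hu, smul_smul, he.sgn_sq]

variable (E) in
def opD (eps : ι → ι → ℤ) (x : ι → R) : (Finset ι → E) →ₗ[R] (Finset ι → E) :=
  ∑ i, x i • opJ R E eps i

lemma opD_apply (x : ι → R) (α : Finset ι → E) : opD E eps x α = ∑ i, x i • opJ R E eps i α := by
  simp [opD]

lemma JD (he : IsSg eps) (x : ι → R) (u : ι) (α : Finset ι → E) :
    opJ R E eps u (opD E eps x α) = - opD E eps x (opJ R E eps u α) := by
  rw [eq_neg_iff_add_eq_zero, opD_apply, opD_apply, map_sum, ← Finset.sum_add_distrib]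
  apply Finset.sum_eq_zero
  intro i _
  rw [map_smul, ← smul_add, JJ he, smul_zero]

lemma DD (he : IsSg eps) (x : ι → R) (α : Finset ι → E) (h2 : ∀ e : E, e + e = 0 → e = 0) :
    opD E eps x (opD E eps x α) = 0 := by
  have h : opD E eps x (opD E eps x α) + opD E eps x (opD E eps x α) = 0 := by
    have h1 : opD E eps x (opD E eps x α) = ∑ i, ∑ j, (x i * x j) • opJ R E eps j (opJ R E eps i α) := by
      simp only [opD_apply, map_sum, map_smul, Finset.smul_sum, smul_smul]
    nth_rewrite 2 [h1]
    rw [Finset.sum_comm, h1, ← Finset.sum_add_distrib]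
    refine Finset.sum_eq_zero fun i _ => ?_
    rw [← Finset.sum_add_distrib]
    refine Finset.sum_eq_zero fun j _ => ?_
    rw [mul_comm (x j), ← smul_add, JJ he, smul_zero]
  funext S
  exact h2 _ (congrFun h S)

lemma DE (he : IsSg eps) (x : ι → R) (u : ι) (α : Finset ι → E) :
    opD E eps x (opE R E eps u α) = x u • α - opE R E eps u (opD E eps x α) := by
  rw [eq_sub_iff_add_eq, opD_apply, opD_apply, map_sum, ← Finset.sum_add_distrib]
  rw [Finset.sum_eq_single u]
  · rw [map_smul, ← smul_add, JE_eq he]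
  · intro i _ hi
    rw [map_smul, ← smul_add, JE_ne he _ _ hi, smul_zero]
  · simp

def cardGE (E : Type*) [AddCommGroup E] {ι : Type*} (m : ℕ) (α : Finset ι → E) : Prop :=
  ∀ S : Finset ι, S.card < m → α S = 0

lemma cardGE_E (u : ι) (m : ℕ) {α : Finset ι → E} (h : cardGE E m α) :
    cardGE E (m + 1) (opE R E eps u α) := by
  intro S hS
  rw [opE_apply]
  split_ifs with hu
  · rw [h _ (by rw [Finset.card_erase_of_mem hu]; have := Finset.card_pos.2 ⟨u, hu⟩; omega), smul_zero]
  · rfl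

end koszul

section koszul2
variable {n N : ℕ} {R E : Type*} [CommRing R] [AddCommGroup E] [Module R E]
  {eps : (Fin n ⊕ Fin N) → (Fin n ⊕ Fin N) → ℤ}

def opX (E : Type*) [AddCommGroup E] [Module R E] (eps : (Fin n ⊕ Fin N) → (Fin n ⊕ Fin N) → ℤ)
    (G : Fin N → Fin n → R) (v : Fin N) :
    (Finset (Fin n ⊕ Fin N) → E) →ₗ[R] (Finset (Fin n ⊕ Fin N) → E) :=
  opE R E eps (Sum.inr v) - ∑ i, G v i • opE R E eps (Sum.inl i)

lemma opX_apply (G : Fin N → Fin n → R) (v : Fin N) (α : Finset (Fin n ⊕ Fin N) → E) :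
    opX E eps G v α = opE R E eps (Sum.inr v) α - ∑ i, G v i • opE R E eps (Sum.inl i) α := by
  simp [opX]

lemma DX (he : IsSg eps) (x : (Fin n ⊕ Fin N) → R) (G : Fin N → Fin n → R)
    (hG : ∀ v (e : E), x (Sum.inr v) • e = (∑ i, G v i * x (Sum.inl i)) • e) (v : Fin N)
    (α : Finset (Fin n ⊕ Fin N) → E) :
    opD E eps x (opX E eps G v α) = - opX E eps G v (opD E eps x α) := by
  rw [opX_apply, opX_apply, map_sub, map_sum, DE he]
  simp only [map_smul, DE he, smul_sub, Finset.sum_sub_distrib, smul_smul, ← Finset.sum_smul]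
  have : x (Sum.inr v) • α = (∑ i, G v i * x (Sum.inl i)) • α := by
    funext S; exact hG v (α S)
  rw [this]
  abel

lemma JX (he : IsSg eps) (G : Fin N → Fin n → R) (u v : Fin N) (α : Finset (Fin n ⊕ Fin N) → E) :
    opJ R E eps (Sum.inr u) (opX E eps G v α) =
      (if u = v then α else 0) - opX E eps G v (opJ R E eps (Sum.inr u) α) := by
  have h1 : ∀ i, opJ R E eps (Sum.inr u) (opE R E eps (Sum.inl i) α) =
      - opE R E eps (Sum.inl i) (opJ R E eps (Sum.inr u) α) := fun i => by
    rw [eq_neg_iff_add_eq_zero, JE_ne he _ _ (by simp)]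
  rw [opX_apply, opX_apply, map_sub, map_sum]
  simp only [map_smul, h1, smul_neg, Finset.sum_neg_distrib]
  split_ifs with h
  · subst h
    have := JE_eq (R := R) he (Sum.inr u) α
    rw [← eq_sub_iff_add_eq] at this
    rw [this]; abel
  · have := JE_ne (R := R) he (Sum.inr u) (Sum.inr v) (by simpa using h) α
    rw [← eq_neg_iff_add_eq_zero] at this
    rw [this]; abel

def opXs (E : Type*) [AddCommGroup E] [Module R E] (eps : (Fin n ⊕ Fin N) → (Fin n ⊕ Fin N) → ℤ)
    (G : Fin N → Fin n → R) (l : List (Fin N)) (z : Finset (Fin n ⊕ Fin N) → E) :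
    Finset (Fin n ⊕ Fin N) → E := l.foldr (fun v α => opX E eps G v α) z

lemma Xs_closed (he : IsSg eps) (x : (Fin n ⊕ Fin N) → R) (G : Fin N → Fin n → R)
    (hG : ∀ v (e : E), x (Sum.inr v) • e = (∑ i, G v i * x (Sum.inl i)) • e)
    (z : Finset (Fin n ⊕ Fin N) → E) (hz : opD E eps x z = 0) (l : List (Fin N)) :
    opD E eps x (opXs E eps G l z) = 0 := by
  induction l with
  | nil => exact hz
  | cons v l ih =>
    change opD E eps x (opX E eps G v (opXs E eps G l z)) = 0
    rw [DX he x G hG, ih, map_zero, neg_zero]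

lemma Xs_card (G : Fin N → Fin n → R) (z : Finset (Fin n ⊕ Fin N) → E) (m : ℕ)
    (hz : cardGE E m z) (l : List (Fin N)) : cardGE E (m + l.length) (opXs E eps G l z) := by
  induction l with
  | nil => exact hz
  | cons v l ih =>
    change cardGE E (m + (l.length + 1)) (opX E eps G v (opXs E eps G l z))
    rw [opX_apply, ← add_assoc]
    intro S hS
    simp only [Pi.sub_apply, Finset.sum_apply, Pi.smul_apply]
    rw [cardGE_E _ _ ih S hS, zero_sub, neg_eq_zero]
    exact Finset.sum_eq_zero fun i _ => by rw [cardGE_E _ _ ih S hS, smul_zero]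

lemma Xs_kill (he : IsSg eps) (G : Fin N → Fin n → R) (z : Finset (Fin n ⊕ Fin N) → E)
    (hz : ∀ v, opJ R E eps (Sum.inr v) z = 0) (l : List (Fin N)) (u : Fin N) (hu : u ∉ l) :
    opJ R E eps (Sum.inr u) (opXs E eps G l z) = 0 := by
  induction l with
  | nil => exact hz u
  | cons v l ih =>
    change opJ R E eps (Sum.inr u) (opX E eps G v (opXs E eps G l z)) = 0
    simp only [List.mem_cons, not_or] at hu
    rw [JX he, if_neg hu.1, ih hu.2, map_zero, sub_zero]

lemma Xs_bdry (he : IsSg eps) (x : (Fin n ⊕ Fin N) → R) (G : Fin N → Fin n → R)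
    (z : Finset (Fin n ⊕ Fin N) → E)
    (hz : ∀ v, opJ R E eps (Sum.inr v) z = 0) (l : List (Fin N)) (hl : l.Nodup)
    (h : ∃ Y, opXs E eps G l z = opD E eps x Y) : ∃ Y, z = opD E eps x Y := by
  induction l with
  | nil => exact h
  | cons v l ih =>
    obtain ⟨Y, hY⟩ := h
    change opX E eps G v (opXs E eps G l z) = _ at hY
    rw [List.nodup_cons] at hl
    refine ih hl.2 ⟨- opJ R E eps (Sum.inr v) Y, ?_⟩
    have h1 := JX he G v v (opXs E eps G l z)
    rw [Xs_kill he G z hz l v hl.1, map_zero, sub_zero, if_pos rfl, hY, JD he] at h1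
    rw [map_neg, h1]

theorem koszul_main (he : IsSg eps) (x : (Fin n ⊕ Fin N) → R) (G : Fin N → Fin n → R)
    (hG : ∀ v (e : E), x (Sum.inr v) • e = (∑ i, G v i * x (Sum.inl i)) • e)
    (hex : ∀ Z : Finset (Fin n ⊕ Fin N) → E, cardGE E (N + 1) Z → opD E eps x Z = 0 →
      ∃ Y, Z = opD E eps x Y)
    (h : Fin n → E) (hh : ∑ i, x (Sum.inl i) • h i = 0) :
    ∃ c : Fin n → Fin n → E, (∀ i j, c i j = - c j i) ∧ ∀ i, h i = ∑ j, x (Sum.inl j) • c i j := by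
  classical
  let z : Finset (Fin n ⊕ Fin N) → E := fun S => ∑ i, if S = {Sum.inl i} then h i else 0
  have hzinl : ∀ i, z {Sum.inl i} = h i := by
    intro i
    simp only [z]
    rw [Finset.sum_eq_single i]
    · simp
    · intro j _ hj; simp [hj.symm]
    · simp
  have hz0 : ∀ S, (∀ i, S ≠ {Sum.inl i}) → z S = 0 := by
    intro S hS
    exact Finset.sum_eq_zero fun i _ => by rw [if_neg (hS i)]
  have hzJ : ∀ v, opJ R E eps (Sum.inr v) z = 0 := by
    intro v
    funext S
    rw [opJ_apply]
    split_ifs with hv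
    · rfl
    · rw [hz0, smul_zero]; rfl
      intro i hi
      have : Sum.inr v ∈ ({Sum.inl i} : Finset (Fin n ⊕ Fin N)) := by
        rw [← hi]; exact Finset.mem_insert_self _ _
      simp at this
  have hzc : cardGE E 1 z := by
    intro S hS
    apply hz0
    rintro i rfl
    simp at hS
  have hzD : opD E eps x z = 0 := by
    funext S
    rw [opD_apply, Finset.sum_apply, Fintype.sum_sum_type]
    simp only [hzJ, smul_zero, Pi.zero_apply, Finset.sum_const_zero, add_zero]
    by_cases hS : S = ∅
    · subst hS
      rw [← hh]
      refine Finset.sum_congr rfl fun i _ => ?_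
      rw [Pi.smul_apply, opJ_apply]
      simp [sgn, hzinl]
    · refine Finset.sum_eq_zero fun i _ => ?_
      rw [Pi.smul_apply, opJ_apply]
      split_ifs with hi
      · rw [smul_zero]
      · rw [hz0, smul_zero, smul_zero]
        intro j hj
        have h1 := congrArg Finset.card hj
        rw [Finset.card_insert_of_notMem hi, Finset.card_singleton] at h1
        exact hS (Finset.card_eq_zero.1 (by omega))
  obtain ⟨Y, hY⟩ := Xs_bdry he x G z hzJ (List.finRange N) (List.nodup_finRange N)
    (hex _ (by simpa [add_comm] using Xs_card (eps := eps) G z 1 hzc (List.finRange N))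
      (Xs_closed he x G hG z hzD _))
  let YY : (Fin n ⊕ Fin N) → (Fin n ⊕ Fin N) → E := fun p q =>
    if p = q then 0 else eps p q • Y {q, p}
  have hYY : ∀ p q, YY p q = - YY q p := by
    intro p q
    by_cases hpq : p = q
    · subst hpq; simp [YY]
    · simp only [YY, hpq, Ne.symm hpq, if_false]
      rw [he.anti p q hpq, neg_smul, Finset.pair_comm]
  have hzp : ∀ p, z {p} = ∑ q, x q • YY p q := by
    intro p
    nth_rewrite 1 [hY]
    rw [opD_apply, Finset.sum_apply]
    refine Finset.sum_congr rfl fun q _ => ?_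
    rw [Pi.smul_apply, opJ_apply]
    simp only [Finset.mem_singleton, YY, eq_comm (a := q)]
    split_ifs with hpq
    · rfl
    · simp [sgn]
  let g : (Fin n ⊕ Fin N) → Fin n → R := Sum.elim (fun i' i => if i' = i then 1 else 0) G
  have hg : ∀ q (e : E), (∑ j, g q j * x (Sum.inl j)) • e = x q • e := by
    intro q e
    rcases q with i | v
    · simp [g]
    · simp only [g, Sum.elim_inr]; exact (hG v e).symm
  refine ⟨fun i j => ∑ p, ∑ q, (g p i * g q j) • YY p q, fun i j => ?_, fun i => ?_⟩
  · beta_reduce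
    rw [Finset.sum_comm, ← Finset.sum_neg_distrib]
    refine Finset.sum_congr rfl fun p _ => ?_
    rw [← Finset.sum_neg_distrib]
    refine Finset.sum_congr rfl fun q _ => ?_
    rw [hYY q p, smul_neg, mul_comm]
  · have h1 : ∑ p, g p i • z {p} = h i := by
      rw [Fintype.sum_sum_type]
      have : ∀ v : Fin N, z {Sum.inr v} = 0 := fun v => hz0 _ (by simp)
      simp only [this, hzinl, g, Sum.elim_inl, smul_zero, Finset.sum_const_zero, add_zero]
      simp
    rw [← h1]
    simp only [hzp, Finset.smul_sum, smul_smul]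
    rw [Finset.sum_comm (s := (Finset.univ : Finset (Fin n)))]
    refine Finset.sum_congr rfl fun p _ => ?_
    rw [Finset.sum_comm]
    refine Finset.sum_congr rfl fun q _ => ?_
    rw [← Finset.sum_smul, mul_smul, ← hg q, ← mul_smul, Finset.mul_sum]
    congr 1
    exact Finset.sum_congr rfl fun j _ => by ring

end koszul2
end TNS

namespace TNS
variable {n N : ℕ}

def rr (a : Fin n →₀ ℕ) : Fin n → ℝ := fun i => (a i : ℝ)

lemma rr_add (a b : Fin n →₀ ℕ) : rr (a + b) = rr a + rr b := by funext i; simp [rr]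
lemma rr_zero : rr (0 : Fin n →₀ ℕ) = 0 := by funext i; simp [rr]
lemma rr_nsmul (k : ℕ) (a : Fin n →₀ ℕ) : rr (k • a) = (k : ℝ) • rr a := by funext i; simp [rr]
lemma rr_inj {a b : Fin n →₀ ℕ} (h : rr a = rr b) : a = b := by
  ext i
  have := congrFun h i
  simpa [rr] using this

lemma comb_single' (vec : Fin N → (Fin n →₀ ℕ)) (v : Fin N) (t : ℝ) :
    comb vec (Pi.single v t) = t • rr (vec v) := by
  rw [comb_single]; rfl

variable (vec : Fin N → (Fin n →₀ ℕ)) (w : Fin n → ℝ)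

open Classical in
noncomputable def kap (a : Fin n →₀ ℕ) : Fin N → ℝ :=
  if h : ∃ c, IsOpt vec c ∧ comb vec c = rr a then h.choose else 0

open Classical in
noncomputable def slo (a : Fin n →₀ ℕ) : Fin N → ℝ :=
  if h : ∃ β, IsSlope vec w (kap vec a) β then h.choose else 0

noncomputable def nuL (a : Fin n →₀ ℕ) : ℝ := ∑ v, kap vec a v

variable {vec w}

lemma Good.kap_spec (hg : Good vec) (a : Fin n →₀ ℕ) :
    IsOpt vec (kap vec a) ∧ comb vec (kap vec a) = rr a := by
  have h : ∃ c, IsOpt vec c ∧ comb vec c = rr a :=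
    hg.exists_opt' (rr a) (fun i => Nat.cast_nonneg _)
  rw [kap, dif_pos h]
  exact h.choose_spec

lemma Good.slo_spec (hg : Good vec) (hw : Gen vec w) (a : Fin n →₀ ℕ) :
    IsSlope vec w (kap vec a) (slo vec w a) := by
  have h : ∃ β, IsSlope vec w (kap vec a) β := exists_slope hg hw.pos (hg.kap_spec a).1
  rw [slo, dif_pos h]
  exact h.choose_spec

lemma Good.kap_eq (hg : Good vec) {a : Fin n →₀ ℕ} {c : Fin N → ℝ} (hc : IsOpt vec c)
    (h : comb vec c = rr a) : kap vec a = c :=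
  (hg.kap_spec a).1.unique hc ((hg.kap_spec a).2.trans h.symm)

lemma Good.slo_eq (hg : Good vec) (hw : Gen vec w) {a : Fin n →₀ ℕ} {c β : Fin N → ℝ}
    (hc : IsOpt vec c) (h : comb vec c = rr a) (hs : IsSlope vec w c β) : slo vec w a = β := by
  have := hg.slo_spec hw a
  rw [hg.kap_eq hc h] at this
  exact this.unique hs

lemma Good.kap_nonneg (hg : Good vec) (a : Fin n →₀ ℕ) (v : Fin N) : 0 ≤ kap vec a v :=
  (hg.kap_spec a).1.nonneg v

lemma Good.nuL_nonneg (hg : Good vec) (a : Fin n →₀ ℕ) : 0 ≤ nuL vec a :=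
  Finset.sum_nonneg fun v _ => hg.kap_nonneg a v

lemma Good.nuL_le (hg : Good vec) {a : Fin n →₀ ℕ} {c : Fin N → ℝ} (hc : ∀ v, 0 ≤ c v)
    (h : comb vec c = rr a) : nuL vec a ≤ ∑ v, c v :=
  sum_le_of_key_le ((hg.kap_spec a).1.min c hc (h.trans (hg.kap_spec a).2.symm))

lemma Good.nuL_add_le (hg : Good vec) (a b : Fin n →₀ ℕ) :
    nuL vec (a + b) ≤ nuL vec a + nuL vec b := by
  have := hg.nuL_le (a := a + b) (c := kap vec a + kap vec b)
    (fun v => add_nonneg (hg.kap_nonneg a v) (hg.kap_nonneg b v))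
    (by rw [map_add, (hg.kap_spec a).2, (hg.kap_spec b).2, rr_add])
  simpa [nuL, Finset.sum_add_distrib] using this

lemma Good.kap_zero (hg : Good vec) : kap vec 0 = 0 := by
  exact comb_pos_eq_zero hg.ne (hg.kap_nonneg 0) (by rw [(hg.kap_spec 0).2, rr_zero])

lemma Good.nuL_zero (hg : Good vec) : nuL vec 0 = 0 := by simp [nuL, hg.kap_zero]

lemma Good.eq_zero_of_nuL (hg : Good vec) {a : Fin n →₀ ℕ} (h : nuL vec a ≤ 0) : a = 0 := by
  have h0 : kap vec a = 0 := by
    have h1 : ∑ v, kap vec a v = 0 := le_antisymm h (hg.nuL_nonneg a)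
    rw [Finset.sum_eq_zero_iff_of_nonneg fun v _ => hg.kap_nonneg a v] at h1
    funext v; exact h1 v (Finset.mem_univ v)
  apply rr_inj
  rw [← (hg.kap_spec a).2, h0, map_zero, rr_zero]

lemma Good.nuL_nsmul (hg : Good vec) (k : ℕ) (a : Fin n →₀ ℕ) :
    nuL vec (k • a) = k * nuL vec a := by
  have ho := (hg.kap_spec a).1.of_support (d := (k : ℝ) • kap vec a)
    (fun v => mul_nonneg (Nat.cast_nonneg _) (hg.kap_nonneg a v)) (fun v hv => by simp [hv])
  have := hg.kap_eq (a := k • a) ho (by rw [map_smul, (hg.kap_spec a).2, rr_nsmul])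
  simp [nuL, this, Finset.mul_sum]

lemma Good.nuL_finite (hg : Good vec) (d : ℝ) : {a : Fin n →₀ ℕ | nuL vec a ≤ d}.Finite := by
  obtain ⟨M, hM⟩ := exists_nat_gt (d * ∑ v, ∑ i, (vec v i : ℝ))
  refine (Set.finite_Iic (Finsupp.equivFunOnFinite.symm (fun _ : Fin n => M))).subset ?_
  intro a ha i
  have ha : nuL vec a ≤ d := ha
  have h1 := congrFun (hg.kap_spec a).2 i
  rw [comb_apply] at h1
  have h2 : ∑ v, kap vec a v * (vec v i : ℝ) ≤ ∑ v, kap vec a v * ∑ u, ∑ i, (vec u i : ℝ) := by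
    refine Finset.sum_le_sum fun v _ => mul_le_mul_of_nonneg_left ?_ (hg.kap_nonneg a v)
    calc (vec v i : ℝ) ≤ ∑ i, (vec v i : ℝ) :=
          Finset.single_le_sum (f := fun i => (vec v i : ℝ)) (fun j _ => Nat.cast_nonneg _) (Finset.mem_univ i)
      _ ≤ _ := Finset.single_le_sum (f := fun u => ∑ i, (vec u i : ℝ))
          (fun u _ => Finset.sum_nonneg fun j _ => Nat.cast_nonneg _) (Finset.mem_univ v)
  rw [h1, ← Finset.sum_mul] at h2
  have h3 : (0 : ℝ) ≤ ∑ v, ∑ i, (vec v i : ℝ) :=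
    Finset.sum_nonneg fun u _ => Finset.sum_nonneg fun j _ => Nat.cast_nonneg _
  have h4 : (a i : ℝ) < M := by
    refine lt_of_le_of_lt (h2.trans ?_) hM
    exact mul_le_mul_of_nonneg_right ha h3
  have : a i < M := by exact_mod_cast h4
  simpa using this.le

/-- adding a multiple of a vector in the cone -/
lemma Good.kap_add (hg : Good vec) (hw : Gen vec w) (a : Fin n →₀ ℕ) (v : Fin N) (k : ℕ)
    (hv : slo vec w a v ≠ 0) :
    kap vec (a + k • vec v) = kap vec a + Pi.single v (k : ℝ) ∧
      slo vec w (a + k • vec v) = slo vec w a := by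
  have hs := hg.slo_spec hw a
  have ho := (hg.kap_spec a).1
  have hnn : ∀ u, kap vec a u ≤ (kap vec a + Pi.single v (k : ℝ) : Fin N → ℝ) u := by
    intro u
    by_cases h : u = v
    · subst h; simp
    · simp [h]
  obtain ⟨h1, h2⟩ := hs.transfer ho (c' := kap vec a + Pi.single v (k : ℝ))
    (fun u => (ho.nonneg u).trans (hnn u))
    (fun u hu => by
      have : u ≠ v := by rintro rfl; exact hv hu
      simp [this, hs.supp hw ho u hu])
    (fun u hu => lt_of_lt_of_le (hs.neg_imp u hu) (hnn u))
  have h3 : comb vec (kap vec a + Pi.single v (k : ℝ)) = rr (a + k • vec v) := by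
    rw [map_add, (hg.kap_spec a).2, comb_single', rr_add, rr_nsmul]
  exact ⟨hg.kap_eq h1 h3, hg.slo_eq hw h1 h3 h2⟩

lemma Good.exists_sub (hg : Good vec) (a : Fin n →₀ ℕ) (v : Fin N) (k : ℕ)
    (hv : (k : ℝ) ≤ kap vec a v) :
    ∃ b, a = b + k • vec v ∧ kap vec b = kap vec a - Pi.single v (k : ℝ) := by
  have ho := (hg.kap_spec a).1
  have hnn : ∀ u, 0 ≤ (kap vec a - Pi.single v (k : ℝ) : Fin N → ℝ) u := by
    intro u
    by_cases h : u = v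
    · subst h; simpa using hv
    · simpa [h] using ho.nonneg u
  have hle : k • vec v ≤ a := by
    intro i
    have h1 := comb_nonneg vec hnn i
    rw [map_sub, (hg.kap_spec a).2, comb_single'] at h1
    simp only [Pi.sub_apply, Pi.smul_apply, rr, smul_eq_mul, sub_nonneg] at h1
    have h2 : k * vec v i ≤ a i := by exact_mod_cast h1
    simpa using h2
  refine ⟨a - k • vec v, (tsub_add_cancel_of_le hle).symm, ?_⟩
  have h3 : IsOpt vec (kap vec a - Pi.single v (k : ℝ)) := by
    refine ho.of_support hnn fun u hu => ?_
    by_cases h : u = v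
    · subst h
      have h5 : (k : ℝ) = 0 := le_antisymm (by rw [hu] at hv; exact hv) (Nat.cast_nonneg _)
      simp [hu, h5]
    · simp [hu, h]
  refine hg.kap_eq h3 ?_
  have h4 : rr a = rr (a - k • vec v) + rr (k • vec v) := by
    rw [← rr_add, tsub_add_cancel_of_le hle]
  rw [map_sub, (hg.kap_spec a).2, comb_single', h4, rr_nsmul]
  simp

lemma Good.sub_slo (hg : Good vec) (hw : Gen vec w) {a b : Fin n →₀ ℕ} {v : Fin N} {k : ℕ}
    (hb : kap vec b = kap vec a - Pi.single v (k : ℝ))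
    (hn : slo vec w a v < 0 → (k : ℝ) < kap vec a v) (hv : slo vec w a v ≠ 0) :
    slo vec w b = slo vec w a := by
  have hs := hg.slo_spec hw a
  have ho := (hg.kap_spec a).1
  have hob := (hg.kap_spec b).1
  obtain ⟨h1, h2⟩ := hs.transfer ho (c' := kap vec b) hob.nonneg
    (fun u hu => by
      have : u ≠ v := by rintro rfl; exact hv hu
      simp [hb, this, hs.supp hw ho u hu])
    (fun u hu => by
      by_cases h : u = v
      · subst h; rw [hb]; simpa using hn hu
      · rw [hb]; simpa [h] using hs.neg_imp u hu)
  exact hg.slo_eq hw h1 (hg.kap_spec b).2 h2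

lemma Good.step (hg : Good vec) (hw : Gen vec w) (a : Fin n →₀ ℕ) (v : Fin N) (k : ℕ) (hk : 1 ≤ k) :
    key (kap vec (a + k • vec v)) < key (kap vec a + Pi.single v (k : ℝ)) ∨
      (kap vec (a + k • vec v) = kap vec a + Pi.single v (k : ℝ) ∧
      (key (slo vec w (a + k • vec v)) < key (slo vec w a) ∨ slo vec w a v ≠ 0)) := by
  have h := slope_step hw (hg.kap_spec a).1 (hg.slo_spec hw a) v (t := (k : ℝ)) (by positivity)
    (hg.kap_spec (a + k • vec v)).1 (hg.slo_spec hw (a + k • vec v)) (by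
      rw [(hg.kap_spec _).2, map_add, (hg.kap_spec a).2, comb_single', rr_add, rr_nsmul])
  tauto

lemma Good.kap_vec (hg : Good vec) (a : Fin n →₀ ℕ) (v : Fin N) (hv : 0 < kap vec a v) :
    kap vec (vec v) = Pi.single v 1 := by
  refine hg.kap_eq ((hg.kap_spec a).1.of_support (fun u => ?_) (fun u hu => ?_)) ?_
  · by_cases h : u = v
    · subst h; simp
    · simp [h]
  · have h : u ≠ v := by rintro rfl; exact hv.ne' hu
    simp [h]
  · rw [comb_single', one_smul]

lemma Good.nuL_vec (hg : Good vec) (a : Fin n →₀ ℕ) (v : Fin N) (hv : 0 < kap vec a v) :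
    nuL vec (vec v) = 1 := by
  simp [nuL, hg.kap_vec a v hv]

lemma Good.nuL_vec_le (hg : Good vec) (v : Fin N) : nuL vec (vec v) ≤ 1 := by
  have := hg.nuL_le (a := vec v) (c := Pi.single v 1) (fun u => by
    by_cases h : u = v
    · subst h; simp
    · simp [h]) (by rw [comb_single', one_smul])
  simpa using this

/-- `n` vectors at least in the support of a slope -/
lemma Good.slo_card (hg : Good vec) (hw : Gen vec w) (a : Fin n →₀ ℕ) :
    n ≤ (Finset.univ.filter fun v => slo vec w a v ≠ 0).card := by
  by_contra h
  exact hw.gen _ (not_le.1 h) (slo vec w a) (fun v hv => by simpa using hv)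
    (hg.slo_spec hw a).comb_eq

end TNS

namespace TNS
variable {n N : ℕ}

/-- the monoid with zero of lattice points with tight addition -/
def M0 (vec : Fin N → (Fin n →₀ ℕ)) (_hg : Good vec) : Type := Option (Fin n →₀ ℕ)

variable {vec : Fin N → (Fin n →₀ ℕ)} {hg : Good vec}

def Tight (vec : Fin N → (Fin n →₀ ℕ)) (a b : Fin n →₀ ℕ) : Prop :=
  nuL vec (a + b) = nuL vec a + nuL vec b

def M0.mk (hg : Good vec) (a : Fin n →₀ ℕ) : M0 vec hg := some a
def M0.z (hg : Good vec) : M0 vec hg := none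

lemma Tight.comm {a b : Fin n →₀ ℕ} : Tight vec a b ↔ Tight vec b a := by
  unfold Tight; rw [add_comm a b, add_comm (nuL vec a)]

open Classical in
noncomputable def M0.mulFun (x y : M0 vec hg) : M0 vec hg :=
  match x, y with
  | some a, some b => if Tight vec a b then some (a + b) else none
  | _, _ => none

noncomputable instance : Mul (M0 vec hg) := ⟨M0.mulFun⟩
instance : One (M0 vec hg) := ⟨M0.mk hg 0⟩

lemma M0.mk_mul_of {a b : Fin n →₀ ℕ} (h : Tight vec a b) :
    M0.mk hg a * M0.mk hg b = M0.mk hg (a + b) := by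
  classical
  exact if_pos h

lemma M0.mk_mul_not {a b : Fin n →₀ ℕ} (h : ¬ Tight vec a b) :
    M0.mk hg a * M0.mk hg b = M0.z hg := by
  classical
  exact if_neg h

lemma M0.z_mul (x : M0 vec hg) : M0.z hg * x = M0.z hg := rfl
lemma M0.mul_z (x : M0 vec hg) : x * M0.z hg = M0.z hg := by cases x <;> rfl

lemma M0.cases' (x : M0 vec hg) : x = M0.z hg ∨ ∃ a, x = M0.mk hg a := by
  cases x with
  | none => exact Or.inl rfl
  | some a => exact Or.inr ⟨a, rfl⟩

lemma M0.mk_inj {a b : Fin n →₀ ℕ} (h : M0.mk hg a = M0.mk hg b) : a = b := Option.some.inj h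

include hg in
lemma tight_assoc (a b c : Fin n →₀ ℕ) :
    (Tight vec a b ∧ Tight vec (a + b) c) ↔ (Tight vec b c ∧ Tight vec a (b + c)) := by
  unfold Tight
  have h1 := hg.nuL_add_le a b
  have h2 := hg.nuL_add_le b c
  have h3 := hg.nuL_add_le (a + b) c
  have h4 := hg.nuL_add_le a (b + c)
  rw [add_assoc] at h3 ⊢
  constructor
  · rintro ⟨h5, h6⟩
    constructor <;> linarith
  · rintro ⟨h5, h6⟩
    constructor <;> linarith

include hg in
lemma tight_zero (a : Fin n →₀ ℕ) : Tight vec a 0 := by simp [Tight, hg.nuL_zero]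

noncomputable instance : CommMonoid (M0 vec hg) where
  mul_assoc x y z := by
    rcases M0.cases' x with rfl | ⟨a, rfl⟩
    · simp only [M0.z_mul]
    rcases M0.cases' y with rfl | ⟨b, rfl⟩
    · simp only [M0.mul_z, M0.z_mul]
    rcases M0.cases' z with rfl | ⟨c, rfl⟩
    · simp only [M0.mul_z]
    have h := tight_assoc (hg := hg) a b c
    by_cases h1 : Tight vec a b
    · rw [M0.mk_mul_of h1]
      by_cases h2 : Tight vec (a + b) c
      · have h3 := h.1 ⟨h1, h2⟩
        rw [M0.mk_mul_of h2, M0.mk_mul_of h3.1, M0.mk_mul_of h3.2, add_assoc]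
      · rw [M0.mk_mul_not h2]
        by_cases h3 : Tight vec b c
        · have h4 : ¬ Tight vec a (b + c) := fun h4 => h2 (h.2 ⟨h3, h4⟩).2
          rw [M0.mk_mul_of h3, M0.mk_mul_not h4]
        · rw [M0.mk_mul_not h3, M0.mul_z]
    · rw [M0.mk_mul_not h1, M0.z_mul]
      by_cases h3 : Tight vec b c
      · have h4 : ¬ Tight vec a (b + c) := fun h4 => h1 (h.2 ⟨h3, h4⟩).1
        rw [M0.mk_mul_of h3, M0.mk_mul_not h4]
      · rw [M0.mk_mul_not h3, M0.mul_z]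
  one_mul x := by
    rcases M0.cases' x with rfl | ⟨a, rfl⟩
    · exact M0.mul_z _
    · change M0.mk hg 0 * M0.mk hg a = _
      rw [M0.mk_mul_of (Tight.comm.1 (tight_zero (hg := hg) a)), zero_add]
  mul_one x := by
    rcases M0.cases' x with rfl | ⟨a, rfl⟩
    · exact M0.z_mul _
    · change M0.mk hg a * M0.mk hg 0 = _
      rw [M0.mk_mul_of (tight_zero (hg := hg) a), add_zero]
  mul_comm x y := by
    rcases M0.cases' x with rfl | ⟨a, rfl⟩
    · rw [M0.z_mul, M0.mul_z]
    rcases M0.cases' y with rfl | ⟨b, rfl⟩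
    · rw [M0.z_mul, M0.mul_z]
    by_cases h1 : Tight vec a b
    · rw [M0.mk_mul_of h1, M0.mk_mul_of (Tight.comm.1 h1), add_comm]
    · rw [M0.mk_mul_not h1, M0.mk_mul_not (fun h => h1 (Tight.comm.1 h))]

lemma M0.fg : Monoid.FG (M0 vec hg) := by
  have hfin : ({M0.z hg} ∪ M0.mk hg '' {a | nuL vec a ≤ N + 1}).Finite :=
    (Set.finite_singleton _).union ((hg.nuL_finite _).image _)
  rw [Monoid.fg_iff]
  refine ⟨_, ?_, hfin⟩
  rw [eq_top_iff]
  rintro x -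
  rcases M0.cases' x with rfl | ⟨a, rfl⟩
  · exact Submonoid.subset_closure (Or.inl rfl)
  obtain ⟨m, hm⟩ : ∃ m : ℕ, nuL vec a ≤ N + 1 + m := by
    obtain ⟨m, hm⟩ := exists_nat_ge (nuL vec a - (N + 1))
    exact ⟨m, by linarith⟩
  induction m generalizing a with
  | zero => exact Submonoid.subset_closure (Or.inr ⟨a, by simpa using hm, rfl⟩)
  | succ m ih =>
    by_cases h : ∃ v, 1 ≤ kap vec a v
    · obtain ⟨v, hv⟩ := h
      obtain ⟨b, hab, hb⟩ := hg.exists_sub a v 1 (by simpa using hv)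
      have h1 := hg.nuL_vec a v (by linarith)
      have h2 : nuL vec b = nuL vec a - 1 := by simp [nuL, hb]
      rw [one_smul] at hab
      have ht : Tight vec b (vec v) := by
        unfold Tight
        rw [← hab, h1, h2]; ring
      rw [hab, ← M0.mk_mul_of ht]
      refine Submonoid.mul_mem _ (ih b ?_) (Submonoid.subset_closure (Or.inr ⟨vec v, ?_, rfl⟩))
      · rw [h2]; push_cast at hm; linarith
      · change nuL vec (vec v) ≤ _
        rw [h1]
        have : (0 : ℝ) ≤ N := Nat.cast_nonneg _
        linarith
    · push Not at h
      refine Submonoid.subset_closure (Or.inr ⟨a, ?_, rfl⟩)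
      have h3 : nuL vec a ≤ ∑ v : Fin N, (1 : ℝ) := Finset.sum_le_sum fun v _ => (h v).le
      simp at h3
      change nuL vec a ≤ _
      linarith

abbrev EE (n : ℕ) := (Fin n →₀ ℕ) →₀ ℂ

open Classical in
noncomputable def opT (vec : Fin N → (Fin n →₀ ℕ)) (b : Fin n →₀ ℕ) : EE n →ₗ[ℂ] EE n :=
  Finsupp.linearCombination ℂ (fun a => if Tight vec b a then Finsupp.single (b + a) (1 : ℂ) else 0)

lemma opT_of {a b : Fin n →₀ ℕ} (h : Tight vec b a) (c : ℂ) :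
    opT vec b (Finsupp.single a c) = Finsupp.single (b + a) c := by
  simp [opT, h]

lemma opT_not {a b : Fin n →₀ ℕ} (h : ¬ Tight vec b a) (c : ℂ) :
    opT vec b (Finsupp.single a c) = 0 := by
  simp [opT, h]

noncomputable def repM (hg : Good vec) : M0 vec hg →* Module.End ℂ (EE n) where
  toFun x := match x with
    | some a => opT vec a
    | none => 0
  map_one' := by
    change opT vec 0 = 1
    refine Finsupp.lhom_ext fun a c => ?_
    rw [opT_of (Tight.comm.1 (tight_zero (hg := hg) a)), zero_add]; rfl
  map_mul' x y := by
    rcases M0.cases' x with rfl | ⟨a, rfl⟩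
    · rw [M0.z_mul]; exact (zero_mul _).symm
    rcases M0.cases' y with rfl | ⟨b, rfl⟩
    · rw [M0.mul_z]; exact (mul_zero _).symm
    by_cases h1 : Tight vec a b
    · rw [M0.mk_mul_of h1]
      change opT vec (a + b) = opT vec a * opT vec b
      refine Finsupp.lhom_ext fun d c => ?_
      have h := tight_assoc (hg := hg) a b d
      rw [Module.End.mul_apply]
      by_cases h2 : Tight vec (a + b) d
      · have h3 := h.1 ⟨h1, h2⟩
        rw [opT_of h2, opT_of h3.1, opT_of h3.2, add_assoc]
      · rw [opT_not h2]
        by_cases h3 : Tight vec b d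
        · rw [opT_of h3, opT_not (fun h4 => h2 (h.2 ⟨h3, h4⟩).2)]
        · rw [opT_not h3, map_zero]
    · rw [M0.mk_mul_not h1]
      change 0 = opT vec a * opT vec b
      refine Finsupp.lhom_ext fun d c => ?_
      have h := tight_assoc (hg := hg) a b d
      rw [Module.End.mul_apply]
      by_cases h3 : Tight vec b d
      · rw [opT_of h3, opT_not (fun h4 => h1 (h.2 ⟨h3, h4⟩).1)]; rfl
      · rw [opT_not h3, map_zero]; rfl

abbrev RR (vec : Fin N → (Fin n →₀ ℕ)) (hg : Good vec) := MonoidAlgebra ℂ (M0 vec hg)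

noncomputable def repR (hg : Good vec) : RR vec hg →ₐ[ℂ] Module.End ℂ (EE n) :=
  MonoidAlgebra.lift ℂ _ _ (repM hg)

noncomputable instance instModRR : Module (RR vec hg) (EE n) :=
  Module.compHom (EE n) (repR hg).toRingHom

lemma rsmul_def (r : RR vec hg) (e : EE n) : r • e = repR hg r e := rfl

instance : IsScalarTower ℂ (RR vec hg) (EE n) :=
  ⟨fun c r e => by rw [rsmul_def, rsmul_def, map_smul]; rfl⟩

noncomputable def mon (hg : Good vec) (a : Fin n →₀ ℕ) : RR vec hg :=
  MonoidAlgebra.of ℂ _ (M0.mk hg a)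

noncomputable def monz (hg : Good vec) : RR vec hg := MonoidAlgebra.of ℂ _ (M0.z hg)

lemma mon_smul (a : Fin n →₀ ℕ) (e : EE n) : mon hg a • e = opT vec a e := by
  rw [rsmul_def, mon, repR, MonoidAlgebra.lift_of]; rfl

lemma monz_smul (e : EE n) : monz hg • e = 0 := by
  rw [rsmul_def, monz, repR, MonoidAlgebra.lift_of]; rfl

lemma mon_mul_of {a b : Fin n →₀ ℕ} (h : Tight vec a b) : mon hg a * mon hg b = mon hg (a + b) := by
  rw [mon, mon, ← map_mul, M0.mk_mul_of h]; rfl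

lemma mon_mul_not {a b : Fin n →₀ ℕ} (h : ¬ Tight vec a b) : mon hg a * mon hg b = monz hg := by
  rw [mon, mon, ← map_mul, M0.mk_mul_not h]; rfl

instance RR.finiteType : Algebra.FiniteType ℂ (RR vec hg) := by
  have : Monoid.FG (M0 vec hg) := M0.fg
  exact MonoidAlgebra.finiteType_of_fg
end TNS

namespace TNS

theorem filtered {C X : Type*} [AddCommGroup C] [Module ℂ C] (b : X → C) (D D' H : C →ₗ[ℂ] C)
    (rk cd : X → ℕ) (m : ℕ) (hDD : ∀ z, D (D z) = 0)
    (hid : ∀ x, m ≤ cd x → D' (H (b x)) + H (D' (b x)) = b x)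
    (hH : ∀ x, H (b x) ∈ Submodule.span ℂ (b '' {y | rk y ≤ rk x ∧ cd x + 1 ≤ cd y}))
    (hD : ∀ x, D (b x) - D' (b x) ∈
      Submodule.span ℂ (b '' {y | rk y < rk x ∧ cd x ≤ cd y + 1})) (z : C)
    (hz : z ∈ Submodule.span ℂ (b '' {y | m ≤ cd y})) (hDz : D z = 0) : ∃ y, z = D y := by
  let Fil : ℕ → ℕ → Submodule ℂ C := fun m r => Submodule.span ℂ (b '' {y | rk y < r ∧ m ≤ cd y})
  have hmono : ∀ m r r', r ≤ r' → Fil m r ≤ Fil m r' := fun m r r' h =>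
    Submodule.span_mono (Set.image_mono fun y hy => ⟨lt_of_lt_of_le hy.1 h, hy.2⟩)
  have hex : ∃ r, z ∈ Fil m r := by
    clear hDz
    induction hz using Submodule.span_induction with
    | mem x hx =>
      obtain ⟨y, hy, rfl⟩ := hx
      exact ⟨rk y + 1, Submodule.subset_span ⟨y, ⟨Nat.lt_succ_self _, hy⟩, rfl⟩⟩
    | zero => exact ⟨0, Submodule.zero_mem _⟩
    | add x y _ _ hx hy =>
      obtain ⟨r, hr⟩ := hx
      obtain ⟨s, hs⟩ := hy
      exact ⟨max r s, Submodule.add_mem _ (hmono _ _ _ (le_max_left _ _) hr)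
        (hmono _ _ _ (le_max_right _ _) hs)⟩
    | smul a x _ hx =>
      obtain ⟨r, hr⟩ := hx
      exact ⟨r, Submodule.smul_mem _ _ hr⟩
  have hHF : ∀ m r z, z ∈ Fil m r → H z ∈ Fil (m + 1) r := by
    intro m r z hz
    have : Fil m r ≤ (Fil (m + 1) r).comap H := by
      refine Submodule.span_le.2 ?_
      rintro _ ⟨y, hy, rfl⟩
      refine Submodule.span_mono (Set.image_mono ?_) (hH y)
      intro y' hy'
      exact ⟨lt_of_le_of_lt hy'.1 hy.1, by have := hy.2; have := hy'.2; omega⟩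
    exact this hz
  have hDF : ∀ m r z, z ∈ Fil (m + 1) (r + 1) → D z - D' z ∈ Fil m r := by
    intro m r z hz
    have : Fil (m + 1) (r + 1) ≤ (Fil m r).comap (D - D') := by
      refine Submodule.span_le.2 ?_
      rintro _ ⟨y, hy, rfl⟩
      refine Submodule.span_mono (Set.image_mono ?_) (hD y)
      intro y' hy'
      exact ⟨by have := hy.1; have := hy'.1; omega, by have := hy.2; have := hy'.2; omega⟩
    exact this hz
  have hDF' : ∀ m r z, z ∈ Fil m (r + 1) → D z - D' z ∈ Fil (m - 1) r := by
    intro m r z hz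
    rcases m with _ | m
    · have : Fil 0 (r + 1) ≤ (Fil 0 r).comap (D - D') := by
        refine Submodule.span_le.2 ?_
        rintro _ ⟨y, hy, rfl⟩
        refine Submodule.span_mono (Set.image_mono ?_) (hD y)
        intro y' hy'
        exact ⟨by have := hy.1; have := hy'.1; omega, Nat.zero_le _⟩
      exact this hz
    · exact hDF m r z hz
  have hidF : ∀ r z, z ∈ Fil m r → D' (H z) + H (D' z) = z := by
    intro r z hz
    have : Fil m r ≤ LinearMap.ker (D' ∘ₗ H + H ∘ₗ D' - LinearMap.id) := by
      refine Submodule.span_le.2 ?_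
      rintro _ ⟨y, hy, rfl⟩
      simpa [sub_eq_zero] using hid y hy.2
    simpa [sub_eq_zero] using this hz
  obtain ⟨r, hr⟩ := hex
  clear hz
  induction r generalizing z with
  | zero =>
    have : z = 0 := by simpa [Fil] using hr
    exact ⟨0, by simp [this]⟩
  | succ r ih =>
    have h1 := hidF _ z hr
    have h2 : z - D (H z) = - H (D z - D' z) - (D (H z) - D' (H z)) := by
      rw [hDz, zero_sub, map_neg, neg_neg]
      nth_rewrite 1 [← h1]
      abel
    have h3 : z - D (H z) ∈ Fil m r := by
      rw [h2]
      refine Submodule.sub_mem _ (Submodule.neg_mem _ ?_) (hDF _ _ _ (hHF _ _ _ hr))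
      refine Submodule.span_mono (Set.image_mono ?_) (hHF _ _ _ (hDF' _ _ _ hr))
      intro y hy
      exact ⟨hy.1, by have := hy.2; omega⟩
    obtain ⟨y, hy⟩ := ih (z - D (H z)) (by rw [map_sub, hDz, hDD, sub_zero]) h3
    exact ⟨y + H z, by rw [map_add, ← hy]; abel⟩

variable {n N : ℕ} {vec : Fin N → (Fin n →₀ ℕ)} {hg : Good vec} {w : Fin n → ℝ}

abbrev II (n N : ℕ) := Fin n ⊕ Fin N
abbrev CC (n N : ℕ) := Finset (II n N) → EE n
abbrev XX (n N : ℕ) := Finset (II n N) × (Fin n →₀ ℕ)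

noncomputable def bb (x : XX n N) : CC n N := Pi.single x.1 (Finsupp.single x.2 1)

noncomputable def mkL (g : XX n N → CC n N) : CC n N →ₗ[ℂ] CC n N :=
  ∑ S, (Finsupp.linearCombination ℂ (fun a => g (S, a))) ∘ₗ LinearMap.proj S

lemma mkL_bb (g : XX n N → CC n N) (x : XX n N) : mkL g (bb x) = g x := by
  obtain ⟨S, a⟩ := x
  simp only [mkL, LinearMap.sum_apply, LinearMap.comp_apply, LinearMap.proj_apply, bb]
  rw [Finset.sum_eq_single S]
  · simp
  · intro T _ hT; simp [hT]
  · simp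

lemma bb_span (m : ℕ) (z : CC n N) (hz : cardGE (EE n) m z) :
    z ∈ Submodule.span ℂ (bb '' {y : XX n N | m ≤ y.1.card}) := by
  have h1 : z = ∑ S, ∑ a ∈ (z S).support, z S a • bb (S, a) := by
    funext T
    rw [Finset.sum_apply, Finset.sum_eq_single T]
    · rw [Finset.sum_apply]
      conv_lhs => rw [← Finsupp.sum_single (z T)]
      rw [Finsupp.sum]
      exact Finset.sum_congr rfl fun a _ => by simp [bb]
    · intro S _ hS
      rw [Finset.sum_apply]
      exact Finset.sum_eq_zero fun a _ => by simp [bb, hS.symm]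
    · simp
  rw [h1]
  refine Submodule.sum_mem _ fun S _ => ?_
  by_cases hS : S.card < m
  · rw [hz S hS]; simp
  · exact Submodule.sum_mem _ fun a _ => Submodule.smul_mem _ _
      (Submodule.subset_span ⟨(S, a), not_lt.1 hS, rfl⟩)

variable (coef : Fin N → ℂ) (k : ℕ)

open Classical in
noncomputable def xF (hg : Good vec) (i : Fin n) : RR vec hg :=
  ∑ v ∈ Finset.univ.filter (fun v => nuL vec (vec v) = 1), ((vec v i : ℂ) * coef v) • mon hg (vec v)

noncomputable def xx (hg : Good vec) : II n N → RR vec hg :=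
  Sum.elim (xF coef hg) (fun v => mon hg (k • vec v))

def Sx (S : Finset (II n N)) : Finset (Fin N) := Finset.univ.filter fun v => Sum.inr v ∈ S
def SF (S : Finset (II n N)) : Finset (Fin n) := Finset.univ.filter fun v => Sum.inl v ∈ S

noncomputable def cW (vec : Fin N → (Fin n →₀ ℕ)) (x : XX n N) : Fin N → ℝ :=
  kap vec x.2 + fun v => if v ∈ Sx x.1 then (k : ℝ) else 0

abbrev Wt (N : ℕ) := ℝ ×ₗ ℕ ×ₗ Lex (Fin (N + 1) → ℝ) ×ₗ Lex (Fin (N + 1) → ℝ)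

noncomputable def wt (vec : Fin N → (Fin n →₀ ℕ)) (w : Fin n → ℝ) (x : XX n N) : Wt N :=
  toLex (∑ v, cW k vec x v + (SF x.1).card, toLex ((SF x.1).card,
    toLex (key (cW k vec x), key (slo vec w x.2))))

noncomputable def rkW (vec : Fin N → (Fin n →₀ ℕ)) (w : Fin n → ℝ) (x : XX n N) : ℕ :=
  {y : XX n N | wt k vec w y < wt k vec w x}.ncard

include hg in
lemma wt_finite (x : XX n N) : {y : XX n N | wt k vec w y < wt k vec w x}.Finite := by
  refine ((Set.finite_univ (α := Finset (II n N))).prod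
    (hg.nuL_finite (∑ v, cW k vec x v + (SF x.1).card))).subset ?_
  intro y hy
  refine ⟨Set.mem_univ _, ?_⟩
  have hy : wt k vec w y < wt k vec w x := hy
  have h1 : ∑ v, cW k vec y v + (SF y.1).card ≤ ∑ v, cW k vec x v + (SF x.1).card := by
    rw [wt, wt, Prod.Lex.toLex_lt_toLex] at hy
    rcases hy with h | h
    · exact h.le
    · exact h.1.le
  refine le_trans ?_ h1
  have h2 : nuL vec y.2 ≤ ∑ v, cW k vec y v := by
    refine Finset.sum_le_sum fun v _ => ?_
    simp only [cW, Pi.add_apply]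
    split_ifs <;> simp
  have : (0 : ℝ) ≤ (SF y.1).card := Nat.cast_nonneg _
  linarith

include hg in
lemma rkW_lt {x y : XX n N} (h : wt k vec w y < wt k vec w x) : rkW k vec w y < rkW k vec w x := by
  refine Set.ncard_lt_ncard ?_ (wt_finite (hg := hg) k x)
  refine ⟨fun z hz => lt_trans hz h, fun hsub => ?_⟩
  have h2 : wt k vec w y < wt k vec w y := hsub h
  exact lt_irrefl _ h2

lemma rkW_eq {x y : XX n N} (h : wt k vec w y = wt k vec w x) : rkW k vec w y = rkW k vec w x := by
  simp [rkW, h]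

end TNS

namespace TNS
variable {n N : ℕ} {vec : Fin N → (Fin n →₀ ℕ)} {hg : Good vec} {w : Fin n → ℝ}
variable (coef : Fin N → ℂ) (k : ℕ) (eps : II n N → II n N → ℤ)

open Classical in
noncomputable def gD' (vec : Fin N → (Fin n →₀ ℕ)) (w : Fin n → ℝ) (x : XX n N) : CC n N :=
  ∑ v, if Sum.inr v ∈ x.1 ∧ slo vec w x.2 v ≠ 0 then
    sgn eps (Sum.inr v) (x.1.erase (Sum.inr v)) • bb (x.1.erase (Sum.inr v), x.2 + k • vec v) else 0

def isU (c β : Fin N → ℝ) (v : Fin N) : Prop :=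
  β v ≠ 0 ∧ (k : ℝ) ≤ c v ∧ (β v < 0 → (k : ℝ) < c v)

open Classical in
noncomputable def pick (c β : Fin N → ℝ) : Option (Fin N) :=
  if h : ∃ v, isU k c β v then some h.choose else none

variable {k} in
lemma pick_spec {c β : Fin N → ℝ} {u : Fin N} (h : pick k c β = some u) : isU k c β u := by
  unfold pick at h
  split_ifs at h with h'
  have := h'.choose_spec
  rw [Option.some.inj h] at this
  exact this

variable {k} in
lemma pick_ex {c β : Fin N → ℝ} (h : ∃ v, isU k c β v) : ∃ u, pick k c β = some u := by
  unfold pick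
  rw [dif_pos h]
  exact ⟨_, rfl⟩

noncomputable def hPart (vec : Fin N → (Fin n →₀ ℕ)) (x : XX n N) (u : Fin N) : CC n N :=
  if Sum.inr u ∈ x.1 then 0 else
    sgn eps (Sum.inr u) x.1 • bb (insert (Sum.inr u) x.1, x.2 - k • vec u)

noncomputable def gH (vec : Fin N → (Fin n →₀ ℕ)) (w : Fin n → ℝ) (x : XX n N) : CC n N :=
  (pick k (cW k vec x) (slo vec w x.2)).elim 0 (hPart k eps vec x)

lemma mem_Sx {S : Finset (II n N)} {v : Fin N} : v ∈ Sx S ↔ Sum.inr v ∈ S := by simp [Sx]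

lemma SF_erase (S : Finset (II n N)) (v : Fin N) : SF (S.erase (Sum.inr v)) = SF S := by
  ext i; simp [SF]
lemma SF_insert (S : Finset (II n N)) (v : Fin N) : SF (insert (Sum.inr v) S) = SF S := by
  ext i; simp [SF]

lemma cW_erase (S : Finset (II n N)) (a : Fin n →₀ ℕ) (v : Fin N) (hv : Sum.inr v ∈ S)
    (h : kap vec (a + k • vec v) = kap vec a + Pi.single v (k : ℝ)) :
    cW k vec (S.erase (Sum.inr v), a + k • vec v) = cW k vec (S, a) := by
  funext u
  simp only [cW, Pi.add_apply, h, mem_Sx, Finset.mem_erase]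
  by_cases huv : u = v
  · subst huv; simp [hv]
  · simp [huv]

include hg in
lemma move_erase (hw : Gen vec w) (S : Finset (II n N)) (a : Fin n →₀ ℕ) (v : Fin N)
    (hv : Sum.inr v ∈ S) (hs : slo vec w a v ≠ 0) :
    cW k vec (S.erase (Sum.inr v), a + k • vec v) = cW k vec (S, a) ∧
      slo vec w (a + k • vec v) = slo vec w a := by
  obtain ⟨h1, h2⟩ := hg.kap_add hw a v k hs
  exact ⟨cW_erase k S a v hv h1, h2⟩

include hg in
lemma move_insert (hw : Gen vec w) (S : Finset (II n N)) (a : Fin n →₀ ℕ) (u : Fin N)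
    (hu : Sum.inr u ∉ S) (hU : isU k (cW k vec (S, a)) (slo vec w a) u) :
    a = (a - k • vec u) + k • vec u ∧
    cW k vec (insert (Sum.inr u) S, a - k • vec u) = cW k vec (S, a) ∧
      slo vec w (a - k • vec u) = slo vec w a := by
  obtain ⟨h1, h2, h3⟩ := hU
  have hc : cW k vec (S, a) u = kap vec a u := by simp [cW, mem_Sx, hu]
  rw [hc] at h2 h3
  obtain ⟨b, hb, hkb⟩ := hg.exists_sub a u k h2
  have hab : a - k • vec u = b := by rw [hb, add_tsub_cancel_right]
  rw [hab]
  refine ⟨hb, ?_, hg.sub_slo hw hkb h3 h1⟩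
  funext v
  simp only [cW, Pi.add_apply, hkb, mem_Sx, Finset.mem_insert]
  by_cases huv : v = u
  · subst huv; simp [hu]
  · simp [huv]

lemma wt_congr {x y : XX n N} (h1 : cW k vec y = cW k vec x) (h2 : slo vec w y.2 = slo vec w x.2)
    (h3 : SF y.1 = SF x.1) : wt k vec w y = wt k vec w x := by
  simp only [wt, h1, h2, h3]

include hg in
lemma gH_mem (hw : Gen vec w) (x : XX n N) : gH k eps vec w x ∈
    Submodule.span ℂ (bb '' {y | rkW k vec w y ≤ rkW k vec w x ∧ x.1.card + 1 ≤ y.1.card}) := by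
  obtain ⟨S, a⟩ := x
  unfold gH
  cases hp : pick k (cW k vec (S, a)) (slo vec w a) with
  | none => exact Submodule.zero_mem _
  | some u =>
    simp only [Option.elim_some, hPart]
    split_ifs with hu
    · exact Submodule.zero_mem _
    · obtain ⟨h1, h2, h3⟩ := move_insert (hg := hg) k hw S a u hu (pick_spec hp)
      rw [← Int.cast_smul_eq_zsmul ℂ]
      refine Submodule.smul_mem _ _ (Submodule.subset_span ⟨_, ⟨?_, ?_⟩, rfl⟩)
      · exact (rkW_eq k (wt_congr k h2 h3 (SF_insert S u))).le
      · rw [Finset.card_insert_of_notMem hu]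

include hg in
lemma ex_U (hw : Gen vec w) (S : Finset (II n N)) (a : Fin n →₀ ℕ) (hS : N + 1 ≤ S.card) :
    ∃ v, isU k (cW k vec (S, a)) (slo vec w a) v := by
  classical
  have hc := hg.slo_card hw a
  have h1 : S.card ≤ n + (Sx S).card := by
    have : S ⊆ (Finset.univ : Finset (Fin n)).image Sum.inl ∪ (Sx S).image Sum.inr := by
      intro p hp
      rcases p with i | v
      · simp
      · simp [mem_Sx, hp]
    refine (Finset.card_le_card this).trans ((Finset.card_union_le _ _).trans ?_)
    refine add_le_add (Finset.card_image_le.trans (by simp)) Finset.card_image_le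
  have h2 : (Sx S ∩ Finset.univ.filter fun v => slo vec w a v ≠ 0).Nonempty := by
    by_contra hcon
    rw [Finset.not_nonempty_iff_eq_empty, ← Finset.disjoint_iff_inter_eq_empty] at hcon
    have h3 := Finset.card_union_of_disjoint hcon
    have h4 := Finset.card_le_univ (Sx S ∪ Finset.univ.filter fun v => slo vec w a v ≠ 0)
    rw [Fintype.card_fin] at h4
    omega
  obtain ⟨v, hv⟩ := h2
  rw [Finset.mem_inter, Finset.mem_filter] at hv
  refine ⟨v, hv.2.2, ?_, fun hneg => ?_⟩
  · simp only [cW, Pi.add_apply, hv.1, if_true]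
    linarith [hg.kap_nonneg a v]
  · simp only [cW, Pi.add_apply, hv.1, if_true]
    linarith [(hg.slo_spec hw a).neg_imp v hneg]

include hg in
lemma homotopy (he : IsSg eps) (hw : Gen vec w) (x : XX n N) (hx : N + 1 ≤ x.1.card) :
    mkL (gD' k eps vec w) (mkL (gH k eps vec w) (bb x)) +
      mkL (gH k eps vec w) (mkL (gD' k eps vec w) (bb x)) = bb x := by
  classical
  obtain ⟨S, a⟩ := x
  rw [mkL_bb, mkL_bb]
  obtain ⟨u, hp⟩ := pick_ex (ex_U (hg := hg) k hw S a hx)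
  have hU := pick_spec hp
  have hHv : ∀ v, Sum.inr v ∈ S → slo vec w a v ≠ 0 →
      mkL (gH k eps vec w) (bb (S.erase (Sum.inr v), a + k • vec v)) =
        hPart k eps vec (S.erase (Sum.inr v), a + k • vec v) u := by
    intro v hv hs
    obtain ⟨h1, h2⟩ := move_erase (hg := hg) k hw S a v hv hs
    rw [mkL_bb, gH, h1, h2, hp]; rfl
  have hHD : mkL (gH k eps vec w) (gD' k eps vec w (S, a)) =
      ∑ v, if Sum.inr v ∈ S ∧ slo vec w a v ≠ 0 then
        sgn eps (Sum.inr v) (S.erase (Sum.inr v)) •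
          hPart k eps vec (S.erase (Sum.inr v), a + k • vec v) u else 0 := by
    rw [gD', map_sum]
    refine Finset.sum_congr rfl fun v _ => ?_
    dsimp only
    by_cases h : Sum.inr v ∈ S ∧ slo vec w a v ≠ 0
    · rw [if_pos h, if_pos h, map_zsmul, hHv v h.1 h.2]
    · rw [if_neg h, if_neg h, map_zero]
  rw [hHD]
  have hH : gH k eps vec w (S, a) = hPart k eps vec (S, a) u := by
    rw [gH, hp]; rfl
  rw [hH]
  by_cases hu : Sum.inr u ∈ S
  · rw [hPart, if_pos hu, map_zero, zero_add, Finset.sum_eq_single u]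
    · rw [if_pos ⟨hu, hU.1⟩, hPart, if_neg (by simp), smul_smul, he.sgn_sq, one_smul]
      rw [Finset.insert_erase hu, add_tsub_cancel_right]
    · intro v _ hv
      split_ifs with h
      · rw [hPart, if_pos, smul_zero]
        simp [hu, hv.symm]
      · rfl
    · simp
  · obtain ⟨h1, h2, h3⟩ := move_insert (hg := hg) k hw S a u hu hU
    rw [hPart, if_neg hu, map_zsmul, mkL_bb, gD', Finset.smul_sum, ← Finset.sum_add_distrib]
    dsimp only
    rw [Finset.sum_eq_single u]
    · rw [if_pos ⟨Finset.mem_insert_self _ _, by rw [h3]; exact hU.1⟩, if_neg (fun h => hu h.1),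
        add_zero, Finset.erase_insert hu, smul_smul, he.sgn_sq, one_smul, ← h1]
    · intro v _ hv
      have hvu : (Sum.inr v : II n N) ≠ Sum.inr u := by simpa using hv
      by_cases h : Sum.inr v ∈ S ∧ slo vec w a v ≠ 0
      · rw [if_pos ⟨Finset.mem_insert_of_mem h.1, by rw [h3]; exact h.2⟩, if_pos h, hPart,
          if_neg (by simp [hu])]
        dsimp only
        obtain ⟨T, hT, rfl⟩ : ∃ T, Sum.inr v ∉ T ∧ S = insert (Sum.inr v) T :=
          ⟨S.erase (Sum.inr v), by simp, (Finset.insert_erase h.1).symm⟩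
        have huT : Sum.inr u ∉ T := fun h => hu (Finset.mem_insert_of_mem h)
        have h4 : (insert (Sum.inr u) (insert (Sum.inr v) T)).erase (Sum.inr v) =
            insert (Sum.inr u) T := by
          rw [Finset.insert_comm, Finset.erase_insert]
          simp [hT, hv]
        have h5 : a + k • vec v - k • vec u = a - k • vec u + k • vec v := by
          conv_lhs => rw [h1, add_right_comm, add_tsub_cancel_right]
        rw [h4, h5, Finset.erase_insert hT, smul_smul, smul_smul]
        have hco : sgn eps (Sum.inr u) (insert (Sum.inr v) T) *
            sgn eps (Sum.inr v) (insert (Sum.inr u) T) =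
            - (sgn eps (Sum.inr v) T * sgn eps (Sum.inr u) T) := by
          rw [sgn_insert _ _ _ _ huT, sgn_insert _ _ _ _ hT, he.anti _ _ hvu]
          linear_combination (-(sgn eps (Sum.inr u) T) * sgn eps (Sum.inr v) T) *
            he.sq (Sum.inr u) (Sum.inr v)
        rw [hco, neg_smul]
        convert neg_add_cancel _
      · rw [if_neg h, if_neg, smul_zero, add_zero]
        rw [h3]
        intro h'
        rcases Finset.mem_insert.1 h'.1 with h6 | h6
        · exact hvu h6
        · exact h ⟨h6, h'.2⟩
    · simp

lemma opJ_single (p : II n N) (S : Finset (II n N)) (e : EE n) :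
    opJ (RR vec hg) (EE n) eps p (Pi.single S e) =
      if p ∈ S then sgn eps p (S.erase p) • Pi.single (S.erase p) e else 0 := by
  funext T
  rw [opJ_apply]
  by_cases hp : p ∈ S
  · rw [if_pos hp]
    by_cases hT : T = S.erase p
    · subst hT
      simp [Finset.insert_erase hp]
    · rw [Pi.smul_apply, Pi.single_eq_of_ne hT, smul_zero]
      split_ifs with h
      · rfl
      · rw [Pi.single_eq_of_ne, smul_zero]
        rintro rfl
        exact hT (Finset.erase_insert h).symm
  · rw [if_neg hp]
    split_ifs with h
    · rfl
    · rw [Pi.single_eq_of_ne, smul_zero]; rfl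
      rintro rfl
      exact hp (Finset.mem_insert_self _ _)

lemma sum_cW (x : XX n N) : ∑ v, cW k vec x v = nuL vec x.2 + k * (Sx x.1).card := by
  simp only [cW, Pi.add_apply, Finset.sum_add_distrib, nuL]
  rw [Finset.sum_ite_mem, Finset.univ_inter, Finset.sum_const, nsmul_eq_mul, mul_comm]

lemma rsmul_single (r : RR vec hg) (S : Finset (II n N)) (e : EE n) :
    r • (Pi.single S e : CC n N) = Pi.single S (r • e) := by
  funext T
  by_cases h : T = S
  · subst h; simp
  · rw [Pi.smul_apply, Pi.single_eq_of_ne h, Pi.single_eq_of_ne h, smul_zero]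

lemma rsmul_zero (r : RR vec hg) : r • (0 : Finset (II n N) → EE n) = 0 := by
  funext T
  exact smul_zero (A := EE n) r

lemma lower_F (S : Finset (II n N)) (a : Fin n →₀ ℕ) (i : Fin n) (hi : Sum.inl i ∈ S) (v : Fin N)
    (hv : nuL vec (vec v) = 1) (ht : Tight vec (vec v) a) :
    wt k vec w (S.erase (Sum.inl i), vec v + a) < wt k vec w (S, a) := by
  have h1 : Sx (S.erase (Sum.inl i)) = Sx S := by ext u; simp [Sx]
  have h2 : (SF (S.erase (Sum.inl i))).card + 1 = (SF S).card := by
    have h3 : SF (S.erase (Sum.inl i)) = (SF S).erase i := by ext u; simp [SF]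
    rw [h3, Finset.card_erase_add_one]
    simp [SF, hi]
  rw [wt, wt, Prod.Lex.toLex_lt_toLex]
  right
  refine ⟨?_, ?_⟩
  · simp only [sum_cW, h1]
    rw [show nuL vec (vec v + a) = nuL vec (vec v) + nuL vec a from ht, hv, ← h2]
    push_cast; ring
  · dsimp only
    rw [Prod.Lex.toLex_lt_toLex]
    left
    dsimp only
    omega

include hg in
lemma lower_x (hw : Gen vec w) (hk : 1 ≤ k) (S : Finset (II n N)) (a : Fin n →₀ ℕ) (v : Fin N)
    (hv : Sum.inr v ∈ S) (ht : Tight vec (k • vec v) a) (hs : slo vec w a v = 0) :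
    wt k vec w (S.erase (Sum.inr v), a + k • vec v) < wt k vec w (S, a) := by
  have h3 : cW k vec (S, a) = kap vec a + Pi.single v (k : ℝ) +
      fun u => if u ∈ Sx (S.erase (Sum.inr v)) then (k : ℝ) else 0 := by
    funext u
    simp only [cW, Pi.add_apply, mem_Sx, Finset.mem_erase]
    by_cases huv : u = v
    · subst huv; simp [hv]
    · simp [huv]
  have h4 : cW k vec (S.erase (Sum.inr v), a + k • vec v) = kap vec (a + k • vec v) +
      fun u => if u ∈ Sx (S.erase (Sum.inr v)) then (k : ℝ) else 0 := rfl
  have h6 := hg.step hw a v k hk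
  have hkey : key (cW k vec (S.erase (Sum.inr v), a + k • vec v)) < key (cW k vec (S, a)) ∨
      (key (cW k vec (S.erase (Sum.inr v), a + k • vec v)) = key (cW k vec (S, a)) ∧
        key (slo vec w (a + k • vec v)) < key (slo vec w a)) := by
    rw [h3, h4, key_add, key_add _ (fun u => if u ∈ Sx (S.erase (Sum.inr v)) then (k : ℝ) else 0)]
    rcases h6 with h | ⟨h, h' | h'⟩
    · left; exact add_lt_add_left h _
    · right; exact ⟨by rw [h], h'⟩
    · exact absurd hs h'
  have h5 : ∑ u, cW k vec (S.erase (Sum.inr v), a + k • vec v) u ≤ ∑ u, cW k vec (S, a) u := by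
    apply sum_le_of_key_le
    rcases hkey with h | h
    · exact h.le
    · exact h.1.le
  rw [wt, wt, Prod.Lex.toLex_lt_toLex]
  dsimp only
  rw [SF_erase]
  rcases h5.lt_or_eq with h | h
  · left; linarith
  · right
    refine ⟨by rw [h], ?_⟩
    rw [Prod.Lex.toLex_lt_toLex]
    right
    refine ⟨rfl, ?_⟩
    rw [Prod.Lex.toLex_lt_toLex]
    exact hkey

lemma diff_mem (hw : Gen vec w) (hk : 1 ≤ k) (x : XX n N) :
    opD (EE n) eps (xx coef k hg) (bb x) - mkL (gD' k eps vec w) (bb x) ∈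
      Submodule.span ℂ (bb '' {y | rkW k vec w y < rkW k vec w x ∧ x.1.card ≤ y.1.card + 1}) := by
  classical
  obtain ⟨S, a⟩ := x
  rw [mkL_bb, opD_apply, Fintype.sum_sum_type, add_sub_assoc, gD', ← Finset.sum_sub_distrib]
  refine Submodule.add_mem _ (Submodule.sum_mem _ fun i _ => ?_) (Submodule.sum_mem _ fun v _ => ?_)
  · rw [bb, opJ_single]
    split_ifs with hi
    · rw [smul_comm, ← Int.cast_smul_eq_zsmul ℂ]
      refine Submodule.smul_mem _ _ ?_
      rw [rsmul_single]
      simp only [xx, Sum.elim_inl, xF, Finset.sum_smul, Finset.mem_filter, Finset.mem_univ, true_and,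
        smul_assoc, mon_smul]
      have hsum : ∀ (s : Finset (Fin N)) (g : Fin N → EE n) ,
          (Pi.single (S.erase (Sum.inl i)) (∑ v ∈ s, g v) : CC n N) =
            ∑ v ∈ s, Pi.single (S.erase (Sum.inl i)) (g v) := fun s g =>
        map_sum (LinearMap.single ℂ (fun _ : Finset (II n N) => EE n) (S.erase (Sum.inl i))) g s
      rw [hsum]
      refine Submodule.sum_mem _ fun v hv => ?_
      rw [Pi.single_smul]
      refine Submodule.smul_mem _ _ ?_
      by_cases ht : Tight vec (vec v) a
      · rw [opT_of ht]
        refine Submodule.subset_span ⟨(S.erase (Sum.inl i), vec v + a), ⟨?_, ?_⟩, rfl⟩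
        · exact rkW_lt (hg := hg) k (lower_F k S a i hi v (by simpa using hv) ht)
        · exact (Finset.card_erase_add_one hi).ge
      · rw [opT_not ht, Pi.single_zero]; exact Submodule.zero_mem _
    · rw [rsmul_zero]; exact Submodule.zero_mem _
  · rw [bb, opJ_single]
    by_cases hv : Sum.inr v ∈ S
    · rw [if_pos hv, smul_comm, rsmul_single]
      simp only [xx, Sum.elim_inr, mon_smul]
      by_cases hs : slo vec w a v = 0
      · rw [if_neg (by simp [hs]), sub_zero, ← Int.cast_smul_eq_zsmul ℂ]
        refine Submodule.smul_mem _ _ ?_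
        by_cases ht : Tight vec (k • vec v) a
        · rw [opT_of ht, add_comm]
          refine Submodule.subset_span ⟨(S.erase (Sum.inr v), a + k • vec v), ⟨?_, ?_⟩, rfl⟩
          · exact rkW_lt (hg := hg) k (lower_x (hg := hg) k hw hk S a v hv ht hs)
          · exact (Finset.card_erase_add_one hv).ge
        · rw [opT_not ht, Pi.single_zero]; exact Submodule.zero_mem _
      · have ht : Tight vec (k • vec v) a := by
          have h1 := (hg.kap_add hw a v k hs)
          have h2 := hg.nuL_add_le (k • vec v) a
          have h3 := hg.nuL_nsmul k (vec v)
          have h4 := hg.nuL_vec_le v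
          have h5 : nuL vec (k • vec v + a) = nuL vec a + k := by
            rw [add_comm, nuL, h1.1]
            simp [Finset.sum_add_distrib, nuL]
          have h6 : (k : ℝ) * nuL vec (vec v) ≤ k * 1 :=
            mul_le_mul_of_nonneg_left h4 (Nat.cast_nonneg _)
          unfold Tight
          linarith
        rw [if_pos ⟨hv, hs⟩, opT_of ht, add_comm (k • vec v)]
        simp only [bb, sub_self]; exact Submodule.zero_mem _
    · rw [if_neg hv, if_neg (fun h => hv h.1), sub_zero]
      rw [rsmul_zero]; exact Submodule.zero_mem _

theorem exact_high (he : IsSg eps) (hw : Gen vec w) (hk : 1 ≤ k) (Z : CC n N)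
    (hZ : cardGE (EE n) (N + 1) Z) (hD : opD (EE n) eps (xx coef k hg) Z = 0) :
    ∃ Y, Z = opD (EE n) eps (xx coef k hg) Y := by
  have h2 : ∀ e : EE n, e + e = 0 → e = 0 := by
    intro e h
    ext a
    have := DFunLike.congr_fun h a
    simp at this
    simpa using this
  exact filtered bb ((opD (EE n) eps (xx coef k hg)).restrictScalars ℂ) (mkL (gD' k eps vec w))
    (mkL (gH k eps vec w)) (rkW k vec w) (fun x => x.1.card) (N + 1)
    (fun z => DD he _ z h2)
    (fun x hx => homotopy (hg := hg) k eps he hw x hx)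
    (fun x => by rw [mkL_bb]; exact gH_mem (hg := hg) k eps hw x)
    (fun x => diff_mem coef k eps hw hk x) Z (bb_span _ Z hZ) hD

end TNS

namespace TNS

theorem farkas {ι E : Type*} [AddCommGroup E] [Module ℝ E] (s : Finset ι) :
    ∀ (g : ι → E) (b : E), (∃ c : ι → ℝ, (∀ i, 0 ≤ c i) ∧ ∑ i ∈ s, c i • g i = b) ∨
      ∃ l : E →ₗ[ℝ] ℝ, (∀ i ∈ s, 0 ≤ l (g i)) ∧ l b < 0 := by
  classical
  induction s using Finset.induction_on with
  | empty =>
    intro g b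
    by_cases hb : b = 0
    · left; exact ⟨0, fun _ => le_rfl, by simp [hb]⟩
    · right
      have : ∃ l : Module.Dual ℝ E, l b ≠ 0 := by
        by_contra h
        push Not at h
        exact hb ((Module.forall_dual_apply_eq_zero_iff ℝ b).1 h)
      obtain ⟨l, hl⟩ := this
      rcases lt_or_gt_of_ne hl with h | h
      · exact ⟨l, by simp, h⟩
      · exact ⟨-l, by simp, by simpa using h⟩
  | insert i0 s hi0 ih =>
    intro g b
    rcases ih g b with ⟨c, hc, hcb⟩ | ⟨l, hl, hlb⟩
    · left
      refine ⟨fun i => if i = i0 then 0 else c i, fun i => by dsimp only; split_ifs; exacts [le_rfl, hc i], ?_⟩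
      rw [Finset.sum_insert hi0]
      simp only [if_true, zero_smul, zero_add]
      rw [← hcb]
      refine Finset.sum_congr rfl fun i hi => ?_
      rw [if_neg (by rintro rfl; exact hi0 hi)]
    · by_cases h0 : 0 ≤ l (g i0)
      · right
        refine ⟨l, fun i hi => ?_, hlb⟩
        rcases Finset.mem_insert.1 hi with rfl | hi
        · exact h0
        · exact hl i hi
      · push Not at h0
        let pr : E →ₗ[ℝ] E := LinearMap.id - (LinearMap.smulRight l ((l (g i0))⁻¹ • g i0))
        have hpr : ∀ x, pr x = x - (l x / l (g i0)) • g i0 := fun x => by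
          simp [pr, smul_smul, div_eq_mul_inv]
        rcases ih (fun i => pr (g i)) (pr b) with ⟨c, hc, hcb⟩ | ⟨l', hl', hlb'⟩
        · left
          refine ⟨fun i => if i = i0 then l b / l (g i0) - ∑ j ∈ s, c j * (l (g j) / l (g i0)) else c i,
            fun i => ?_, ?_⟩
          · dsimp only
            split_ifs
            · have h1 : 0 ≤ l b / l (g i0) := div_nonneg_of_nonpos hlb.le h0.le
              have h2 : ∑ j ∈ s, c j * (l (g j) / l (g i0)) ≤ 0 :=
                Finset.sum_nonpos fun j hj => mul_nonpos_of_nonneg_of_nonpos (hc j)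
                  (div_nonpos_of_nonneg_of_nonpos (hl j hj) h0.le)
              linarith
            · exact hc i
          · rw [Finset.sum_insert hi0]
            simp only [if_true]
            have h3 : ∑ i ∈ s, (if i = i0 then l b / l (g i0) - ∑ j ∈ s, c j * (l (g j) / l (g i0))
                else c i) • g i = ∑ i ∈ s, c i • g i := by
              refine Finset.sum_congr rfl fun i hi => ?_
              rw [if_neg (by rintro rfl; exact hi0 hi)]
            rw [h3]
            simp only [hpr, smul_sub, Finset.sum_sub_distrib, smul_smul, ← Finset.sum_smul] at hcb
            rw [sub_smul, sub_eq_iff_eq_add.1 hcb]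
            abel
        · right
          refine ⟨l'.comp pr, fun i hi => ?_, hlb'⟩
          rcases Finset.mem_insert.1 hi with rfl | hi
          · have : pr (g i) = 0 := by
              rw [hpr, div_self h0.ne, one_smul, sub_self]
            simp [this]
          · exact hl' i hi

section
variable {n N : ℕ} {vec : Fin N → (Fin n →₀ ℕ)} {hg : Good vec}

structure IsMu (vec : Fin N → (Fin n →₀ ℕ)) (mu : (Fin n →₀ ℕ) → ℂ) : Prop where
  zero : mu 0 = 1
  tight : ∀ a b, Tight vec a b → mu (a + b) = mu a * mu b
  not : ∀ a b, ¬ Tight vec a b → mu a * mu b = 0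

variable {mu : (Fin n →₀ ℕ) → ℂ}

lemma IsMu.tight_of (h : IsMu vec mu) {a b : Fin n →₀ ℕ} (ha : mu a ≠ 0) (hb : mu b ≠ 0) :
    Tight vec a b := by
  by_contra ht
  exact mul_ne_zero ha hb (h.not a b ht)

lemma IsMu.nsmul (h : IsMu vec mu) {a : Fin n →₀ ℕ} (ha : mu a ≠ 0) (k : ℕ) :
    mu (k • a) = mu a ^ k := by
  induction k with
  | zero => simp [h.zero]
  | succ k ih =>
    have : mu (k • a) ≠ 0 := by rw [ih]; exact pow_ne_zero _ ha
    rw [succ_nsmul, h.tight _ _ (h.tight_of this ha), ih, pow_succ]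

include hg in
lemma IsMu.sum (h : IsMu vec mu) (s : Finset (Fin N)) (hs : ∀ v ∈ s, mu (vec v) ≠ 0) (m : Fin N → ℕ) :
    mu (∑ v ∈ s, m v • vec v) = ∏ v ∈ s, mu (vec v) ^ m v ∧
      nuL vec (∑ v ∈ s, m v • vec v) = ∑ v ∈ s, m v * nuL vec (vec v) := by
  classical
  induction s using Finset.induction_on with
  | empty => simp [h.zero, hg.nuL_zero]
  | insert v s hv ih =>
    have ih := ih fun u hu => hs u (Finset.mem_insert_of_mem hu)
    have h1 : mu (m v • vec v) = mu (vec v) ^ m v := h.nsmul (hs v (Finset.mem_insert_self _ _)) _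
    have h2 : Tight vec (m v • vec v) (∑ v ∈ s, m v • vec v) := by
      apply h.tight_of
      · rw [h1]; exact pow_ne_zero _ (hs v (Finset.mem_insert_self _ _))
      · rw [ih.1]
        exact Finset.prod_ne_zero_iff.2 fun u hu => pow_ne_zero _ (hs u (Finset.mem_insert_of_mem hu))
    rw [Finset.sum_insert hv, Finset.prod_insert hv, Finset.sum_insert hv, h.tight _ _ h2, h1, ih.1]
    refine ⟨rfl, ?_⟩
    rw [show nuL vec (m v • vec v + ∑ v ∈ s, m v • vec v) = _ from h2, ih.2, hg.nuL_nsmul]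

include hg in
lemma IsMu.exists_face (h : IsMu vec mu) {v0 : Fin N} (h0 : mu (vec v0) ≠ 0) :
    ∃ v, mu (vec v) ≠ 0 ∧ nuL vec (vec v) = 1 := by
  have hpos : 0 < nuL vec (vec v0) := by
    by_contra hc
    exact hg.ne v0 (hg.eq_zero_of_nuL (not_lt.1 hc))
  obtain ⟨M, hM⟩ := exists_nat_gt (N / nuL vec (vec v0))
  rw [div_lt_iff₀ hpos, ← hg.nuL_nsmul] at hM
  have : ∃ v, 1 ≤ kap vec (M • vec v0) v := by
    by_contra hc
    push Not at hc
    have h3 : nuL vec (M • vec v0) ≤ ∑ v : Fin N, (1 : ℝ) := Finset.sum_le_sum fun v _ => (hc v).le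
    simp at h3
    linarith
  obtain ⟨v, hv⟩ := this
  obtain ⟨b, hab, hb⟩ := hg.exists_sub _ v 1 (by simpa using hv)
  have h1 := hg.nuL_vec _ v (by linarith)
  have h2 : nuL vec b = nuL vec (M • vec v0) - 1 := by simp [nuL, hb]
  rw [one_smul] at hab
  have ht : Tight vec b (vec v) := by
    unfold Tight
    rw [← hab, h1, h2]; ring
  refine ⟨v, fun hz => ?_, h1⟩
  have h3 := h.tight _ _ ht
  rw [← hab, hz, mul_zero, h.nsmul h0] at h3
  exact pow_ne_zero _ h0 h3

def ptO (vec : Fin N → (Fin n →₀ ℕ)) : Option (Fin N) → Fin n →₀ ℕ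
  | none => 0
  | some v => vec v

lemma ptO_none : ptO vec none = 0 := rfl
lemma ptO_some (v : Fin N) : ptO vec (some v) = vec v := rfl

include hg in
/-- the separating functional for one point -/
lemma IsMu.sep1 (h : IsMu vec mu) (o : Option (Fin N))
    (ho : ∀ v, o = some v → ¬ (mu (vec v) ≠ 0 ∧ nuL vec (vec v) = 1)) :
    ∃ l : ((Fin n → ℝ) × ℝ) →ₗ[ℝ] ℝ, (∀ o', 0 ≤ l (rr (ptO vec o'), 1)) ∧
      (∀ v, mu (vec v) ≠ 0 → nuL vec (vec v) = 1 → l (rr (vec v), 1) = 0) ∧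
      0 < l (rr (ptO vec o), 1) := by
  classical
  let G : Finset (Fin N) := Finset.univ.filter fun v => mu (vec v) ≠ 0 ∧ nuL vec (vec v) = 1
  have hG : ∀ v, v ∈ G ↔ mu (vec v) ≠ 0 ∧ nuL vec (vec v) = 1 := fun v => by simp [G]
  let g : Option (Fin N) ⊕ Fin N → (Fin n → ℝ) × ℝ :=
    Sum.elim (fun o' => (rr (ptO vec o'), 1)) (fun v => if v ∈ G then -(rr (vec v), 1) else 0)
  rcases farkas Finset.univ g (-(rr (ptO vec o), (1 : ℝ))) with ⟨c, hc, hcb⟩ | ⟨l, hl, hlb⟩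
  · exfalso
    rw [Fintype.sum_sum_type, Fintype.sum_option] at hcb
    simp only [g, Sum.elim_inl, Sum.elim_inr, smul_ite, smul_zero] at hcb
    rw [Finset.sum_ite_mem, Finset.univ_inter] at hcb
    have hcb1 := congrArg Prod.fst hcb
    have hcb2 := congrArg Prod.snd hcb
    simp [ptO_none, ptO_some, rr_zero, Prod.fst_sum, Prod.snd_sum] at hcb1 hcb2
    obtain ⟨M, hM⟩ := exists_nat_ge (∑ v, c (Sum.inr v))
    have hM' : ∀ v, c (Sum.inr v) ≤ M := fun v =>
      (Finset.single_le_sum (f := fun v => c (Sum.inr v)) (fun u _ => hc _) (Finset.mem_univ v)).trans hM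
    let d : Fin N → ℝ := fun v => c (Sum.inl (some v)) + if v ∈ G then M - c (Sum.inr v) else 0
    have hd : ∀ v, 0 ≤ d v := by
      intro v
      simp only [d]
      have := hc (Sum.inl (some v))
      have := hM' v
      split_ifs <;> linarith
    have hsumd : ∑ v, d v = M * G.card - 1 - c (Sum.inl none) := by
      simp only [d, Finset.sum_add_distrib]
      rw [Finset.sum_ite_mem, Finset.univ_inter, Finset.sum_sub_distrib, Finset.sum_const, nsmul_eq_mul]
      linarith
    have hcombd : comb vec d + rr (ptO vec o) = rr (∑ v ∈ G, M • vec v) := by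
      funext i
      have h1 := congrFun hcb1 i
      simp only [Pi.add_apply, comb_apply, rr, Finset.sum_apply, Pi.neg_apply, Pi.smul_apply, smul_eq_mul] at h1 ⊢
      simp only [d, add_mul, Finset.sum_add_distrib, ite_mul, zero_mul]
      rw [Finset.sum_ite_mem, Finset.univ_inter]
      simp only [sub_mul, Finset.sum_sub_distrib, Finsupp.coe_finsetSum, Finset.sum_apply, Finsupp.smul_apply,
        smul_eq_mul, Nat.cast_sum, Nat.cast_mul]
      linarith
    set A := ∑ v ∈ G, M • vec v with hA
    obtain ⟨hmuA, hnuA⟩ := h.sum (hg := hg) G (fun v hv => ((hG v).1 hv).1) (fun _ => M)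
    have hnuA' : nuL vec A = M * G.card := by
      rw [hA, hnuA, Finset.sum_congr rfl (fun v hv => by rw [((hG v).1 hv).2])]
      simp [mul_comm]
    have hle : ptO vec o ≤ A := by
      intro i
      have h1 := congrFun hcombd i
      simp only [Pi.add_apply, comb_apply, rr] at h1
      have h2 : 0 ≤ ∑ v, d v * (vec v i : ℝ) :=
        Finset.sum_nonneg fun v _ => mul_nonneg (hd v) (Nat.cast_nonneg _)
      have h3 : ((ptO vec o i : ℕ) : ℝ) ≤ (A i : ℕ) := by linarith
      exact_mod_cast h3
    have hq : A - ptO vec o + ptO vec o = A := tsub_add_cancel_of_le hle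
    have hqc : comb vec d = rr (A - ptO vec o) := by
      have : rr A = rr (A - ptO vec o) + rr (ptO vec o) := by rw [← rr_add, hq]
      rw [this] at hcombd
      exact add_right_cancel hcombd
    have h5 := hg.nuL_le hd hqc
    have h6 := hg.nuL_add_le (A - ptO vec o) (ptO vec o)
    rw [hq] at h6
    have h7 := hc (Sum.inl none)
    cases o with
    | none =>
      have : nuL vec (ptO vec none) = 0 := hg.nuL_zero
      linarith
    | some v =>
      have h8 : nuL vec (ptO vec (some v)) ≤ 1 := hg.nuL_vec_le v
      have h9 : nuL vec (ptO vec (some v)) = 1 := by linarith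
      have h10 : Tight vec (A - vec v) (vec v) := by
        have : nuL vec (A - vec v + vec v) = nuL vec A := by rw [show A - vec v + vec v = A from hq]
        unfold Tight
        change _ = nuL vec (A - ptO vec (some v)) + nuL vec (ptO vec (some v))
        rw [this]; linarith
      refine ho v rfl ⟨fun hz => ?_, h9⟩
      have h11 := h.tight _ _ h10
      rw [show A - vec v + vec v = A from hq, hz, mul_zero, hA, hmuA] at h11
      exact Finset.prod_ne_zero_iff.2 (fun u hu => pow_ne_zero _ ((hG u).1 hu).1) h11
  · refine ⟨l, fun o' => hl (Sum.inl o') (Finset.mem_univ _), fun v h1 h2 => ?_, ?_⟩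
    · have h3 := hl (Sum.inr v) (Finset.mem_univ _)
      have h4 := hl (Sum.inl (some v)) (Finset.mem_univ _)
      have hv : v ∈ G := (hG v).2 ⟨h1, h2⟩
      simp only [g, Sum.elim_inr, hv, if_true, map_neg] at h3
      simp only [g, Sum.elim_inl, ptO] at h4
      linarith
    · rw [map_neg] at hlb
      linarith

include hg in
lemma IsMu.sep (h : IsMu vec mu) :
    ∃ (l : (Fin n → ℝ) →ₗ[ℝ] ℝ) (s : ℝ), 0 < s ∧ ∀ v, l (rr (vec v)) ≤ s ∧
      (l (rr (vec v)) = s ↔ mu (vec v) ≠ 0 ∧ nuL vec (vec v) = 1) := by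
  classical
  have : ∀ o : Option (Fin N), ∃ l : ((Fin n → ℝ) × ℝ) →ₗ[ℝ] ℝ, (∀ o', 0 ≤ l (rr (ptO vec o'), 1)) ∧
      (∀ v, mu (vec v) ≠ 0 → nuL vec (vec v) = 1 → l (rr (vec v), 1) = 0) ∧
      ((∀ v, o = some v → ¬ (mu (vec v) ≠ 0 ∧ nuL vec (vec v) = 1)) → 0 < l (rr (ptO vec o), 1)) := by
    intro o
    by_cases ho : ∀ v, o = some v → ¬ (mu (vec v) ≠ 0 ∧ nuL vec (vec v) = 1)
    · obtain ⟨l, h1, h2, h3⟩ := h.sep1 (hg := hg) o ho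
      exact ⟨l, h1, h2, fun _ => h3⟩
    · exact ⟨0, by simp, by simp, fun h => absurd h ho⟩
  choose L hL1 hL2 hL3 using this
  let T : ((Fin n → ℝ) × ℝ) →ₗ[ℝ] ℝ := ∑ o, L o
  have hT : ∀ x, T x = ∑ o, L o x := fun x => by simp [T]
  have hTs : ∀ o, (∀ v, o = some v → ¬ (mu (vec v) ≠ 0 ∧ nuL vec (vec v) = 1)) →
      0 < T (rr (ptO vec o), 1) := by
    intro o ho
    rw [hT]
    exact Finset.sum_pos' (fun o' _ => hL1 o' o) ⟨o, Finset.mem_univ _, hL3 o ho⟩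
  have hdec : ∀ x : Fin n → ℝ, T (x, 1) = T (x, 0) + T (0, 1) := fun x => by
    rw [← map_add]; simp
  refine ⟨-(T.comp (LinearMap.inl ℝ _ _)), T (0, 1), ?_, fun v => ?_⟩
  · have := hTs none (by simp)
    simpa [ptO, rr_zero] using this
  · have h1 : 0 ≤ T (rr (vec v), 1) := by
      rw [hT]; exact Finset.sum_nonneg fun o _ => hL1 o (some v)
    have h2 := hdec (rr (vec v))
    simp only [LinearMap.neg_apply, LinearMap.comp_apply, LinearMap.inl_apply]
    refine ⟨by linarith, fun h3 => ?_, fun h3 => ?_⟩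
    · by_contra h4
      have := hTs (some v) (by intro u hu; cases hu; exact h4)
      simp only [ptO] at this
      linarith
    · have : T (rr (vec v), 1) = 0 := by
        rw [hT]; exact Finset.sum_eq_zero fun o _ => hL2 o v h3.1 h3.2
      linarith
end
end TNS

namespace TNS
variable {n N : ℕ} {vec : Fin N → (Fin n →₀ ℕ)} {hg : Good vec}
variable {mu : (Fin n →₀ ℕ) → ℂ}

lemma divUnits : Nonempty (DivisibleBy (Additive ℂˣ) ℤ) := by
  refine ⟨divisibleByOfSMulRightSurj _ _ ?_⟩
  intro m hm u
  have hsurj : ∀ k : ℕ, k ≠ 0 → ∀ u : ℂˣ, ∃ t : ℂˣ, t ^ k = u := by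
    intro k hk u
    obtain ⟨z, hz⟩ := IsAlgClosed.exists_pow_nat_eq (u : ℂ) (Nat.pos_of_ne_zero hk)
    have hz0 : z ≠ 0 := by
      rintro rfl
      rw [zero_pow hk] at hz
      exact u.ne_zero hz.symm
    exact ⟨Units.mk0 z hz0, Units.ext (by simpa using hz)⟩
  obtain ⟨t, ht⟩ := hsurj m.natAbs (by simpa using hm) u.toMul
  rcases Int.natAbs_eq m with h | h
  · refine ⟨Additive.ofMul t, ?_⟩
    dsimp only
    rw [h, natCast_zsmul, ← ofMul_pow, ht]; rfl
  · refine ⟨Additive.ofMul t⁻¹, ?_⟩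
    dsimp only
    rw [h, neg_smul, natCast_zsmul, ← ofMul_pow, inv_pow, ht]; simp

include hg in
lemma IsMu.torus (h : IsMu vec mu) : ∃ x : Fin n → ℂ, (∀ i, x i ≠ 0) ∧
    ∀ v, mu (vec v) ≠ 0 → ∏ j, x j ^ vec v j = mu (vec v) := by
  classical
  obtain ⟨_⟩ := divUnits
  let s : Finset (Fin N) := Finset.univ.filter fun v => mu (vec v) ≠ 0
  have hs : ∀ v, v ∈ s ↔ mu (vec v) ≠ 0 := fun v => by simp [s]
  let un : Fin N → ℂˣ := fun v => if hv : mu (vec v) ≠ 0 then Units.mk0 _ hv else 1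
  let cv : Fin N → Fin n → ℤ := fun v j => if mu (vec v) ≠ 0 then (vec v j : ℤ) else 0
  let φ : (Fin N → ℤ) →ₗ[ℤ] (Fin n → ℤ) := Fintype.linearCombination ℤ cv
  let ψ : (Fin N → ℤ) →ₗ[ℤ] Additive ℂˣ := Fintype.linearCombination ℤ fun v => Additive.ofMul (un v)
  have hker : LinearMap.ker φ ≤ LinearMap.ker ψ := by
    intro m hm
    rw [LinearMap.mem_ker] at hm ⊢
    have hφ : ∀ j, ∑ v ∈ s, m v * (vec v j : ℤ) = 0 := by
      intro j
      have := congrFun hm j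
      simp only [φ, Fintype.linearCombination_apply, Finset.sum_apply, Pi.smul_apply, cv,
        smul_eq_mul, mul_ite, mul_zero, Pi.zero_apply] at this
      rw [← Finset.sum_filter] at this
      exact this
    have hPQ : ∑ v ∈ s, (m v).toNat • vec v = ∑ v ∈ s, (-m v).toNat • vec v := by
      ext j
      have h1 := hφ j
      have h2 : ∀ v, m v = ((m v).toNat : ℤ) - ((-m v).toNat : ℤ) := fun v => by omega
      rw [Finset.sum_congr rfl (fun v _ => by rw [h2 v, sub_mul]), Finset.sum_sub_distrib, sub_eq_zero] at h1
      simp only [Finsupp.coe_finsetSum, Finset.sum_apply, Finsupp.smul_apply, smul_eq_mul]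
      exact_mod_cast h1
    have h3 := (h.sum (hg := hg) s (fun v hv => (hs v).1 hv) fun v => (m v).toNat).1
    have h4 := (h.sum (hg := hg) s (fun v hv => (hs v).1 hv) fun v => (-m v).toNat).1
    rw [hPQ, h4] at h3
    have h5 : ∏ v ∈ s, un v ^ (-m v).toNat = ∏ v ∈ s, un v ^ (m v).toNat := by
      apply Units.ext
      push_cast
      have h6 : ∀ v ∈ s, (un v : ℂ) = mu (vec v) := fun v hv => by
        simp only [un, dif_pos ((hs v).1 hv), Units.val_mk0]
      refine (Finset.prod_congr rfl fun v hv => ?_).trans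
        (h3.trans (Finset.prod_congr rfl fun v hv => ?_))
      · rw [h6 v hv]
      · rw [h6 v hv]
    have h7 : ∏ v ∈ s, un v ^ (m v) = 1 := by
      have h2 : ∀ v, un v ^ m v = un v ^ (m v).toNat * (un v ^ (-m v).toNat)⁻¹ := fun v => by
        rw [← zpow_natCast, ← zpow_natCast, ← zpow_neg, ← zpow_add]
        congr 1; omega
      rw [Finset.prod_congr rfl fun v _ => h2 v, Finset.prod_mul_distrib, Finset.prod_inv_distrib, h5,
        mul_inv_cancel]
    have h8 : ∏ v, un v ^ (m v) = 1 := by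
      rw [← h7]
      symm
      refine Finset.prod_subset (Finset.subset_univ _) fun v _ hv => ?_
      have : ¬ mu (vec v) ≠ 0 := fun h => hv ((hs v).2 h)
      simp only [un, dif_neg this, one_zpow]
    have h9 : ψ m = Additive.ofMul (∏ v, un v ^ (m v)) := by
      simp only [ψ, Fintype.linearCombination_apply, ofMul_prod, ofMul_zpow]
    rw [h9, h8, ofMul_one]
  obtain ⟨H, hH⟩ := (Module.Baer.of_divisible (Additive ℂˣ)).extension_property
    ((LinearMap.ker φ).liftQ φ le_rfl)
    (LinearMap.ker_eq_bot.mp (Submodule.ker_liftQ_eq_bot _ _ _ le_rfl)) ((LinearMap.ker φ).liftQ ψ hker)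
  have hH' : ∀ m, H (φ m) = ψ m := fun m => by
    have := LinearMap.congr_fun hH ((LinearMap.ker φ).mkQ m)
    simpa using this
  refine ⟨fun j => ((H (Pi.single j 1)).toMul : ℂˣ), fun j => Units.ne_zero _, fun v hv => ?_⟩
  have h1 := hH' (Pi.single v 1)
  have h2 : φ (Pi.single v 1) = cv v := by simp [φ, Fintype.linearCombination_apply_single]
  have h3 : ψ (Pi.single v 1) = Additive.ofMul (un v) := by
    simp [ψ, Fintype.linearCombination_apply_single]
  have h4 : cv v = ∑ j, vec v j • (Pi.single j 1 : Fin n → ℤ) := by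
    funext i
    simp [cv, hv, Finset.sum_apply, Pi.single_apply]
  rw [h2, h3, h4, map_sum] at h1
  have h5 := congrArg (fun t : Additive ℂˣ => ((t.toMul : ℂˣ) : ℂ)) h1
  simp only [map_nsmul, toMul_sum, toMul_nsmul, Units.coe_prod, Units.val_pow_eq_pow_val, toMul_ofMul] at h5
  rw [h5]
  simp only [un, dif_pos hv, Units.val_mk0]

open Classical in
/-- combinatorial form of nondegeneracy -/
def ND (vec : Fin N → (Fin n →₀ ℕ)) (coef : Fin N → ℂ) : Prop :=
  ∀ (l : (Fin n → ℝ) →ₗ[ℝ] ℝ) (s : ℝ), 0 < s → (∀ v, l (rr (vec v)) ≤ s) → (∃ v, l (rr (vec v)) = s) →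
    ¬ ∃ x : Fin n → ℂ, (∀ i, x i ≠ 0) ∧ ∀ i,
      ∑ v, (if l (rr (vec v)) = s then (vec v i : ℂ) * coef v * ∏ j, x j ^ vec v j else 0) = 0

include hg in
lemma IsMu.zero_of_ND {coef : Fin N → ℂ} (hND : ND vec coef) (h : IsMu vec mu)
    (hF : ∀ i, ∑ v with nuL vec (vec v) = 1, ((vec v i : ℂ) * coef v) * mu (vec v) = 0) (v : Fin N) :
    mu (vec v) = 0 := by
  classical
  by_contra hv
  obtain ⟨v1, h1, h2⟩ := h.exists_face (hg := hg) hv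
  obtain ⟨l, s, hs, hl⟩ := h.sep (hg := hg)
  obtain ⟨x, hx, hxm⟩ := h.torus (hg := hg)
  refine hND l s hs (fun v => (hl v).1) ⟨v1, (hl v1).2.2 ⟨h1, h2⟩⟩ ⟨x, hx, fun i => ?_⟩
  refine Eq.trans ?_ (hF i)
  rw [Finset.sum_filter]
  refine Finset.sum_congr rfl fun u _ => ?_
  by_cases h3 : nuL vec (vec u) = 1
  · rw [if_pos h3]
    by_cases h4 : mu (vec u) = 0
    · rw [h4, mul_zero, if_neg]
      intro h5
      exact ((hl u).2.1 h5).1 h4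
    · rw [if_pos ((hl u).2.2 ⟨h4, h3⟩), hxm u h4]
  · rw [if_neg h3, if_neg]
    intro h5
    exact h3 ((hl u).2.1 h5).2

lemma mon_pow (a : Fin n →₀ ℕ) (k : ℕ) : mon hg a ^ k = mon hg (k • a) := by
  induction k with
  | zero => rw [pow_zero, zero_smul]; rfl
  | succ k ih =>
    rw [pow_succ, ih, mon_mul_of, succ_nsmul]
    unfold Tight
    rw [← succ_nsmul, hg.nuL_nsmul, hg.nuL_nsmul]
    push_cast; ring

lemma mon_zero : mon hg 0 = 1 := rfl

theorem rad_mem {coef : Fin N → ℂ} (hND : ND vec coef) (v : Fin N) :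
    mon hg (vec v) ∈ (Ideal.span (Set.range (xF coef hg) ∪ {monz hg})).radical := by
  have : IsJacobsonRing (RR vec hg) := isJacobsonRing_of_finiteType (A := ℂ)
  rw [Ideal.radical_eq_jacobson, Ideal.jacobson, Ideal.mem_sInf]
  intro J hJ
  obtain ⟨hIJ, hmax⟩ := hJ
  letI := Ideal.Quotient.field J
  have hfin : Module.Finite ℂ (RR vec hg ⧸ J) := finite_of_finite_type_of_isJacobsonRing ℂ _
  let χ0 : (RR vec hg ⧸ J) →ₐ[ℂ] ℂ := IsAlgClosed.lift
  let χ : RR vec hg →ₐ[ℂ] ℂ := χ0.comp (Ideal.Quotient.mkₐ ℂ J)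
  have hχ : ∀ r, r ∈ J ↔ χ r = 0 := by
    intro r
    change _ ↔ χ0 (Ideal.Quotient.mk J r) = 0
    rw [map_eq_zero_iff χ0 χ0.toRingHom.injective, Ideal.Quotient.eq_zero_iff_mem]
  have hz : χ (monz hg) = 0 := (hχ _).1 (hIJ (Ideal.subset_span (Or.inr rfl)))
  have hmu : IsMu vec (fun a => χ (mon hg a)) :=
    { zero := by rw [mon_zero, map_one]
      tight := fun a b h => by rw [← map_mul, mon_mul_of h]
      not := fun a b h => by rw [← map_mul, mon_mul_not h, hz] }
  rw [hχ]
  refine hmu.zero_of_ND (hg := hg) hND (fun i => ?_) v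
  have := (hχ _).1 (hIJ (Ideal.subset_span (Or.inl ⟨i, rfl⟩)))
  rw [xF, map_sum] at this
  rw [← this]
  refine Finset.sum_congr rfl fun u _ => ?_
  rw [map_smul, smul_eq_mul]

theorem exists_k {coef : Fin N → ℂ} (hND : ND vec coef) :
    ∃ k : ℕ, 1 ≤ k ∧ ∃ G : Fin N → Fin n → RR vec hg, ∀ v (e : EE n),
      xx coef k hg (Sum.inr v) • e = (∑ i, G v i * xx coef k hg (Sum.inl i)) • e := by
  have h1 : ∀ v, ∃ k, mon hg (vec v) ^ k ∈ Ideal.span (Set.range (xF coef hg) ∪ {monz hg}) :=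
    fun v => rad_mem (hg := hg) hND v
  choose K hK using h1
  refine ⟨1 + ∑ v, K v, Nat.le_add_right _ _, ?_⟩
  have h2 : ∀ v, ∃ G : Fin n → RR vec hg, ∀ e : EE n,
      mon hg ((1 + ∑ v, K v) • vec v) • e = (∑ i, G i * xF coef hg i) • e := by
    intro v
    have h3 : mon hg (vec v) ^ (1 + ∑ v, K v) ∈ Ideal.span (Set.range (xF coef hg) ∪ {monz hg}) := by
      refine Ideal.pow_mem_of_pow_mem _ (hK v) ?_
      have := Finset.single_le_sum (f := K) (fun u _ => Nat.zero_le _) (Finset.mem_univ v)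
      omega
    rw [mon_pow, Ideal.span_union, Submodule.mem_sup] at h3
    obtain ⟨y, hy, z, hz, hyz⟩ := h3
    obtain ⟨G, hG⟩ := Ideal.mem_span_range_iff_exists_fun.1 hy
    obtain ⟨t, ht⟩ := Ideal.mem_span_singleton'.1 hz
    refine ⟨G, fun e => ?_⟩
    rw [← hyz, ← ht, ← hG, add_smul, mul_smul, monz_smul, smul_zero, add_zero]
  choose G hG using h2
  exact ⟨G, fun v e => hG v e⟩
end TNS

namespace TNS
variable {n N : ℕ} {vec : Fin N → (Fin n →₀ ℕ)} {hg : Good vec} {coef : Fin N → ℂ}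

theorem koszul_gr (hND : ND vec coef) (h : Fin n → EE n) (hh : ∑ i, xF coef hg i • h i = 0) :
    ∃ c : Fin n → Fin n → EE n, (∀ i j, c i j = - c j i) ∧ ∀ i, h i = ∑ j, xF coef hg j • c i j := by
  obtain ⟨w, hw⟩ := exists_gen vec
  obtain ⟨k, hk, G, hG⟩ := exists_k (hg := hg) hND
  obtain ⟨eps, he⟩ := exists_sg (ι := Fin n ⊕ Fin N)
  exact koszul_main he (xx coef k hg) G hG
    (fun Z hZ hD => exact_high coef k eps he hw hk Z hZ hD) h hh

noncomputable def fullT (b : Fin n →₀ ℕ) : EE n →ₗ[ℂ] EE n := Finsupp.lmapDomain ℂ ℂ (fun a => b + a)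

lemma fullT_single (b a : Fin n →₀ ℕ) (c : ℂ) :
    fullT b (Finsupp.single a c) = Finsupp.single (b + a) c := by
  simp [fullT, Finsupp.mapDomain_single]

noncomputable def FF (vec : Fin N → (Fin n →₀ ℕ)) (coef : Fin N → ℂ) (i : Fin n) : EE n →ₗ[ℂ] EE n :=
  ∑ v, ((vec v i : ℂ) * coef v) • fullT (vec v)

lemma FF_apply (i : Fin n) (e : EE n) :
    FF vec coef i e = ∑ v, ((vec v i : ℂ) * coef v) • fullT (vec v) e := by
  simp [FF]

lemma fullT_comm (a b : Fin n →₀ ℕ) (e : EE n) : fullT a (fullT b e) = fullT b (fullT a e) := by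
  have : (fullT a).comp (fullT b) = (fullT b).comp (fullT a) := by
    refine Finsupp.lhom_ext fun d c => ?_
    simp [fullT_single, add_left_comm]
  exact LinearMap.congr_fun this e

lemma FF_comm (i j : Fin n) (e : EE n) : FF vec coef i (FF vec coef j e) = FF vec coef j (FF vec coef i e) := by
  simp only [FF_apply, map_sum, map_smul, Finset.smul_sum]
  rw [Finset.sum_comm]
  refine Finset.sum_congr rfl fun u _ => Finset.sum_congr rfl fun v _ => ?_
  rw [fullT_comm, smul_comm]

open Classical in
noncomputable def fil (vec : Fin N → (Fin n →₀ ℕ)) (d : ℝ) : EE n →ₗ[ℂ] EE n where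
  toFun e := e.filter fun a => nuL vec a = d
  map_add' _ _ := Finsupp.filter_add
  map_smul' _ _ := Finsupp.filter_smul

lemma fil_of {a : Fin n →₀ ℕ} {d : ℝ} (h : nuL vec a = d) (c : ℂ) :
    fil vec d (Finsupp.single a c) = Finsupp.single a c := by
  classical
  exact Finsupp.filter_single_of_pos _ h

lemma fil_not {a : Fin n →₀ ℕ} {d : ℝ} (h : nuL vec a ≠ d) (c : ℂ) :
    fil vec d (Finsupp.single a c) = 0 := by
  classical
  exact Finsupp.filter_single_of_neg _ h

lemma fil_apply_of {a : Fin n →₀ ℕ} {d : ℝ} (h : nuL vec a = d) (e : EE n) : fil vec d e a = e a := by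
  classical
  exact Finsupp.filter_apply_pos _ _ h

lemma fil_apply_not {a : Fin n →₀ ℕ} {d : ℝ} (h : nuL vec a ≠ d) (e : EE n) : fil vec d e a = 0 := by
  classical
  exact Finsupp.filter_apply_neg _ _ h

abbrev LEs (vec : Fin N → (Fin n →₀ ℕ)) (d : ℝ) : Submodule ℂ (EE n) :=
  Finsupp.supported ℂ ℂ {a | nuL vec a ≤ d}

lemma xF_smul (i : Fin n) (e : EE n) : xF coef hg i • e =
    ∑ v, if nuL vec (vec v) = 1 then ((vec v i : ℂ) * coef v) • opT vec (vec v) e else 0 := by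
  classical
  rw [xF, Finset.sum_smul, Finset.sum_filter]
  refine Finset.sum_congr rfl fun v _ => ?_
  rw [smul_assoc, mon_smul]

lemma fil_xF (i : Fin n) (d : ℝ) (e : EE n) :
    fil vec d (xF coef hg i • e) = xF coef hg i • fil vec (d - 1) e := by
  induction e using Finsupp.induction_linear with
  | zero => simp
  | add e e' h h' => simp only [smul_add, map_add, h, h']
  | single a c =>
    by_cases h1 : nuL vec a = d - 1
    · rw [fil_of h1, xF_smul, map_sum]
      refine Finset.sum_congr rfl fun v _ => ?_
      split_ifs with h2
      · rw [map_smul]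
        congr 1
        by_cases ht : Tight vec (vec v) a
        · rw [opT_of ht, fil_of]
          rw [show nuL vec (vec v + a) = _ from ht, h1, h2]; ring
        · rw [opT_not ht, map_zero]
      · simp
    · rw [fil_not h1, smul_zero, xF_smul, map_sum]
      refine Finset.sum_eq_zero fun v _ => ?_
      split_ifs with h2
      · rw [map_smul]
        by_cases ht : Tight vec (vec v) a
        · rw [opT_of ht, fil_not, smul_zero]
          rw [show nuL vec (vec v + a) = _ from ht, h2]
          intro h; exact h1 (by linarith)
        · rw [opT_not ht, map_zero, smul_zero]
      · simp

lemma fil_FF (i : Fin n) (d : ℝ) (e : EE n) (he : e ∈ LEs vec d) :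
    fil vec (d + 1) (FF vec coef i e) = xF coef hg i • fil vec d e := by
  classical
  rw [LEs, Finsupp.supported_eq_span_single] at he
  induction he using Submodule.span_induction with
  | zero => simp
  | add e e' _ _ h h' => simp only [smul_add, map_add, h, h']
  | smul c e _ h => rw [map_smul, map_smul, map_smul, h, smul_comm]
  | mem x hx =>
    obtain ⟨a, ha, rfl⟩ := hx
    have ha : nuL vec a ≤ d := ha
    dsimp only
    rw [FF_apply, xF_smul, map_sum]
    refine Finset.sum_congr rfl fun v _ => ?_
    rw [fullT_single, map_smul]
    have h1 := hg.nuL_add_le (vec v) a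
    have h2 := hg.nuL_vec_le v
    by_cases h3 : nuL vec (vec v + a) = d + 1
    · have h4 : nuL vec (vec v) = 1 := by linarith
      have h5 : nuL vec a = d := by linarith
      have ht : Tight vec (vec v) a := by unfold Tight; linarith
      rw [fil_of h3, if_pos h4, fil_of h5, opT_of ht]
    · rw [fil_not h3, smul_zero]
      split_ifs with h4
      · by_cases h5 : nuL vec a = d
        · have ht : ¬ Tight vec (vec v) a := by
            intro ht
            apply h3
            rw [show nuL vec (vec v + a) = _ from ht, h4, h5, add_comm]
          rw [fil_of h5, opT_not ht, smul_zero]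
        · rw [fil_not h5, map_zero, smul_zero]
      · rfl

include hg in
lemma FF_mem (i : Fin n) (d : ℝ) (e : EE n) (he : e ∈ LEs vec d) : FF vec coef i e ∈ LEs vec (d + 1) := by
  rw [LEs, Finsupp.supported_eq_span_single] at he
  induction he using Submodule.span_induction with
  | zero => rw [map_zero]; exact Submodule.zero_mem _
  | add e e' _ _ h h' => rw [map_add]; exact Submodule.add_mem _ h h'
  | smul c e _ h => rw [map_smul]; exact Submodule.smul_mem _ _ h
  | mem x hx =>
    obtain ⟨a, ha, rfl⟩ := hx
    have ha : nuL vec a ≤ d := ha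
    dsimp only
    rw [FF_apply]
    refine Submodule.sum_mem _ fun v _ => Submodule.smul_mem _ _ ?_
    rw [fullT_single]
    refine Finsupp.single_mem_supported _ _ ?_
    have h1 := hg.nuL_add_le (vec v) a
    have h2 := hg.nuL_vec_le v
    change nuL vec (vec v + a) ≤ d + 1
    linarith

include hg in
lemma reduce_deg (hND : ND vec coef) (d : ℝ) (hd : 0 < d) (h : Fin n → EE n)
    (hh : ∀ i, h i ∈ LEs vec d) (h1 : ∑ i, FF vec coef i (h i) ∈ LEs vec 1) :
    ∃ h' : Fin n → EE n, ∑ i, FF vec coef i (h' i) = ∑ i, FF vec coef i (h i) ∧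
      ∀ i a, h' i a ≠ 0 → nuL vec a < d := by
  have hsym : ∑ i, xF coef hg i • fil vec d (h i) = 0 := by
    have h2 : fil vec (d + 1) (∑ i, FF vec coef i (h i)) = 0 := by
      ext a
      by_cases ha : nuL vec a = d + 1
      · rw [fil_apply_of ha]
        by_contra hne
        have h3 : nuL vec a ≤ 1 := h1 (Finsupp.mem_support_iff.2 hne)
        linarith
      · rw [fil_apply_not ha]; rfl
    rw [map_sum] at h2
    rw [← h2]
    exact Finset.sum_congr rfl fun i _ => (fil_FF i d (h i) (hh i)).symm
  obtain ⟨c, hc, hc2⟩ := koszul_gr hND _ hsym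
  let e : Fin n → Fin n → EE n := fun i j => fil vec (d - 1) (c i j)
  have he : ∀ i j, e i j = - e j i := fun i j => by
    simp only [e]; rw [hc i j, map_neg]
  have he3 : ∀ i j, e i j ∈ LEs vec (d - 1) := by
    intro i j a ha
    change nuL vec a ≤ d - 1
    by_contra hne
    exact (Finsupp.mem_support_iff.1 ha) (fil_apply_not (by intro h; exact hne h.le) _)
  have hee : ∀ i j, fil vec (d - 1) (e i j) = e i j := by
    intro i j
    ext a
    by_cases ha : nuL vec a = d - 1
    · rw [fil_apply_of ha]
    · rw [fil_apply_not ha]; exact (fil_apply_not ha _).symm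
  have he2 : ∀ i, fil vec d (h i) = ∑ j, xF coef hg j • e i j := by
    intro i
    have h3 : fil vec d (fil vec d (h i)) = fil vec d (h i) := by
      ext a
      by_cases ha : nuL vec a = d
      · rw [fil_apply_of ha]
      · rw [fil_apply_not ha, fil_apply_not ha]
    rw [← h3, hc2 i, map_sum]
    exact Finset.sum_congr rfl fun j _ => fil_xF j d _
  refine ⟨fun i => h i - ∑ j, FF vec coef j (e i j), ?_, ?_⟩
  · simp only [map_sub, Finset.sum_sub_distrib, map_sum]
    rw [sub_eq_self]
    have h4 : ∑ i, ∑ j, FF vec coef i (FF vec coef j (e i j)) =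
        - ∑ i, ∑ j, FF vec coef i (FF vec coef j (e i j)) := by
      conv_rhs => rw [Finset.sum_comm]
      rw [← Finset.sum_neg_distrib]
      refine Finset.sum_congr rfl fun i _ => ?_
      rw [← Finset.sum_neg_distrib]
      refine Finset.sum_congr rfl fun j _ => ?_
      rw [FF_comm j i, he i j, map_neg, map_neg]
    exact self_eq_neg.1 h4
  · intro i a ha
    have hmem : h i - ∑ j, FF vec coef j (e i j) ∈ LEs vec d := by
      refine Submodule.sub_mem _ (hh i) (Submodule.sum_mem _ fun j _ => ?_)
      have := FF_mem (hg := hg) (coef := coef) j (d - 1) _ (he3 i j)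
      rwa [sub_add_cancel] at this
    have h5 : nuL vec a ≤ d := hmem (Finsupp.mem_support_iff.2 ha)
    refine lt_of_le_of_ne h5 fun h6 => ha ?_
    dsimp only
    rw [← fil_apply_of h6, map_sub, map_sum, he2]
    have h7 : ∀ j, fil vec d (FF vec coef j (e i j)) = xF coef hg j • e i j := by
      intro j
      have := fil_FF (hg := hg) (coef := coef) j (d - 1) _ (he3 i j)
      rw [sub_add_cancel, hee] at this
      exact this
    rw [Finset.sum_congr rfl fun j _ => h7 j, sub_self]; rfl

include hg in
theorem strict (hND : ND vec coef) (g : EE n) (h1 : g ∈ LEs vec 1) (h : Fin n → EE n)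
    (hgh : g = ∑ i, FF vec coef i (h i)) :
    ∃ c : Fin n → ℂ, g = ∑ i, c i • FF vec coef i (Finsupp.single 0 1) := by
  suffices H : ∀ m : ℕ, ∀ d : ℝ, {a | nuL vec a < d}.ncard = m → ∀ h : Fin n → EE n,
      (∀ i a, h i a ≠ 0 → nuL vec a < d) → g = ∑ i, FF vec coef i (h i) →
      ∃ c : Fin n → ℂ, g = ∑ i, c i • FF vec coef i (Finsupp.single 0 1) by
    obtain ⟨d, hd⟩ : ∃ d : ℝ, ∀ i a, h i a ≠ 0 → nuL vec a < d := by
      refine ⟨1 + ∑ i, ∑ a ∈ (h i).support, nuL vec a, fun i a ha => ?_⟩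
      have h2 : nuL vec a ≤ ∑ a ∈ (h i).support, nuL vec a :=
        Finset.single_le_sum (f := fun a => nuL vec a) (fun b _ => hg.nuL_nonneg b) (Finsupp.mem_support_iff.2 ha)
      have h3 : ∑ a ∈ (h i).support, nuL vec a ≤ ∑ i, ∑ a ∈ (h i).support, nuL vec a :=
        Finset.single_le_sum (f := fun i => ∑ a ∈ (h i).support, nuL vec a)
          (fun j _ => Finset.sum_nonneg fun b _ => hg.nuL_nonneg b) (Finset.mem_univ i)
      linarith
    exact H _ d rfl h hd hgh
  intro m
  induction m using Nat.strong_induction_on with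
  | _ m ih =>
    intro d hm h hh hgh
    by_cases hsm : ∃ a, nuL vec a < d ∧ 0 < nuL vec a
    · have hfin : {a | nuL vec a < d}.Finite := (hg.nuL_finite d).subset fun a (ha : nuL vec a < d) => (show nuL vec a ≤ d from ha.le)
      obtain ⟨a1, ha1, ha1'⟩ := hsm
      obtain ⟨a0, ha0, hmax⟩ := Set.exists_max_image _ (nuL vec) hfin ⟨a1, ha1⟩
      obtain ⟨h', hs, hlt⟩ := reduce_deg (hg := hg) hND (nuL vec a0) (ha1'.trans_le (hmax a1 ha1)) h
        (fun i a ha => hmax a (hh i a (Finsupp.mem_support_iff.1 ha))) (hgh ▸ h1)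
      refine ih _ ?_ (nuL vec a0) rfl h' hlt (hgh.trans hs.symm)
      rw [← hm]
      refine Set.ncard_lt_ncard ⟨fun a (ha : nuL vec a < nuL vec a0) => show nuL vec a < d from lt_trans ha ha0, fun hsub => ?_⟩ hfin
      exact lt_irrefl (nuL vec a0) (hsub ha0)
    · push Not at hsm
      refine ⟨fun i => h i 0, hgh.trans (Finset.sum_congr rfl fun i _ => ?_)⟩
      have : h i = h i 0 • Finsupp.single 0 1 := by
        ext a
        by_cases ha : a = 0
        · subst ha; simp
        · rw [Finsupp.smul_apply, Finsupp.single_eq_of_ne ha, smul_zero]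
          by_contra hne
          exact ha (hg.eq_zero_of_nuL (hsm a (hh i a hne)))
      conv_lhs => rw [this, map_smul]
end TNS

namespace TNS
open ToricNewton
open scoped Pointwise
variable {n N : ℕ} {f : MvPolynomial (Fin n) ℂ} {vec : Fin N → (Fin n →₀ ℕ)}

/-- `vec` enumerates the nonzero exponents of `f`. -/
structure Enum (f : MvPolynomial (Fin n) ℂ) (vec : Fin N → (Fin n →₀ ℕ)) : Prop where
  inj : Function.Injective vec
  mem : ∀ v, vec v ∈ f.support
  ne : ∀ v, vec v ≠ 0
  surj : ∀ m ∈ f.support, m ≠ 0 → ∃ v, vec v = m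

lemma exists_enum (f : MvPolynomial (Fin n) ℂ) :
    ∃ (N : ℕ) (vec : Fin N → (Fin n →₀ ℕ)), Enum f vec := by
  classical
  let S := f.support.erase 0
  refine ⟨S.card, fun v => (S.equivFin.symm v : Fin n →₀ ℕ), ?_, ?_, ?_, ?_⟩
  · intro a b h
    exact S.equivFin.symm.injective (Subtype.ext h)
  · intro v
    exact Finset.mem_of_mem_erase (S.equivFin.symm v).2
  · intro v
    exact Finset.ne_of_mem_erase (S.equivFin.symm v).2
  · intro m hm h0
    exact ⟨S.equivFin ⟨m, Finset.mem_erase.2 ⟨h0, hm⟩⟩, by simp⟩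

lemma Enum.good (he : Enum f vec) (hc : Convenient f) : Good vec where
  ne := he.ne
  ax i := by
    obtain ⟨k, hk, hk2⟩ := hc i
    obtain ⟨v, hv⟩ := he.surj (Finsupp.single i k) (mem_support_iff.2 hk2)
      (by simp; omega)
    exact ⟨v, k, hk, hv⟩

lemma Enum.sum_eq (he : Enum f vec) {A : Type*} [AddCommMonoid A] (F : (Fin n →₀ ℕ) → A)
    (h0 : F 0 = 0) : ∑ m ∈ f.support, F m = ∑ v, F (vec v) := by
  classical
  rw [← Finset.sum_image (f := F) (s := Finset.univ) (g := vec) (fun a _ b _ h => he.inj h)]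
  symm
  refine Finset.sum_subset ?_ ?_
  · intro m hm
    obtain ⟨v, -, rfl⟩ := Finset.mem_image.1 hm
    exact he.mem v
  · intro m hm hm2
    by_cases h : m = 0
    · rw [h, h0]
    · obtain ⟨v, rfl⟩ := he.surj m hm h
      exact absurd (Finset.mem_image_of_mem _ (Finset.mem_univ v)) hm2

lemma comb_eq_sum (vec : Fin N → (Fin n →₀ ℕ)) (c : Fin N → ℝ) :
    comb vec c = ∑ v, c v • rr (vec v) := by
  funext i
  rw [comb_apply, Finset.sum_apply]
  rfl

lemma Enum.mem_P (he : Enum f vec) (x : Fin n → ℝ) : x ∈ newtonPolytope f ↔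
    ∃ c : Fin N → ℝ, (∀ v, 0 ≤ c v) ∧ ∑ v, c v ≤ 1 ∧ comb vec c = x := by
  constructor
  · intro hx
    let S : Set (Fin N → ℝ) := {c | (∀ v, 0 ≤ c v) ∧ ∑ v, c v ≤ 1}
    have hS : Convex ℝ S := by
      intro c hc d hd a b ha hb hab
      refine ⟨fun v => ?_, ?_⟩
      · have h1 := mul_nonneg ha (hc.1 v)
        have h2 := mul_nonneg hb (hd.1 v)
        change 0 ≤ a * c v + b * d v
        linarith
      · have h1 := mul_le_mul_of_nonneg_left hc.2 ha
        have h2 := mul_le_mul_of_nonneg_left hd.2 hb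
        change ∑ v, (a * c v + b * d v) ≤ 1
        rw [Finset.sum_add_distrib, ← Finset.mul_sum, ← Finset.mul_sum]
        linarith
    have h2 : newtonPolytope f ⊆ comb vec '' S := by
      refine convexHull_min ?_ (hS.linear_image (comb vec))
      have hz : (0 : Fin n → ℝ) ∈ comb vec '' S := ⟨0, ⟨by simp, by simp⟩, map_zero _⟩
      rintro y (hy | ⟨m, hm, rfl⟩)
      · rw [Set.mem_singleton_iff.1 hy]; exact hz
      · by_cases h : m = 0
        · subst h
          have : toR (0 : Fin n →₀ ℕ) = 0 := rr_zero
          rw [this]; exact hz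
        · obtain ⟨v, rfl⟩ := he.surj m hm h
          refine ⟨Pi.single v 1, ⟨fun w => ?_, ?_⟩, ?_⟩
          · by_cases hw : w = v
            · subst hw; simp
            · simp [hw]
          · simp
          · rw [comb_single', one_smul]; rfl
    obtain ⟨c, hc, rfl⟩ := h2 hx
    exact ⟨c, hc.1, hc.2, rfl⟩
  · rintro ⟨c, h0, h1, rfl⟩
    have hconv : Convex ℝ (newtonPolytope f) := convex_convexHull ℝ _
    have := hconv.sum_mem (t := Finset.univ) (w := fun o : Option (Fin N) => o.elim (1 - ∑ v, c v) c)
      (z := fun o : Option (Fin N) => o.elim 0 (fun v => rr (vec v))) ?_ ?_ ?_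
    · rw [Fintype.sum_option] at this
      simp only [Option.elim, smul_zero, zero_add] at this
      rwa [comb_eq_sum]
    · rintro (_ | v) _
      · simpa using h1
      · exact h0 v
    · rw [Fintype.sum_option]; simp
    · rintro (_ | v) _
      · exact subset_convexHull ℝ _ (Or.inl rfl)
      · exact subset_convexHull ℝ _ (Or.inr ⟨vec v, he.mem v, rfl⟩)

lemma Enum.nu_eq (he : Enum f vec) (hc : Convenient f) (a : Fin n →₀ ℕ) :
    nu f (toR a) = nuL vec a := by
  have hg := he.good hc
  by_cases ha : a = 0
  · subst ha
    have : toR (0 : Fin n →₀ ℕ) = 0 := rr_zero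
    rw [this, hg.nuL_zero]
    exact gauge_zero
  have hpos : 0 < nuL vec a := by
    by_contra h
    exact ha (hg.eq_zero_of_nuL (not_lt.1 h))
  have hmem : toR a ∈ nuL vec a • newtonPolytope f := by
    rw [Set.mem_smul_set_iff_inv_smul_mem₀ hpos.ne', he.mem_P]
    refine ⟨(nuL vec a)⁻¹ • kap vec a, fun v => ?_, ?_, ?_⟩
    · exact mul_nonneg (inv_nonneg.2 hpos.le) (hg.kap_nonneg a v)
    · simp only [Pi.smul_apply, smul_eq_mul]
      rw [← Finset.mul_sum]
      change (nuL vec a)⁻¹ * nuL vec a ≤ 1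
      rw [inv_mul_cancel₀ hpos.ne']
    · rw [map_smul, (hg.kap_spec a).2]; rfl
  refine le_antisymm (gauge_le_of_mem hpos.le hmem) ?_
  unfold nu
  rw [gauge_def]
  refine le_csInf ⟨_, hpos, hmem⟩ ?_
  rintro r ⟨hr, hx⟩
  have hr : 0 < r := hr
  rw [Set.mem_smul_set_iff_inv_smul_mem₀ hr.ne', he.mem_P] at hx
  obtain ⟨c, h0, h1, h2⟩ := hx
  have h3 : comb vec (r • c) = rr a := by
    rw [map_smul, h2, smul_smul, mul_inv_cancel₀ hr.ne', one_smul]; rfl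
  have h4 := hg.nuL_le (c := r • c) (fun v => mul_nonneg hr.le (h0 v)) h3
  simp only [Pi.smul_apply, smul_eq_mul] at h4
  rw [← Finset.mul_sum] at h4
  nlinarith

lemma euler_sum (f : MvPolynomial (Fin n) ℂ) (i : Fin n) :
    X i * pderiv i f = ∑ m ∈ f.support, monomial m ((m i : ℂ) * f.coeff m) := by
  conv_lhs => rw [f.as_sum]
  rw [map_sum, Finset.mul_sum]
  refine Finset.sum_congr rfl fun m _ => ?_
  rw [pderiv_monomial]
  by_cases h : m i = 0
  · simp [h]
  · rw [X, monomial_mul, one_mul, mul_comm (coeff m f), add_tsub_cancel_of_le]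
    rw [Finsupp.single_le_iff]; omega

lemma euler_coeff (f : MvPolynomial (Fin n) ℂ) (i : Fin n) (m : Fin n →₀ ℕ) :
    coeff m (X i * pderiv i f) = (m i : ℂ) * f.coeff m := by
  classical
  rw [euler_sum, coeff_sum]
  simp only [coeff_monomial]
  rw [Finset.sum_ite_eq']
  split_ifs with h
  · rfl
  · rw [notMem_support_iff.1 h, mul_zero]

lemma Enum.nd (he : Enum f vec) (hnd : Nondegenerate f) : ND vec (fun v => f.coeff (vec v)) := by
  classical
  rintro l s hs hle ⟨v0, hv0⟩ ⟨x, hx, hsum⟩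
  have hmemv : ∀ v, toR (vec v) ∈ newtonPolytope f := fun v =>
    subset_convexHull ℝ _ (Or.inr ⟨vec v, he.mem v, rfl⟩)
  refine hnd {y ∈ newtonPolytope f | l y = s} ⟨⟨⟨rr (vec v0), hmemv v0, hv0⟩, l, s, ?_, rfl⟩, ?_⟩
    ⟨x, hx, fun i => ?_⟩
  · intro y hy
    obtain ⟨c, h0, h1, rfl⟩ := (he.mem_P y).1 hy
    rw [comb_eq_sum, map_sum]
    have : ∑ v, l (c v • rr (vec v)) ≤ ∑ v, c v * s := by
      refine Finset.sum_le_sum fun v _ => ?_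
      rw [map_smul, smul_eq_mul]
      exact mul_le_mul_of_nonneg_left (hle v) (h0 v)
    rw [← Finset.sum_mul] at this
    nlinarith
  · rintro ⟨-, h⟩
    rw [map_zero] at h
    exact hs.ne h
  · rw [← hsum i]
    unfold faceRestrict
    rw [map_sum]
    have hsub : (X i * pderiv i f).support ⊆ f.support := by
      intro m hm
      rw [mem_support_iff, euler_coeff] at hm
      exact mem_support_iff.2 (right_ne_zero_of_mul hm)
    rw [Finset.sum_subset hsub, he.sum_eq]
    · refine Finset.sum_congr rfl fun v _ => ?_
      have hiff : toR (vec v) ∈ {y ∈ newtonPolytope f | l y = s} ↔ l (rr (vec v)) = s :=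
        ⟨fun h => h.2, fun h => ⟨hmemv v, h⟩⟩
      by_cases h : l (rr (vec v)) = s
      · rw [if_pos (hiff.2 h), if_pos h, eval_monomial, euler_coeff, Finsupp.prod_fintype]
        intro j; simp
      · rw [if_neg (fun h' => h (hiff.1 h')), if_neg h, map_zero]
    · rw [euler_coeff]; simp
    · intro m _ hm
      rw [notMem_support_iff.1 hm]; simp

noncomputable def EQ (n : ℕ) : MvPolynomial (Fin n) ℂ ≃ₗ[ℂ] EE n := (basisMonomials (Fin n) ℂ).repr

lemma EQ_symm_single (a : Fin n →₀ ℕ) (c : ℂ) : (EQ n).symm (Finsupp.single a c) = monomial a c := by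
  rw [EQ, Module.Basis.repr_symm_single, coe_basisMonomials, smul_monomial, smul_eq_mul, mul_one]

lemma EQ_monomial (a : Fin n →₀ ℕ) (c : ℂ) : EQ n (monomial a c) = Finsupp.single a c := by
  rw [← EQ_symm_single, LinearEquiv.apply_symm_apply]

lemma EQ_apply (g : MvPolynomial (Fin n) ℂ) (a : Fin n →₀ ℕ) : EQ n g a = coeff a g := by
  classical
  induction g using MvPolynomial.induction_on' with
  | monomial b c => rw [EQ_monomial, coeff_monomial, Finsupp.single_apply]
  | add p q hp hq => rw [map_add, Finsupp.add_apply, hp, hq, coeff_add]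

lemma Enum.EQ_FF (he : Enum f vec) (i : Fin n) (g : MvPolynomial (Fin n) ℂ) :
    EQ n (X i * pderiv i f * g) = FF vec (fun v => f.coeff (vec v)) i (EQ n g) := by
  induction g using MvPolynomial.induction_on' with
  | monomial b c =>
    rw [euler_sum, he.sum_eq (fun m => monomial m ((m i : ℂ) * f.coeff m)) (by simp), EQ_monomial,
      FF_apply, Finset.sum_mul, map_sum]
    refine Finset.sum_congr rfl fun v _ => ?_
    rw [monomial_mul, EQ_monomial, fullT_single, Finsupp.smul_single, smul_eq_mul]
  | add p q hp hq => rw [mul_add, map_add, hp, hq, map_add, map_add]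

lemma Enum.key (he : Enum f vec) (hc : Convenient f) (hnd : Nondegenerate f)
    (g : MvPolynomial (Fin n) ℂ) (hg1 : g ∈ Nle f 1) (hgL : g ∈ LIdeal f) :
    ∃ c : Fin n → ℂ, g = ∑ i, c i • (X i * pderiv i f) := by
  have hg := he.good hc
  obtain ⟨h, rfl⟩ := Ideal.mem_span_range_iff_exists_fun.1 hgL
  have hA : EQ n (∑ i, h i * (X i * pderiv i f)) ∈ LEs vec 1 := by
    intro a ha
    change nuL vec a ≤ 1
    rw [← he.nu_eq hc]
    apply hg1
    rw [mem_support_iff, ← EQ_apply]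
    exact Finsupp.mem_support_iff.1 ha
  have hB : EQ n (∑ i, h i * (X i * pderiv i f)) =
      ∑ i, FF vec (fun v => f.coeff (vec v)) i (EQ n (h i)) := by
    rw [map_sum]
    refine Finset.sum_congr rfl fun i _ => ?_
    rw [mul_comm, he.EQ_FF]
  obtain ⟨c, hcc⟩ := strict (hg := hg) (he.nd hnd) _ hA (fun i => EQ n (h i)) hB
  refine ⟨c, (EQ n).injective ?_⟩
  rw [hcc, map_sum]
  refine Finset.sum_congr rfl fun i _ => ?_
  rw [map_smul, ← mul_one (X i * pderiv i f), he.EQ_FF]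
  have : EQ n 1 = Finsupp.single 0 1 := EQ_monomial 0 1
  rw [this]

lemma Enum.exists_max (he : Enum f vec) (hc : Convenient f) (i : Fin n) :
    ∃ K : ℕ, 1 ≤ K ∧ f.coeff (Finsupp.single i K) ≠ 0 ∧ 1 ≤ nu f (toR (Finsupp.single i K)) := by
  have hg := he.good hc
  have hfin : {k : ℕ | f.coeff (Finsupp.single i k) ≠ 0}.Finite := by
    refine Set.Finite.of_injOn (f := fun k => Finsupp.single i k) (t := (f.support : Set (Fin n →₀ ℕ))) ?_ ?_
      (Finset.finite_toSet _)
    · intro k hk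
      exact mem_support_iff.2 hk
    · intro a _ b _ h
      exact Finsupp.single_injective i h
  obtain ⟨k, hk, hk2⟩ := hc i
  obtain ⟨K, hK, hmax⟩ := Set.exists_max_image _ id hfin ⟨k, hk2⟩
  have hK1 : 1 ≤ K := hk.trans (hmax k hk2)
  refine ⟨K, hK1, hK, ?_⟩
  rw [he.nu_eq hc]
  have hcomb := (hg.kap_spec (Finsupp.single i K)).2
  have hle : ∀ v, kap vec (Finsupp.single i K) v * (vec v i : ℝ) ≤ kap vec (Finsupp.single i K) v * K := by
    intro v
    rcases (hg.kap_nonneg (Finsupp.single i K) v).eq_or_lt with h | h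
    · rw [← h]; simp
    · refine mul_le_mul_of_nonneg_left ?_ h.le
      have hz : ∀ j, j ≠ i → vec v j = 0 := by
        intro j hj
        have h1 := congrFun hcomb j
        rw [comb_apply] at h1
        have h2 : rr (Finsupp.single i K) j = 0 := by
          simp [rr, Finsupp.single_eq_of_ne hj]
        rw [h2] at h1
        have h3 := (Finset.sum_eq_zero_iff_of_nonneg (fun w _ =>
          mul_nonneg (hg.kap_nonneg (Finsupp.single i K) w) (Nat.cast_nonneg _))).1 h1 v (Finset.mem_univ v)
        rcases mul_eq_zero.1 h3 with h4 | h4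
        · exact absurd h4 h.ne'
        · exact_mod_cast h4
      have hv : vec v = Finsupp.single i (vec v i) := by
        ext j
        by_cases hj : j = i
        · subst hj; simp
        · rw [hz j hj, Finsupp.single_eq_of_ne hj]
      have : vec v i ≤ K := by
        apply hmax (vec v i)
        change f.coeff _ ≠ 0
        rw [← hv]
        exact mem_support_iff.1 (he.mem v)
      exact_mod_cast this
  have h1 := congrFun hcomb i
  rw [comb_apply] at h1
  have h2 : rr (Finsupp.single i K) i = K := by simp [rr]
  have h3 := Finset.sum_le_sum (s := Finset.univ) fun v _ => hle v
  rw [h1, h2, ← Finset.sum_mul] at h3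
  change (K : ℝ) ≤ nuL vec (Finsupp.single i K) * K at h3
  have hKpos : (0 : ℝ) < K := by exact_mod_cast hK1
  by_contra hlt
  nlinarith

lemma Enum.indep (he : Enum f vec) (hc : Convenient f) (c : Fin n → ℂ)
    (h : ∑ i, c i • (X i * pderiv i f) ∈ Nlt f 1) : c = 0 := by
  funext i
  obtain ⟨K, hK, hK2, hK3⟩ := he.exists_max hc i
  have h0 : coeff (Finsupp.single i K) (∑ j, c j • (X j * pderiv j f)) = 0 := by
    by_contra hne
    have := h _ (mem_support_iff.2 hne)
    linarith
  rw [coeff_sum, Finset.sum_eq_single i] at h0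
  · rw [coeff_smul, euler_coeff, Finsupp.single_eq_same, smul_eq_mul] at h0
    rcases mul_eq_zero.1 h0 with h1 | h1
    · exact h1
    · rcases mul_eq_zero.1 h1 with h2 | h2
      · have : K = 0 := by exact_mod_cast h2
        omega
      · exact absurd h2 hK2
  · intro j _ hj
    rw [coeff_smul, euler_coeff, Finsupp.single_eq_of_ne hj]; simp
  · simp

lemma finrank_of_supp (S : Set (Fin n →₀ ℕ)) (hS : S.Finite) (W : Submodule ℂ (MvPolynomial (Fin n) ℂ))
    (hW : ∀ g, g ∈ W ↔ ∀ m ∈ g.support, m ∈ S) :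
    FiniteDimensional ℂ W ∧ Module.finrank ℂ W = S.ncard := by
  have hmap : W.map (EQ n : MvPolynomial (Fin n) ℂ →ₗ[ℂ] EE n) = Finsupp.supported ℂ ℂ S := by
    ext y
    constructor
    · rintro ⟨g, hgW, rfl⟩ a ha
      refine (hW g).1 hgW a ?_
      rw [mem_support_iff, ← EQ_apply]
      exact Finsupp.mem_support_iff.1 ha
    · intro hy
      refine ⟨(EQ n).symm y, (hW _).2 fun m hm => ?_, (EQ n).apply_symm_apply y⟩
      rw [mem_support_iff, ← EQ_apply, LinearEquiv.apply_symm_apply] at hm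
      exact hy (Finsupp.mem_support_iff.2 hm)
  have e1 : W ≃ₗ[ℂ] Finsupp.supported ℂ ℂ S :=
    ((EQ n).submoduleMap W).trans (LinearEquiv.ofEq _ _ hmap)
  have e2 : W ≃ₗ[ℂ] (S →₀ ℂ) := e1.trans (Finsupp.supportedEquivFinsupp S)
  have : Finite S := hS
  have b : Module.Basis S ℂ W := Module.Basis.ofRepr e2
  exact ⟨Module.Finite.of_basis b, Module.finrank_eq_nat_card_basis b⟩

theorem Enum.main (he : Enum f vec) (hc : Convenient f) (hnd : Nondegenerate f) :
    grDim f 1 + n = {a : Fin n →₀ ℕ | nu f (toR a) = 1}.ncard := by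
  have hg := he.good hc
  have hfin : {a : Fin n →₀ ℕ | nu f (toR a) ≤ 1}.Finite := by
    simp only [he.nu_eq hc]
    exact hg.nuL_finite 1
  have hfin2 : {a : Fin n →₀ ℕ | nu f (toR a) < 1}.Finite :=
    hfin.subset fun a (ha : nu f (toR a) < 1) => (show nu f (toR a) ≤ 1 from ha.le)
  have hfin3 : {a : Fin n →₀ ℕ | nu f (toR a) = 1}.Finite :=
    hfin.subset fun a (ha : nu f (toR a) = 1) => (show nu f (toR a) ≤ 1 from ha.le)
  obtain ⟨fd1, d1⟩ := finrank_of_supp _ hfin (Nle f 1) (fun g => Iff.rfl)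
  obtain ⟨fd2, d2⟩ := finrank_of_supp _ hfin2 (Nlt f 1) (fun g => Iff.rfl)
  have hcard : {a : Fin n →₀ ℕ | nu f (toR a) ≤ 1}.ncard =
      {a : Fin n →₀ ℕ | nu f (toR a) < 1}.ncard + {a : Fin n →₀ ℕ | nu f (toR a) = 1}.ncard := by
    rw [← Set.ncard_union_eq _ hfin2 hfin3]
    · congr 1
      ext a
      exact (le_iff_lt_or_eq : nu f (toR a) ≤ 1 ↔ _)
    · rw [Set.disjoint_left]
      intro a (h1 : nu f (toR a) < 1) (h2 : nu f (toR a) = 1)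
      linarith
  set F : Fin n → MvPolynomial (Fin n) ℂ := fun i => X i * pderiv i f with hF
  have hli : LinearIndependent ℂ F := by
    rw [Fintype.linearIndependent_iff]
    intro c h0
    have : c = 0 := he.indep hc c (by rw [h0]; exact Submodule.zero_mem _)
    simp [this]
  have dS : Module.finrank ℂ (Submodule.span ℂ (Set.range F)) = n := by
    rw [finrank_span_eq_card hli, Fintype.card_fin]
  set S := Submodule.span ℂ (Set.range F) with hS
  have fdS : FiniteDimensional ℂ S := FiniteDimensional.span_of_finite ℂ (Set.finite_range F)
  have hinf : Nlt f 1 ⊓ S = ⊥ := by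
    rw [eq_bot_iff]
    rintro g ⟨h1, h2⟩
    obtain ⟨c, rfl⟩ := (Submodule.mem_span_range_iff_exists_fun ℂ).1 h2
    have : c = 0 := he.indep hc c h1
    simp [this]
  have hsup := Submodule.finrank_sup_add_finrank_inf_eq (Nlt f 1) S
  rw [hinf, finrank_bot, add_zero, d2, dS] at hsup
  set L := (LIdeal f).restrictScalars ℂ with hL
  have hltle : Nlt f 1 ≤ Nle f 1 := fun g hgg m hm => (hgg m hm).le
  have hSle : S ≤ Nle f 1 := by
    rw [hS, Submodule.span_le]
    rintro _ ⟨i, rfl⟩ m hm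
    rw [he.nu_eq hc]
    have hm : m ∈ (X i * pderiv i f).support := hm
    rw [mem_support_iff, euler_coeff] at hm
    have hm0 : m ≠ 0 := by
      rintro rfl
      simp at hm
    obtain ⟨v, rfl⟩ := he.surj m (mem_support_iff.2 (right_ne_zero_of_mul hm)) hm0
    exact hg.nuL_vec_le v
  have hSL : S ≤ L := by
    rw [hS, Submodule.span_le]
    rintro _ ⟨i, rfl⟩
    exact Ideal.subset_span ⟨i, rfl⟩
  have h_inter : Nle f 1 ⊓ (Nlt f 1 ⊔ L) = Nlt f 1 ⊔ S := by
    apply le_antisymm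
    · rintro g ⟨h1, h2⟩
      obtain ⟨a, ha, b, hb, rfl⟩ := Submodule.mem_sup.1 h2
      have hb1 : b ∈ Nle f 1 := by
        have := Submodule.sub_mem _ h1 (hltle ha)
        rwa [add_sub_cancel_left] at this
      obtain ⟨c, rfl⟩ := he.key hc hnd b hb1 hb
      refine Submodule.add_mem_sup ha ?_
      exact Submodule.sum_mem _ fun i _ => Submodule.smul_mem _ _ (Submodule.subset_span ⟨i, rfl⟩)
    · exact sup_le (le_inf hltle le_sup_left) (le_inf hSle (hSL.trans le_sup_right))
  have hgr : grN f 1 = Submodule.map (Nlt f 1 ⊔ L).mkQ (Nle f 1) := by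
    change Submodule.map (Nlt f 1 ⊔ L).mkQ (Nle f 1 ⊔ L) = _
    rw [Submodule.map_sup]
    apply sup_eq_left.2
    rw [Submodule.map_le_iff_le_comap]
    intro g hgg
    rw [Submodule.mem_comap]
    have : (Nlt f 1 ⊔ L).mkQ g = 0 := by
      rw [Submodule.mkQ_apply, Submodule.Quotient.mk_eq_zero]
      exact Submodule.mem_sup_right hgg
    rw [this]
    exact Submodule.zero_mem _
  have hrk := LinearMap.finrank_range_add_finrank_ker ((Nlt f 1 ⊔ L).mkQ.domRestrict (Nle f 1))
  have hr : LinearMap.range ((Nlt f 1 ⊔ L).mkQ.domRestrict (Nle f 1)) = grN f 1 := by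
    rw [hgr, LinearMap.range_domRestrict]
  have hk : Module.finrank ℂ (LinearMap.ker ((Nlt f 1 ⊔ L).mkQ.domRestrict (Nle f 1))) =
      Module.finrank ℂ (Nlt f 1 ⊔ S : Submodule ℂ (MvPolynomial (Fin n) ℂ)) := by
    rw [LinearMap.ker_domRestrict, Submodule.ker_mkQ, ← h_inter]
    rw [LinearEquiv.finrank_eq (Submodule.equivSubtypeMap (Nle f 1)
      (Submodule.comap (Nle f 1).subtype (Nlt f 1 ⊔ L))), Submodule.map_comap_subtype]
  rw [hr, hk, hsup, d1] at hrk
  have hrk' : grDim f 1 + _ = _ := hrk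
  omega

end TNS


open ToricNewton in
/-- the multiplicity of `1` in the toric Newton spectrum equals the
number of lattice points on the Newton boundary (i.e. with `ν(v) = 1`) minus `n`. -/
theorem toric_newton_spectrum_at_one {n : ℕ} (hn : 1 ≤ n) (f : MvPolynomial (Fin n) ℂ)
    (hconv : Convenient f) (hnd : Nondegenerate f) :
    (grDim f (1 : ℝ) : ℤ) =
      ({v : Fin n → ℕ | nu f (natToR v) = (1 : ℝ)}.ncard : ℤ) - (n : ℤ) := by
  obtain ⟨N, vec, he⟩ := TNS.exists_enum f
  have h := he.main hconv hnd
  have h2 : {v : Fin n → ℕ | nu f (natToR v) = (1 : ℝ)}.ncard =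
      {a : Fin n →₀ ℕ | nu f (toR a) = 1}.ncard := by
    rw [← Set.ncard_image_of_injective _ (DFunLike.coe_injective : Function.Injective (fun a : Fin n →₀ ℕ => (a : Fin n → ℕ)))]
    congr 1
    ext v
    constructor
    · intro hv
      exact ⟨Finsupp.equivFunOnFinite.symm v, hv, by simp⟩
    · rintro ⟨a, ha, rfl⟩
      exact ha
  rw [h2, ← h]
  push_cast
  ring
end

section
/- Let f ∈ ℬ be convenient and Newton nondegenerate. Then dim_ℂ gr^𝒩_0(ℬ/ℒ) = 1; that is, the value 0 appears in the toric Newton spectrum of f with multiplicity exactly one. -/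
open MvPolynomial

namespace ToricNewton

theorem nu_pos_of_ne_zero {n : ℕ} (f : MvPolynomial (Fin n) ℂ) (hconv : Convenient f)
    (m : Fin n →₀ ℕ) (hm : m ≠ 0) : 0 < nu f (toR m) := by
  classical
  choose k hk1 hk2 using hconv
  have hkpos : ∀ i, (0 : ℝ) < k i := fun i => by exact_mod_cast hk1 i
  obtain ⟨j, hj⟩ : ∃ j, m j ≠ 0 := by
    by_contra! h
    exact hm (Finsupp.ext h)
  have hjpos : (0 : ℝ) < m j := by exact_mod_cast Nat.pos_of_ne_zero hj
  -- a bound on the coordinate sum over the polytope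
  obtain ⟨D, hD, hDP⟩ : ∃ D : ℝ, 0 < D ∧ ∀ x ∈ newtonPolytope f, ∑ i, x i ≤ D := by
    refine ⟨1 + ∑ p ∈ f.support, ∑ i, (p i : ℝ), by positivity, ?_⟩
    intro x hx
    have hlin : IsLinearMap ℝ (fun x : Fin n → ℝ => ∑ i, x i) :=
      ⟨fun x y => by simp [Finset.sum_add_distrib], fun c x => by simp [Finset.mul_sum]⟩
    refine convexHull_min (t := {x : Fin n → ℝ |
      ∑ i, x i ≤ 1 + ∑ p ∈ f.support, ∑ i, (p i : ℝ)}) ?_ (convex_halfSpace_le hlin _) hx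
    rintro y (hy | ⟨p, hp, rfl⟩)
    · rw [Set.mem_singleton_iff.mp hy]
      simp only [Set.mem_setOf_eq, Pi.zero_apply, Finset.sum_const_zero]
      positivity
    · have := Finset.single_le_sum (f := fun p : Fin n →₀ ℕ => ∑ i, (p i : ℝ))
        (fun p _ => by positivity) (Finset.mem_coe.mp hp)
      simp only [Set.mem_setOf_eq, toR]
      linarith
  have hsum : (0 : ℝ) < ∑ i, (m i : ℝ) :=
    Finset.sum_pos' (fun i _ => by positivity) ⟨j, Finset.mem_univ _, hjpos⟩
  have hr : (0 : ℝ) < ∑ i, (m i : ℝ) / k i :=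
    Finset.sum_pos' (fun i _ => div_nonneg (by positivity) (hkpos i).le)
      ⟨j, Finset.mem_univ _, div_pos hjpos (hkpos j)⟩
  refine lt_of_lt_of_le (div_pos hsum hD) (le_csInf ?_ ?_)
  · refine ⟨∑ i, (m i : ℝ) / k i, hr, ?_⟩
    set r := ∑ i, (m i : ℝ) / k i with hrdef
    refine ⟨∑ i, ((m i : ℝ) / k i / r) • toR (Finsupp.single i (k i)), ?_, ?_⟩
    · refine (convex_convexHull ℝ _).sum_mem
        (fun i _ => div_nonneg (div_nonneg (by positivity) (hkpos i).le) hr.le) ?_ ?_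
      · rw [← Finset.sum_div, ← hrdef, div_self hr.ne']
      · intro i _
        refine subset_convexHull ℝ _ (Or.inr ⟨_, ?_, rfl⟩)
        simpa [MvPolynomial.mem_support_iff] using hk2 i
    · ext i
      simp only [Pi.smul_apply, Finset.sum_apply, smul_eq_mul, toR, Finsupp.single_apply]
      rw [Finset.sum_eq_single i]
      · have := (hkpos i).ne'
        have := hr.ne'
        simp only [if_true]
        field_simp
      · intro b _ hb
        simp [hb]
      · simp
  · rintro r ⟨hr0, y, hy, hyx⟩
    rw [div_le_iff₀ hD]
    have h1 : ∑ i, (m i : ℝ) = r * ∑ i, y i := by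
      rw [Finset.mul_sum]
      refine Finset.sum_congr rfl fun i _ => ?_
      exact (congrFun hyx i).symm
    rw [h1]
    exact mul_le_mul_of_nonneg_left (hDP y hy) (le_of_lt hr0)

theorem one_notMem_LIdeal {n : ℕ} (f : MvPolynomial (Fin n) ℂ) : (1 : MvPolynomial (Fin n) ℂ) ∉ LIdeal f := by
  intro h
  have hle : LIdeal f ≤ RingHom.ker (constantCoeff (σ := Fin n) (R := ℂ)) := by
    refine Ideal.span_le.mpr ?_
    rintro _ ⟨i, rfl⟩
    simp [RingHom.mem_ker]
  have := hle h
  simp [RingHom.mem_ker] at this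

end ToricNewton

open ToricNewton in
/-- the value `0` appears in the toric Newton spectrum with
multiplicity exactly one. -/
theorem toric_newton_spectrum_at_zero {n : ℕ} (hn : 1 ≤ n) (f : MvPolynomial (Fin n) ℂ)
    (hconv : Convenient f) (hnd : Nondegenerate f) :
    grDim f (0 : ℝ) = 1 := by
  have hlt : Nlt f 0 = ⊥ := by
    rw [eq_bot_iff]
    intro g hg
    rw [Submodule.mem_bot, ← MvPolynomial.support_eq_empty, Finset.eq_empty_iff_forall_notMem]
    intro m hm
    exact absurd (hg m hm) (not_lt.mpr (gauge_nonneg _))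
  have hle : ∀ g ∈ Nle f 0, ∃ c : ℂ, g = c • 1 := by
    intro g hg
    refine ⟨g.coeff 0, ?_⟩
    have hz : ∀ m, m ≠ 0 → g.coeff m = 0 := by
      intro m hm
      by_contra h
      exact absurd (hg m (MvPolynomial.mem_support_iff.mpr h))
        (not_le.mpr (nu_pos_of_ne_zero f hconv m hm))
    ext m
    by_cases hm : m = 0
    · simp [hm]
    · rw [hz m hm, MvPolynomial.coeff_smul, MvPolynomial.coeff_one, if_neg (Ne.symm hm), smul_zero]
  have hone : (1 : MvPolynomial (Fin n) ℂ) ∈ Nle f 0 := by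
    intro m hm
    have : m = 0 := by
      by_contra h
      rw [MvPolynomial.mem_support_iff, MvPolynomial.coeff_one, if_neg (Ne.symm h)] at hm
      exact hm rfl
    subst this
    have h0 : toR (0 : Fin n →₀ ℕ) = 0 := by ext; simp [toR]
    rw [h0, nu, gauge_zero]
  have hspan : grN f 0 =
      Submodule.span ℂ {(Nlt f 0 ⊔ (LIdeal f).restrictScalars ℂ).mkQ 1} := by
    apply le_antisymm
    · rintro _ ⟨x, hx, rfl⟩
      obtain ⟨a, ha, b, hb, rfl⟩ := Submodule.mem_sup.mp hx
      obtain ⟨c, rfl⟩ := hle a ha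
      rw [map_add, map_smul]
      have : (Nlt f 0 ⊔ (LIdeal f).restrictScalars ℂ).mkQ b = 0 := by
        rw [Submodule.mkQ_apply, Submodule.Quotient.mk_eq_zero]
        exact Submodule.mem_sup_right hb
      rw [this, add_zero]
      exact Submodule.smul_mem _ _ (Submodule.mem_span_singleton_self _)
    · rw [Submodule.span_singleton_le_iff_mem]
      exact Submodule.mem_map_of_mem (Submodule.mem_sup_left hone)
  unfold grDim
  rw [hspan]
  apply finrank_span_singleton
  rw [Submodule.mkQ_apply, Ne, Submodule.Quotient.mk_eq_zero, hlt, bot_sup_eq]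
  exact one_notMem_LIdeal f
end
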